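/- Fix a ∈ ℤ and set a* = |a|+1 if |a| ≤ 1 and a* = |a| if |a| ≥ 2. For any θ ∈ Ḣ^{a*}_⋄ and f ∈ Ḣ^{a*−1}_⋄, the linearization operator 𝕀_θ (defined by 𝕀_θ[ξ](t) = solution at time t of the linearized Navier–Stokes equation with initial condition ξ) extends to Ḣ^a_⋄, and for all ξ ∈ Ḣ^a_⋄ one has 𝕀_θ[ξ] ∈ C([0,T], Ḣ^a_⋄) ∩ L²([0,T], Ḣ^{a+1}_⋄). Moreover, for every B > 0 there exists C = C(ν, T, ‖f‖_{Ḣ^{a*−1}}, a, B) > 0 such that for all θ with ‖θ‖_{Ḣ^{a*}} ≤ B and all ξ ∈ Ḣ^a_⋄: sup_{0≤t≤T} ‖𝕀_θ[ξ](t)‖²_{Ḣ^a} + ∫₀ᵀ ‖𝕀_θ[ξ](t)‖²_{Ḣ^{a+1}} dt ≤ C ‖ξ‖²_{Ḣ^a}. -/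

import Mathlib

open MeasureTheory Set
open scoped BigOperators

noncomputable section

namespace NS2D

/-- Nonzero Fourier frequencies of the 2D torus `Ω = 𝕋²`. -/
def Freq : Type := {k : ℤ × ℤ // k ≠ 0}

/-- Squared Euclidean modulus `|k|²` of a frequency. -/
def knormSq (k : Freq) : ℝ := (k.1.1 : ℝ) ^ 2 + (k.1.2 : ℝ) ^ 2

/-- Eigenvalue `λ_k = 4π²|k|²` of the periodic Laplacian `−Δ`. -/
def lam (k : Freq) : ℝ := 4 * Real.pi ^ 2 * knormSq k

/-- A divergence-free mean-zero vector field `u ∈ Ḣ_⋄` (or, more generally, an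
element of the scale `Ḣ^α_⋄`) on the torus is represented by its Fourier
coefficients `c k` along the orthonormal basis
`e_k(x) = |k|⁻¹ (k₂, −k₁) exp(2πi k·x)` of divergence-free fields. -/
abbrev Coef : Type := Freq → ℂ

/-- Negation of a frequency. -/
def fneg (k : Freq) : Freq := ⟨-k.1, neg_ne_zero.mpr k.2⟩

/-- The conjugacy condition expressing that the coefficients `c` represent a
real-valued vector field (note `e_{−k} = − conj e_k`). -/
def IsReal (c : Coef) : Prop := ∀ k, c (fneg k) = - (starRingEnd ℂ) (c k)

/-- Squared homogeneous Sobolev norm `‖·‖²_{Ḣ^α} = Σ_k λ_k^α |c k|²`. -/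
def hSq (α : ℝ) (c : Coef) : ℝ := ∑' k, lam k ^ α * ‖c k‖ ^ 2

/-- Homogeneous Sobolev norm `‖·‖_{Ḣ^α}`. -/
def hN (α : ℝ) (c : Coef) : ℝ := Real.sqrt (hSq α c)

/-- Finiteness of the `Ḣ^α`-norm. -/
def FinH (α : ℝ) (c : Coef) : Prop := Summable fun k => lam k ^ α * ‖c k‖ ^ 2

/-- Membership in `Ḣ^α_⋄` (real-valued field with finite `Ḣ^α`-norm). -/
def MemH (α : ℝ) (c : Coef) : Prop := IsReal c ∧ FinH α c

/-- Membership in `Ḣ^∞_⋄ = C^∞(Ω)² ∩ Ḣ_⋄`: all Sobolev norms are finite. -/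
def MemHinf (c : Coef) : Prop := ∀ α : ℝ, MemH α c

/-- Real `Ḣ^α` inner product `⟨·,·⟩_{Ḣ^α}` (for real-valued fields). -/
def hInner (α : ℝ) (c d : Coef) : ℝ := ∑' k, lam k ^ α * (c k * (starRingEnd ℂ) (d k)).re

/-- The `L²` inner product. -/
def innerC (c d : Coef) : ℂ := ∑' k, c k * (starRingEnd ℂ) (d k)

/-- The unit vector `(k₂, −k₁)/|k|` spanning the divergence-free direction at
frequency `k`. -/
def evec (k : Freq) : ℝ × ℝ :=
  ((k.1.2 : ℝ) / Real.sqrt (knormSq k), -((k.1.1 : ℝ)) / Real.sqrt (knormSq k))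

/-- Euclidean dot product on `ℝ²`. -/
def dotR (a b : ℝ × ℝ) : ℝ := a.1 * b.1 + a.2 * b.2

/-- A frequency as a real vector. -/
def fvec (k : Freq) : ℝ × ℝ := ((k.1.1 : ℝ), (k.1.2 : ℝ))

/-- Fourier coefficients (along the basis `e_k`) of the Leray-projected
transport nonlinearity `B[u,v] = P[(u·∇)v]`:
`(B[u,v])^(k) · ē_k = 2πi Σ_{m+n=k, n≠0} c_m d_n (e_m·n)(e_n·e_k)`. -/
def Bc (c d : Coef) : Coef := fun k =>
  (((2 * Real.pi : ℝ) : ℂ) * Complex.I) *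
    ∑' m : Freq,
      if h : k.1 - m.1 ≠ 0 then
        c m * d ⟨k.1 - m.1, h⟩ *
          (((dotR (evec m) (fvec ⟨k.1 - m.1, h⟩) *
            dotR (evec ⟨k.1 - m.1, h⟩) (evec k) : ℝ)) : ℂ)
      else 0

/-- The Laplacian `Δ` acting on the scale: `(Δu)^(k) = −λ_k û(k)`. -/
def lapC (c : Coef) : Coef := fun k => -((lam k : ℝ) : ℂ) * c k

/-- Continuity of a trajectory `t ↦ u(t)`, `t ∈ [0,T]`, for the `Ḣ^α`-norm:
`u ∈ C([0,T], Ḣ^α_⋄)`. -/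
def ContH (α : ℝ) (T : ℝ) (u : ℝ → Coef) : Prop :=
  ∀ t ∈ Icc (0:ℝ) T, ∀ ε > 0, ∃ δ > 0, ∀ s ∈ Icc (0:ℝ) T,
    |s - t| < δ → hN α (u s - u t) < ε

/-- Membership `u ∈ L²([0,T], Ḣ^α_⋄)`. -/
def MemL2H (α : ℝ) (T : ℝ) (u : ℝ → Coef) : Prop :=
  (∀ t ∈ Ioc (0:ℝ) T, MemH α (u t)) ∧
    IntegrableOn (fun t => hSq α (u t)) (Ioc 0 T)

/-- `u` is a strong solution on `[0,T]` of the (Leray-projected) periodic 2D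
Navier–Stokes equations `du/dt + νAu + B[u,u] = f`, `u(0) = θ`, posed in `Ḣ_⋄`:
the Fourier coefficients satisfy the corresponding system of ODEs on `(0,T]`,
the trajectory is continuous into `Ḣ¹_⋄` (in particular at `t = 0`), and lies
in `L²([0,T], Ḣ²_⋄)`. -/
structure IsNSSol (ν : ℝ) (f : Coef) (T : ℝ) (θ : Coef) (u : ℝ → Coef) : Prop where
  init : u 0 = θ
  real : ∀ t ∈ Icc (0:ℝ) T, IsReal (u t)
  deriv : ∀ (k : Freq), ∀ t ∈ Ioc (0:ℝ) T,
    HasDerivAt (fun s => u s k)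
      (f k - ((ν * lam k : ℝ) : ℂ) * u t k - Bc (u t) (u t) k) t
  contH1 : ContH 1 T u
  memL2H2 : MemL2H 2 T u

/-- `U` solves the linear parabolic equation
`dU/dt − νΔU + B[u₀, U] + B[U, u₁] = g`, `U(0) = ξ`, on `[0,T]`. -/
structure IsLinPSol (ν : ℝ) (u₀ u₁ : ℝ → Coef) (g : ℝ → Coef) (T : ℝ) (ξ : Coef)
    (U : ℝ → Coef) : Prop where
  init : U 0 = ξ
  real : ∀ t ∈ Icc (0:ℝ) T, IsReal (U t)
  deriv : ∀ (k : Freq), ∀ t ∈ Ioc (0:ℝ) T,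
    HasDerivAt (fun s => U s k)
      (g t k - ((ν * lam k : ℝ) : ℂ) * U t k - Bc (u₀ t) (U t) k - Bc (U t) (u₁ t) k) t

/-- `U = 𝕀_θ[ξ]` solves the linearisation of Navier–Stokes along the
trajectory `u₀`: `dU/dt − νΔU + B[u₀,U] + B[U,u₀] = 0`, `U(0) = ξ`. -/
def IsLinSol (ν : ℝ) (u₀ : ℝ → Coef) (T : ℝ) (ξ : Coef) (U : ℝ → Coef) : Prop :=
  IsLinPSol ν u₀ u₀ (fun _ => 0) T ξ U

/-- The heat semigroup `S_t = e^{νtΔ}` on the scale `Ḣ^α_⋄`. -/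
def heatS (ν t : ℝ) (c : Coef) : Coef := fun k =>
  ((Real.exp (-(ν * lam k * t)) : ℝ) : ℂ) * c k

/-- Duhamel representation of the solution of the periodic heat equation
`du/dt − νΔu = g`, `u(0) = h`. -/
def heatSol (ν : ℝ) (g : ℝ → Coef) (h : Coef) : ℝ → Coef := fun t k =>
  ((Real.exp (-(ν * lam k * t)) : ℝ) : ℂ) *
    (h k + ∫ s in (0:ℝ)..t, ((Real.exp (ν * lam k * s) : ℝ) : ℂ) * g s k)

/-- Real-linearity of a map on the coefficient space. -/
def IsLinMap (Λ : Coef → Coef) : Prop :=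
  (∀ c d, Λ (c + d) = Λ c + Λ d) ∧ ∀ (r : ℝ) (c : Coef), Λ (r • c) = r • Λ c

/-- `Λ` defines a compact (linear) operator `Ḣ^α_⋄ → Ḣ^β_⋄`: it is linear,
maps `Ḣ^α_⋄` into `Ḣ^β_⋄`, and the image of the `Ḣ^α`-unit ball is totally
bounded for the `Ḣ^β`-norm. -/
def IsCompactOp (α β : ℝ) (Λ : Coef → Coef) : Prop :=
  IsLinMap Λ ∧ (∀ c, MemH α c → MemH β (Λ c)) ∧
    ∀ ε > 0, ∃ S : Finset Coef, ∀ c, MemH α c → hN α c ≤ 1 →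
      ∃ s ∈ S, hN β (Λ c - s) < ε

/-- The index `a* = |a|+1` if `|a| ≤ 1`, `a* = |a|` if `|a| ≥ 2`. -/
def astar (a : ℤ) : ℤ := if |a| ≤ 1 then |a| + 1 else |a|

/-- `i`-th component of the unit vector `evec k`. -/
def evecC (i : Fin 2) (k : Freq) : ℝ := if i = 0 then (evec k).1 else (evec k).2

/-- Fourier coefficients (over all of `ℤ²`) of the scalar component `u_i` of a
divergence-free field with coefficients `c`. -/
def compCoef (i : Fin 2) (c : Coef) : ℤ × ℤ → ℂ := fun n =>
  if h : n ≠ 0 then c ⟨n, h⟩ * ((evecC i ⟨n, h⟩ : ℝ) : ℂ) else 0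

/-- Convolution: Fourier coefficients of a pointwise product of two scalar
functions. -/
def convC (F G : ℤ × ℤ → ℂ) : ℤ × ℤ → ℂ := fun n => ∑' m : ℤ × ℤ, F m * G (n - m)

/-- Squared homogeneous Sobolev norm of a scalar function given by its Fourier
coefficients over `ℤ²`. -/
def hSqScalar (α : ℝ) (F : ℤ × ℤ → ℂ) : ℝ := ∑' k : Freq, lam k ^ α * ‖F k.1‖ ^ 2

/-- `‖u vᵀ‖²_{Ḣ^α} = Σ_{i,j=1}^2 ‖u_i v_j‖²_{Ḣ^α}`. -/
def hSqMat (α : ℝ) (c d : Coef) : ℝ :=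
  ∑ i : Fin 2, ∑ j : Fin 2, hSqScalar α (convC (compCoef i c) (compCoef j d))

/-- The character `exp(2πi k·x)`. -/
def efun (k : Freq) (x : ℝ × ℝ) : ℂ :=
  Complex.exp ((((2 * Real.pi : ℝ)) : ℂ) * Complex.I *
    ((k.1.1 : ℂ) * (x.1 : ℂ) + (k.1.2 : ℂ) * (x.2 : ℂ)))

/-- Pointwise evaluation of the `i`-th component of the field. -/
def evalComp (i : Fin 2) (c : Coef) (x : ℝ × ℝ) : ℂ :=
  ∑' k, c k * ((evecC i k : ℝ) : ℂ) * efun k x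

/-- Supremum norm (`C⁰`-norm) of the field. -/
def c0N (c : Coef) : ℝ := ⨆ x : ℝ × ℝ, max ‖evalComp 0 c x‖ ‖evalComp 1 c x‖

/-- The partial derivative `∂_j` acting on divergence-free fields. -/
def pderiv (j : Fin 2) (c : Coef) : Coef := fun k =>
  (((2 * Real.pi : ℝ) : ℂ) * Complex.I) *
    (if j = 0 then ((k.1.1 : ℤ) : ℂ) else ((k.1.2 : ℤ) : ℂ)) * c k

/-- `C¹`-norm of the field. -/
def c1N (c : Coef) : ℝ := c0N c + c0N (pderiv 0 c) + c0N (pderiv 1 c)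

/-- Norm of the multiplier space `B^ℓ`: `C^ℓ(Ω)²` for `ℓ ≤ 1` and `Ḣ^ℓ` for
`ℓ ≥ 2`. -/
def bN (ℓ : ℕ) (c : Coef) : ℝ :=
  if ℓ = 0 then c0N c else if ℓ = 1 then c1N c else hN (ℓ : ℝ) c

end NS2D

namespace NS2D

/-!
In Fourier variables every estimate of the nonlinearity reduces to a weighted `ℓ²` bound for the
convolution of nonnegative sequences on `ℤ²`, written `ProductBound β s τ`; since `B` loses one
derivative, it gives `‖B[u, U]‖_{Ḣ^{β-1}} ≲ ‖u‖_{Ḣ^s} ‖U‖_{Ḣ^τ}`. For `s = a*` this holds with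
`(β, τ) = (a, a + 1/2)` and with `(β, τ) = (a - 1/2, a)`, so that in both cases half a derivative of
the parabolic smoothing is left over. Replacing `U` by `e^{-Λt} U` turns the rates `ν λ_k` into
`ν λ_k + Λ ≥ √(νΛ) λ_k^{1/2}`, and for large `Λ` the spare half derivative makes the nonlinear terms
small. The first bound then yields the energy estimate for `U`, the second makes the Duhamel map a
contraction for the norm `(Σ_k λ_k^a sup_t |y_k(t)|²)^{1/2}`, which controls all trajectories in
`C([0,T], Ḣ^a)` obtained from the equation.

The base flow is bounded in `Ḣ^{a*}` because in two dimensions `⟨B[u, u], Δu⟩ = 0`, which bounds the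
enstrophy, and because higher integer norms then grow by tame product estimates.
-/

section

open scoped ENNReal NNReal

/-! ### Weighted `ℓ²` norms and convolutions on `ℤ²` -/

section Lattice

variable {α β γ γ' σ σ' τ τ' r s : ℝ} {x y z : ℤ × ℤ → ℝ≥0∞}

/-- The squared Euclidean norm on `ℤ²`. -/
def normSqZ (n : ℤ × ℤ) : ℝ := (n.1 : ℝ) ^ 2 + (n.2 : ℝ) ^ 2

lemma normSqZ_nonneg (n : ℤ × ℤ) : 0 ≤ normSqZ n := by unfold normSqZ; positivity

lemma normSqZ_neg (n : ℤ × ℤ) : normSqZ (-n) = normSqZ n := by simp [normSqZ]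

lemma norm_sq_le_normSqZ (n : ℤ × ℤ) : ‖n‖ ^ 2 ≤ normSqZ n := by
  rcases max_cases ‖n.1‖ ‖n.2‖ with h | h <;>
    rw [Prod.norm_def, h.1, normSqZ, Int.norm_eq_abs, sq_abs] <;>
    linarith [sq_nonneg (n.1 : ℝ), sq_nonneg (n.2 : ℝ)]

/-- The Laplace eigenvalue `4π²|n|²`, replaced by `1` at `n = 0` so that all its powers are
positive. -/
def lamZ (n : ℤ × ℤ) : ℝ := max 1 (4 * Real.pi ^ 2 * normSqZ n)

lemma one_le_lamZ (n : ℤ × ℤ) : 1 ≤ lamZ n := le_max_left _ _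

lemma lamZ_pos (n : ℤ × ℤ) : 0 < lamZ n := one_pos.trans_le (one_le_lamZ n)

lemma lamZ_neg (n : ℤ × ℤ) : lamZ (-n) = lamZ n := by rw [lamZ, normSqZ_neg, lamZ]

lemma lamZ_add_le (m n : ℤ × ℤ) : lamZ (m + n) ≤ 4 * max (lamZ m) (lamZ n) := by
  have hmn : normSqZ (m + n) ≤ 2 * normSqZ m + 2 * normSqZ n := by
    simp only [normSqZ, Prod.fst_add, Prod.snd_add, Int.cast_add]
    nlinarith [sq_nonneg ((m.1 : ℝ) - n.1), sq_nonneg ((m.2 : ℝ) - n.2)]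
  have hm : 4 * Real.pi ^ 2 * normSqZ m ≤ max (lamZ m) (lamZ n) :=
    (le_max_right _ _).trans (le_max_left _ _)
  have hn : 4 * Real.pi ^ 2 * normSqZ n ≤ max (lamZ m) (lamZ n) :=
    (le_max_right _ _).trans (le_max_right _ _)
  have hone : 1 ≤ max (lamZ m) (lamZ n) := (one_le_lamZ m).trans (le_max_left _ _)
  refine max_le (by linarith) ?_
  nlinarith [mul_le_mul_of_nonneg_left hmn (by positivity : 0 ≤ 4 * Real.pi ^ 2)]

lemma normSqZ_le_lamZ (n : ℤ × ℤ) : normSqZ n ≤ lamZ n :=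
  (le_mul_of_one_le_left (normSqZ_nonneg n) (by nlinarith [Real.pi_gt_three])).trans
    (le_max_right _ _)

lemma norm_sq_le_lamZ (n : ℤ × ℤ) : ‖n‖ ^ 2 ≤ lamZ n :=
  (norm_sq_le_normSqZ n).trans (normSqZ_le_lamZ n)

lemma summable_norm_int_prod_rpow (hr : 2 < r) : Summable fun n : ℤ × ℤ => ‖n‖ ^ (-r) := by
  have hnorm (n : ℤ × ℤ) : ‖(finTwoArrowEquiv ℤ).symm n‖ = ‖n‖ := by
    simp [finTwoArrowEquiv, Prod.norm_def, Pi.norm_def, Fin.univ_succ]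
  simpa only [Function.comp_def, hnorm] using
    (finTwoArrowEquiv ℤ).symm.summable_iff.mpr (EisensteinSeries.summable_one_div_norm_rpow hr)

lemma summable_lamZ_rpow (hr : 1 < r) : Summable fun n => lamZ n ^ (-r) := by
  refine (summable_norm_int_prod_rpow (r := 2 * r) (by linarith)).of_norm_bounded_eventually ?_
  filter_upwards [(Set.finite_singleton (0 : ℤ × ℤ)).compl_mem_cofinite] with n hn
  have hpos : 0 < ‖n‖ := norm_pos_iff.2 hn
  calc ‖lamZ n ^ (-r)‖ = lamZ n ^ (-r) := Real.norm_of_nonneg (by have := lamZ_pos n; positivity)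
    _ ≤ (‖n‖ ^ 2) ^ (-r) :=
      Real.rpow_le_rpow_of_nonpos (by positivity) (norm_sq_le_lamZ n) (by linarith)
    _ = ‖n‖ ^ (-(2 * r)) := by
      rw [← Real.rpow_natCast, ← Real.rpow_mul hpos.le]
      norm_num

/-- The weight `λ_n ^ α` on `ℤ²`, as an extended nonnegative real. -/
def weight (α : ℝ) (n : ℤ × ℤ) : ℝ≥0∞ := ENNReal.ofReal (lamZ n ^ α)

lemma weight_ne_top (α : ℝ) (n : ℤ × ℤ) : weight α n ≠ ⊤ := ENNReal.ofReal_ne_top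

lemma weight_ne_zero (α : ℝ) (n : ℤ × ℤ) : weight α n ≠ 0 := by
  simpa [weight] using Real.rpow_pos_of_pos (lamZ_pos n) α

lemma weight_zero (n : ℤ × ℤ) : weight 0 n = 1 := by simp [weight]

lemma weight_neg (α : ℝ) (n : ℤ × ℤ) : weight α (-n) = weight α n := by simp [weight, lamZ_neg]

lemma weight_add (α β : ℝ) (n : ℤ × ℤ) : weight (α + β) n = weight α n * weight β n := by
  rw [weight, weight, weight, Real.rpow_add (lamZ_pos n),
    ENNReal.ofReal_mul (Real.rpow_nonneg (lamZ_pos n).le α)]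

lemma weight_mono (h : α ≤ β) (n : ℤ × ℤ) : weight α n ≤ weight β n :=
  ENNReal.ofReal_le_ofReal (Real.rpow_le_rpow_of_exponent_le (one_le_lamZ n) h)

lemma weight_half_sq (α : ℝ) (n : ℤ × ℤ) : weight (α / 2) n ^ 2 = weight α n := by
  rw [sq, ← weight_add, add_halves]

lemma weight_mul_weight_neg (α : ℝ) (n : ℤ × ℤ) : weight α n * weight (-α) n = 1 := by
  rw [← weight_add, add_neg_cancel, weight_zero]

lemma weight_add_le (hr : 0 ≤ r) (m n : ℤ × ℤ) :
    weight r (m + n) ≤ ENNReal.ofReal (4 ^ r) * (weight r m + weight r n) := by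
  have hm := Real.rpow_nonneg (lamZ_pos m).le r
  have hn := Real.rpow_nonneg (lamZ_pos n).le r
  rw [weight, weight, weight, ← ENNReal.ofReal_add hm hn, ← ENNReal.ofReal_mul (by positivity)]
  refine ENNReal.ofReal_le_ofReal ?_
  calc lamZ (m + n) ^ r ≤ (4 * max (lamZ m) (lamZ n)) ^ r :=
        Real.rpow_le_rpow (lamZ_pos _).le (lamZ_add_le m n) hr
    _ = 4 ^ r * max (lamZ m) (lamZ n) ^ r :=
        Real.mul_rpow (by norm_num) ((lamZ_pos m).le.trans (le_max_left _ _))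
    _ ≤ 4 ^ r * (lamZ m ^ r + lamZ n ^ r) := by
        gcongr
        rcases max_cases (lamZ m) (lamZ n) with h | h <;> rw [h.1] <;> linarith

lemma weight_sub_le (hr : 0 ≤ r) (m n : ℤ × ℤ) :
    weight r (m - n) ≤ ENNReal.ofReal (4 ^ r) * (weight r m + weight r n) := by
  simpa only [← sub_eq_add_neg, weight_neg] using weight_add_le hr m (-n)

lemma tsum_weight_neg_ne_top (hr : 1 < r) : ∑' n, weight (-r) n ≠ ⊤ :=
  (summable_lamZ_rpow hr).tsum_ofReal_ne_top

lemma tsum_sub_left (k : ℤ × ℤ) (g : ℤ × ℤ → ℝ≥0∞) : ∑' m, g (k - m) = ∑' m, g m :=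
  (Equiv.subLeft k).tsum_eq g

lemma tsum_weight_mul_weight_sub_le (hσ : 0 ≤ σ) (hτ : 0 ≤ τ) (k : ℤ × ℤ) :
    ∑' m, weight (-σ) m * weight (-τ) (k - m) ≤ 2 * ∑' n, weight (-(σ + τ)) n := by
  have hterm (m : ℤ × ℤ) : weight (-σ) m * weight (-τ) (k - m) ≤
      weight (-(σ + τ)) m + weight (-(σ + τ)) (k - m) := by
    have hanti {ρ : ℝ} (hρ : 0 ≤ ρ) {m n : ℤ × ℤ} (h : lamZ m ≤ lamZ n) :
        weight (-ρ) n ≤ weight (-ρ) m := ENNReal.ofReal_le_ofReal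
      (Real.rpow_le_rpow_of_nonpos (lamZ_pos _) h (neg_nonpos.2 hρ))
    rw [neg_add, weight_add, weight_add]
    rcases le_total (lamZ m) (lamZ (k - m)) with h | h
    · exact le_add_right (by gcongr; exact hanti hτ h)
    · exact le_add_left (by gcongr; exact hanti hσ h)
  calc ∑' m, weight (-σ) m * weight (-τ) (k - m)
      ≤ ∑' m, (weight (-(σ + τ)) m + weight (-(σ + τ)) (k - m)) := ENNReal.tsum_le_tsum hterm
    _ = 2 * ∑' n, weight (-(σ + τ)) n := by rw [ENNReal.tsum_add, tsum_sub_left, two_mul]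

/-- The weighted `ℓ²` norm `∑ λ_n ^ α x_n²`, squared. -/
def wNormSq (α : ℝ) (x : ℤ × ℤ → ℝ≥0∞) : ℝ≥0∞ := ∑' n, weight α n * x n ^ 2

/-- Convolution of nonnegative sequences on `ℤ²`. -/
def convolve (x y : ℤ × ℤ → ℝ≥0∞) (k : ℤ × ℤ) : ℝ≥0∞ := ∑' m, x m * y (k - m)

lemma convolve_comm (x y : ℤ × ℤ → ℝ≥0∞) : convolve x y = convolve y x := by
  funext k
  rw [convolve, ← tsum_sub_left k]
  exact tsum_congr fun m => by rw [sub_sub_cancel, mul_comm]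

/-- The sequence `λ_n ^ (β/2) x_n`, which moves `β` derivatives from the norm onto `x`. -/
def weighted (β : ℝ) (x : ℤ × ℤ → ℝ≥0∞) : ℤ × ℤ → ℝ≥0∞ := fun n => weight (β / 2) n * x n

lemma wNormSq_zero (x : ℤ × ℤ → ℝ≥0∞) : wNormSq 0 x = ∑' n, x n ^ 2 := by
  simp only [wNormSq, weight_zero, one_mul]

lemma wNormSq_weighted (α β : ℝ) (x : ℤ × ℤ → ℝ≥0∞) :
    wNormSq α (weighted β x) = wNormSq (α + β) x :=
  tsum_congr fun n => by rw [weighted, mul_pow, weight_half_sq, weight_add, mul_assoc]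

lemma wNormSq_mono (h : α ≤ β) (x : ℤ × ℤ → ℝ≥0∞) : wNormSq α x ≤ wNormSq β x :=
  ENNReal.tsum_le_tsum fun n => by gcongr; exact weight_mono h n

lemma ne_top_of_wNormSq_ne_top (h : wNormSq α x ≠ ⊤) (n : ℤ × ℤ) : x n ≠ ⊤ := fun hx => by
  refine ENNReal.ne_top_of_tsum_ne_top h n ?_
  simp [hx, ENNReal.mul_top, weight_ne_zero]

lemma add_sq_le_two_mul (a b : ℝ≥0∞) : (a + b) ^ 2 ≤ 2 * (a ^ 2 + b ^ 2) := by
  have h := ENNReal.rpow_add_le_mul_rpow_add_rpow a b one_le_two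
  norm_num at h
  exact_mod_cast h

lemma wNormSq_le_of_le_mul_add {c : ℝ≥0∞} (h : ∀ n, x n ≤ c * (y n + z n)) :
    wNormSq α x ≤ 2 * c ^ 2 * (wNormSq α y + wNormSq α z) := by
  rw [wNormSq, wNormSq, wNormSq, ← ENNReal.tsum_add, ← ENNReal.tsum_mul_left]
  refine ENNReal.tsum_le_tsum fun n => ?_
  calc weight α n * x n ^ 2 ≤ weight α n * (c ^ 2 * (2 * (y n ^ 2 + z n ^ 2))) := by
        gcongr
        calc x n ^ 2 ≤ (c * (y n + z n)) ^ 2 := pow_le_pow_left' (h n) 2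
          _ = c ^ 2 * (y n + z n) ^ 2 := mul_pow _ _ _
          _ ≤ c ^ 2 * (2 * (y n ^ 2 + z n ^ 2)) := by gcongr; exact add_sq_le_two_mul _ _
    _ = 2 * c ^ 2 * (weight α n * y n ^ 2 + weight α n * z n ^ 2) := by ring

lemma tsum_mul_sq_le {ι : Type*} (f g : ι → ℝ≥0∞) :
    (∑' i, f i * g i) ^ 2 ≤ (∑' i, f i ^ 2) * ∑' i, g i ^ 2 := by
  let _ : MeasurableSpace ι := ⊤
  have h := ENNReal.lintegral_mul_le_Lp_mul_Lq (Measure.count : Measure ι)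
    Real.HolderConjugate.two_two (f := f) (g := g)
    measurable_from_top.aemeasurable measurable_from_top.aemeasurable
  simp only [lintegral_count, Pi.mul_apply] at h
  refine (pow_le_pow_left' h 2).trans_eq ?_
  rw [mul_pow, ← ENNReal.rpow_natCast, ← ENNReal.rpow_natCast, ← ENNReal.rpow_mul,
    ← ENNReal.rpow_mul]
  norm_num

lemma convolve_sq_le (σ : ℝ) (x y : ℤ × ℤ → ℝ≥0∞) (k : ℤ × ℤ) :
    convolve x y k ^ 2 ≤ wNormSq σ x * ∑' n, weight (-σ) (k - n) * y n ^ 2 := by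
  have hsplit : convolve x y k =
      ∑' m, (weight (σ / 2) m * x m) * (weight (-(σ / 2)) m * y (k - m)) :=
    tsum_congr fun m => by
      rw [mul_mul_mul_comm, weight_mul_weight_neg, one_mul]
  rw [hsplit, ← tsum_sub_left k fun n => weight (-σ) (k - n) * y n ^ 2]
  refine (tsum_mul_sq_le _ _).trans_eq ?_
  simp only [mul_pow, ← neg_div, weight_half_sq, wNormSq, sub_sub_cancel]

lemma convolve_sq_le_weight (σ τ : ℝ) (x y : ℤ × ℤ → ℝ≥0∞) (k : ℤ × ℤ) :
    convolve x y k ^ 2 ≤ (∑' m, weight (-σ) m * weight (-τ) (k - m)) *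
      ∑' m, (weight σ m * x m ^ 2) * (weight τ (k - m) * y (k - m) ^ 2) := by
  have hsplit : convolve x y k = ∑' m, (weight (-(σ / 2)) m * weight (-(τ / 2)) (k - m)) *
      ((weight (σ / 2) m * x m) * (weight (τ / 2) (k - m) * y (k - m))) :=
    tsum_congr fun m => by
      calc x m * y (k - m) = (weight (σ / 2) m * weight (-(σ / 2)) m) *
            (weight (τ / 2) (k - m) * weight (-(τ / 2)) (k - m)) * (x m * y (k - m)) := by
              rw [weight_mul_weight_neg, weight_mul_weight_neg, one_mul, one_mul]
        _ = _ := by ring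
  rw [hsplit]
  refine (tsum_mul_sq_le _ _).trans_eq ?_
  simp only [mul_pow, ← neg_div, weight_half_sq]

lemma tsum_tsum_mul_sub (f g : ℤ × ℤ → ℝ≥0∞) :
    ∑' k, ∑' m, f m * g (k - m) = (∑' m, f m) * ∑' m, g m := by
  rw [ENNReal.tsum_comm, ← ENNReal.tsum_mul_right]
  exact tsum_congr fun m => by rw [ENNReal.tsum_mul_left, ← (Equiv.subRight m).tsum_eq g]; rfl

/-- Multiplication (that is, convolution of Fourier coefficients) is bounded
`H^σ × H^τ → H^γ`. -/
def ProductBound (γ σ τ : ℝ) : Prop :=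
  ∃ C : ℝ≥0, ∀ x y, wNormSq γ (convolve x y) ≤ C * (wNormSq σ x * wNormSq τ y)

lemma ProductBound.mono (h : ProductBound γ σ τ) (hγ : γ' ≤ γ) (hσ : σ ≤ σ') (hτ : τ ≤ τ') :
    ProductBound γ' σ' τ' := by
  obtain ⟨C, hC⟩ := h
  refine ⟨C, fun x y => (wNormSq_mono hγ _).trans ((hC x y).trans ?_)⟩
  gcongr
  exacts [wNormSq_mono hσ x, wNormSq_mono hτ y]

lemma productBound_zero (hσ : 0 ≤ σ) (hτ : 0 ≤ τ) (h : 1 < σ + τ) : ProductBound 0 σ τ := by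
  lift 2 * ∑' n, weight (-(σ + τ)) n to ℝ≥0
    using ENNReal.mul_ne_top (by norm_num) (tsum_weight_neg_ne_top h) with C hC
  refine ⟨C, fun x y => ?_⟩
  rw [wNormSq_zero]
  calc ∑' k, convolve x y k ^ 2
      ≤ ∑' k, C * ∑' m, (weight σ m * x m ^ 2) * (weight τ (k - m) * y (k - m) ^ 2) :=
        ENNReal.tsum_le_tsum fun k => (convolve_sq_le_weight σ τ x y k).trans <| by
          gcongr
          exact hC ▸ tsum_weight_mul_weight_sub_le hσ hτ k
    _ = C * (wNormSq σ x * wNormSq τ y) := by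
        rw [ENNReal.tsum_mul_left, tsum_tsum_mul_sub (fun m => weight σ m * x m ^ 2)
          fun n => weight τ n * y n ^ 2, wNormSq, wNormSq]

lemma productBound_zero_right (hγ : γ ≤ 0) (hσ : 0 ≤ σ) (h : 1 < σ - γ) :
    ProductBound γ σ 0 := by
  lift 2 * ∑' n, weight (-(-γ + σ)) n to ℝ≥0
    using ENNReal.mul_ne_top (by norm_num) (tsum_weight_neg_ne_top (by linarith)) with C hC
  refine ⟨C, fun x y => ?_⟩
  calc wNormSq γ (convolve x y)
      ≤ ∑' k, weight γ k * (wNormSq σ x * ∑' n, weight (-σ) (k - n) * y n ^ 2) :=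
        ENNReal.tsum_le_tsum fun k => by gcongr; exact convolve_sq_le σ x y k
    _ = wNormSq σ x * ∑' n, (∑' k, weight γ k * weight (-σ) (k - n)) * y n ^ 2 := by
        simp only [← ENNReal.tsum_mul_left, ← ENNReal.tsum_mul_right]
        rw [ENNReal.tsum_comm]
        exact tsum_congr fun n => tsum_congr fun k => by ring
    _ ≤ wNormSq σ x * ∑' n, C * y n ^ 2 := by
        gcongr with n
        have hkernel := tsum_weight_mul_weight_sub_le (neg_nonneg.2 hγ) hσ n
        rw [← hC, neg_neg] at hkernel
        simpa only [← weight_neg _ (n - _), neg_sub] using hkernel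
    _ = C * (wNormSq σ x * wNormSq 0 y) := by
        rw [ENNReal.tsum_mul_left, wNormSq_zero]
        ring

lemma weighted_convolve_le (hr : 0 ≤ r) (x y : ℤ × ℤ → ℝ≥0∞) (k : ℤ × ℤ) :
    weighted r (convolve x y) k ≤ ENNReal.ofReal (4 ^ (r / 2)) *
      (convolve (weighted r x) y k + convolve x (weighted r y) k) := by
  simp only [weighted, convolve]
  rw [← ENNReal.tsum_add, ← ENNReal.tsum_mul_left, ← ENNReal.tsum_mul_left]
  refine ENNReal.tsum_le_tsum fun m => ?_
  calc weight (r / 2) k * (x m * y (k - m))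
      ≤ ENNReal.ofReal (4 ^ (r / 2)) * (weight (r / 2) m + weight (r / 2) (k - m)) *
          (x m * y (k - m)) := by
        gcongr
        simpa only [add_sub_cancel] using weight_add_le (by linarith : 0 ≤ r / 2) m (k - m)
    _ = _ := by ring

lemma weighted_neg_convolve_le (hr : 0 ≤ r) (x y : ℤ × ℤ → ℝ≥0∞) (k : ℤ × ℤ) :
    weighted (-r) (convolve x y) k ≤ ENNReal.ofReal (4 ^ (r / 2)) *
      (convolve x (weighted (-r) y) k +
        weighted (-r) (convolve (weighted r x) (weighted (-r) y)) k) := by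
  simp only [weighted, convolve, neg_div]
  rw [← ENNReal.tsum_mul_left, ← ENNReal.tsum_mul_left, ← ENNReal.tsum_add, ← ENNReal.tsum_mul_left]
  refine ENNReal.tsum_le_tsum fun m => ?_
  set c := ENNReal.ofReal (4 ^ (r / 2))
  calc weight (-(r / 2)) k * (x m * y (k - m))
      = weight (r / 2) (k - m) * weight (-(r / 2)) (k - m) *
          (weight (-(r / 2)) k * (x m * y (k - m))) := by rw [weight_mul_weight_neg, one_mul]
    _ ≤ c * (weight (r / 2) k + weight (r / 2) m) * weight (-(r / 2)) (k - m) *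
          (weight (-(r / 2)) k * (x m * y (k - m))) := by
        gcongr
        exact weight_sub_le (by linarith) k m
    _ = c * (weight (r / 2) k * weight (-(r / 2)) k * (x m * (weight (-(r / 2)) (k - m) *
          y (k - m))) + weight (-(r / 2)) k * ((weight (r / 2) m * x m) *
            (weight (-(r / 2)) (k - m) * y (k - m)))) := by ring
    _ = _ := by rw [weight_mul_weight_neg, one_mul]

lemma wNormSq_convolve_le (hr : 0 ≤ r) : ∃ C : ℝ≥0, ∀ x y, wNormSq r (convolve x y) ≤
    C * (wNormSq 0 (convolve (weighted r x) y) + wNormSq 0 (convolve x (weighted r y))) :=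
  ⟨2 * Real.toNNReal (4 ^ (r / 2)) ^ 2, fun x y => by
    rw [← zero_add r, ← wNormSq_weighted, zero_add]
    exact wNormSq_le_of_le_mul_add (weighted_convolve_le hr x y)⟩

lemma ProductBound.of_zero (hr : 0 ≤ r) (h₁ : ProductBound 0 (σ - r) τ)
    (h₂ : ProductBound 0 σ (τ - r)) : ProductBound r σ τ := by
  obtain ⟨C, hC⟩ := wNormSq_convolve_le hr
  obtain ⟨C₁, hC₁⟩ := h₁
  obtain ⟨C₂, hC₂⟩ := h₂
  refine ⟨C * (C₁ + C₂), fun x y => ?_⟩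
  have hx := hC₁ (weighted r x) y
  have hy := hC₂ x (weighted r y)
  rw [wNormSq_weighted, sub_add_cancel] at hx hy
  calc wNormSq r (convolve x y) ≤ C * (C₁ * (wNormSq σ x * wNormSq τ y) +
        C₂ * (wNormSq σ x * wNormSq τ y)) := (hC x y).trans (by gcongr)
    _ = _ := by push_cast; ring

lemma ProductBound.neg (hr : 0 ≤ r) (h₁ : ProductBound 0 σ (τ + r))
    (h₂ : ProductBound (-r) (σ - r) (τ + r)) : ProductBound (-r) σ τ := by
  obtain ⟨C₁, hC₁⟩ := h₁
  obtain ⟨C₂, hC₂⟩ := h₂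
  refine ⟨2 * Real.toNNReal (4 ^ (r / 2)) ^ 2 * (C₁ + C₂), fun x y => ?_⟩
  have hx := hC₁ x (weighted (-r) y)
  have hxy := hC₂ (weighted r x) (weighted (-r) y)
  rw [wNormSq_weighted, add_neg_cancel_right] at hx
  rw [wNormSq_weighted, wNormSq_weighted, sub_add_cancel, add_neg_cancel_right] at hxy
  have hsplit := wNormSq_le_of_le_mul_add (α := 0) (weighted_neg_convolve_le hr x y)
  rw [wNormSq_weighted, wNormSq_weighted, zero_add] at hsplit
  calc wNormSq (-r) (convolve x y) ≤ 2 * ENNReal.ofReal (4 ^ (r / 2)) ^ 2 *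
        (C₁ * (wNormSq σ x * wNormSq τ y) + C₂ * (wNormSq σ x * wNormSq τ y)) :=
        hsplit.trans (by gcongr)
    _ = _ := by push_cast; rw [ENNReal.ofReal]; ring

lemma productBound_of_nonneg (hα : 0 ≤ α) (hαs : α ≤ s) (hs : 1 ≤ s) :
    ProductBound α s (α + 1 / 2) :=
  .of_zero hα (productBound_zero (by linarith) (by linarith) (by linarith))
    (productBound_zero (by linarith) (by linarith) (by linarith))

lemma productBound_of_nonpos (hα : α ≤ 0) (hαs : -α ≤ s) (hs : 1 < s) :
    ProductBound α s α := by
  rw [← neg_neg α]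
  refine .neg (neg_nonneg.2 hα) (productBound_zero (by linarith) (by linarith) (by linarith)) ?_
  exact (productBound_zero_right (γ := α) (σ := s + α) hα (by linarith) (by linarith)).mono
    (by linarith) (by linarith) (by linarith)

lemma wNormSq_convolve_tame (hr : 0 ≤ r) : ∃ C : ℝ≥0, ∀ x y, wNormSq r (convolve x y) ≤
    C * (wNormSq r x * wNormSq (3 / 2) y + wNormSq (3 / 2) x * wNormSq r y) := by
  obtain ⟨C, hC⟩ := wNormSq_convolve_le hr
  obtain ⟨C₁, hC₁⟩ := productBound_zero (σ := 0) (τ := 3 / 2) le_rfl (by norm_num) (by norm_num)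
  obtain ⟨C₂, hC₂⟩ := productBound_zero (σ := 3 / 2) (τ := 0) (by norm_num) le_rfl (by norm_num)
  refine ⟨C * max C₁ C₂, fun x y => ?_⟩
  have hx := hC₁ (weighted r x) y
  have hy := hC₂ x (weighted r y)
  rw [wNormSq_weighted, zero_add] at hx hy
  calc wNormSq r (convolve x y)
      ≤ C * (C₁ * (wNormSq r x * wNormSq (3 / 2) y) + C₂ * (wNormSq (3 / 2) x * wNormSq r y)) :=
        (hC x y).trans (by gcongr)
    _ ≤ C * (max C₁ C₂ * (wNormSq r x * wNormSq (3 / 2) y) +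
          max C₁ C₂ * (wNormSq (3 / 2) x * wNormSq r y)) := by
        gcongr
        exacts [le_max_left _ _, le_max_right _ _]
    _ = _ := by push_cast; ring

end Lattice

/-! ### Sobolev norms and the bilinear form in Fourier variables -/

section Fourier

variable {α β s γ σ τ : ℝ} {c d : Coef}

instance : Countable Freq := inferInstanceAs (Countable {k : ℤ × ℤ // k ≠ 0})

/-- The coefficients `c` extended to all of `ℤ²` by zero at the origin. -/
def zeroExt (c : Coef) (n : ℤ × ℤ) : ℂ := open Classical in if h : n ≠ 0 then c ⟨n, h⟩ else 0

/-- The moduli of the zero-extended coefficients. -/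
def absExt (c : Coef) (n : ℤ × ℤ) : ℝ≥0∞ := ‖zeroExt c n‖ₑ

/-- The squared Sobolev norm `hSq` with values in `[0, ∞]`, so that it is `∞` (and not the junk
value `0`) outside the space. -/
def eHSq (α : ℝ) (c : Coef) : ℝ≥0∞ := wNormSq α (absExt c)

lemma zeroExt_val (c : Coef) (k : Freq) : zeroExt c k.1 = c k := dif_pos k.2

lemma zeroExt_zero (c : Coef) : zeroExt c 0 = 0 := by simp [zeroExt]

lemma zeroExt_add (c d : Coef) (n : ℤ × ℤ) : zeroExt (c + d) n = zeroExt c n + zeroExt d n := by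
  by_cases h : n = 0
  · simp [zeroExt, h]
  · simp only [zeroExt, ne_eq, h, not_false_eq_true, dite_true]
    rfl

lemma zeroExt_neg (hc : IsReal c) (n : ℤ × ℤ) :
    zeroExt c (-n) = -(starRingEnd ℂ) (zeroExt c n) := by
  by_cases hn : n = 0
  · simp [hn, zeroExt_zero]
  · have h := hc ⟨n, hn⟩
    rwa [← zeroExt_val c ⟨n, hn⟩, ← zeroExt_val c (fneg ⟨n, hn⟩)] at h

lemma one_le_knormSq (k : Freq) : 1 ≤ knormSq k := by
  have hk : k.1.1 ≠ 0 ∨ k.1.2 ≠ 0 := by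
    by_contra! h
    exact k.2 (Prod.ext h.1 h.2)
  have h : (1 : ℤ) ≤ k.1.1 ^ 2 + k.1.2 ^ 2 := by
    rcases hk with h | h <;> nlinarith [sq_nonneg k.1.1, sq_nonneg k.1.2, sq_pos_of_ne_zero h]
  unfold knormSq
  exact_mod_cast h

lemma lam_eq_lamZ (k : Freq) : lam k = lamZ k.1 := by
  refine (max_eq_right (a := 1) (b := 4 * Real.pi ^ 2 * knormSq k) ?_).symm
  nlinarith [one_le_knormSq k, Real.pi_gt_three]

lemma one_le_lam (k : Freq) : 1 ≤ lam k := lam_eq_lamZ k ▸ one_le_lamZ _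

lemma lam_pos (k : Freq) : 0 < lam k := one_pos.trans_le (one_le_lam k)

lemma lam_fneg (k : Freq) : lam (fneg k) = lam k := by simp [lam, knormSq, fneg]

lemma weight_val (α : ℝ) (k : Freq) : weight α k.1 = ENNReal.ofReal (lam k ^ α) := by
  rw [lam_eq_lamZ, weight]

lemma tsum_freq {M : Type*} [AddCommMonoid M] [TopologicalSpace M] [T2Space M]
    {g : ℤ × ℤ → M} (h : g 0 = 0) : ∑' k : Freq, g k.1 = ∑' n, g n :=
  Subtype.val_injective.tsum_eq fun n hn => ⟨⟨n, fun h0 => hn (h0 ▸ h)⟩, rfl⟩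

lemma tsum_freq_le (g : ℤ × ℤ → ℝ≥0∞) : ∑' k : Freq, g k.1 ≤ ∑' n, g n :=
  ENNReal.tsum_comp_le_tsum_of_injective Subtype.val_injective g

lemma eHSq_eq_tsum (α : ℝ) (c : Coef) : eHSq α c = ∑' k : Freq, weight α k.1 * ‖c k‖ₑ ^ 2 := by
  rw [eHSq, wNormSq, ← tsum_freq (by simp [absExt, zeroExt_zero])]
  simp only [absExt, zeroExt_val]

lemma eHSq_eq_tsum_ofReal (α : ℝ) (c : Coef) :
    eHSq α c = ∑' k : Freq, ENNReal.ofReal (lam k ^ α * ‖c k‖ ^ 2) := by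
  rw [eHSq_eq_tsum]
  refine tsum_congr fun k => ?_
  rw [weight_val, ENNReal.ofReal_mul (Real.rpow_nonneg (lam_pos k).le _),
    ENNReal.ofReal_pow (norm_nonneg _), ofReal_norm]

lemma lam_rpow_mul_norm_sq_nonneg (α : ℝ) (c : Coef) (k : Freq) : 0 ≤ lam k ^ α * ‖c k‖ ^ 2 :=
  mul_nonneg (Real.rpow_nonneg (lam_pos k).le _) (sq_nonneg _)

lemma finH_iff : FinH α c ↔ eHSq α c ≠ ⊤ := by
  rw [eHSq_eq_tsum_ofReal]
  refine ⟨Summable.tsum_ofReal_ne_top, fun h => (ENNReal.summable_toReal h).congr fun k => ?_⟩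
  rw [ENNReal.toReal_ofReal (lam_rpow_mul_norm_sq_nonneg _ _ _)]

lemma hSq_eq_toReal (α : ℝ) (c : Coef) : hSq α c = (eHSq α c).toReal := by
  rw [eHSq_eq_tsum_ofReal, ENNReal.tsum_toReal_eq fun _ => ENNReal.ofReal_ne_top]
  exact tsum_congr fun k => (ENNReal.toReal_ofReal (lam_rpow_mul_norm_sq_nonneg _ _ _)).symm

lemma hSq_nonneg (α : ℝ) (c : Coef) : 0 ≤ hSq α c := by
  rw [hSq_eq_toReal]
  exact ENNReal.toReal_nonneg

lemma ofReal_hSq (h : FinH α c) : ENNReal.ofReal (hSq α c) = eHSq α c := by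
  rw [hSq_eq_toReal, ENNReal.ofReal_toReal (finH_iff.1 h)]

lemma eHSq_mono (h : α ≤ β) (c : Coef) : eHSq α c ≤ eHSq β c := wNormSq_mono h _

/-- The cross product `m^⊥ · n`. -/
def cross (m n : ℤ × ℤ) : ℝ := (m.2 : ℝ) * n.1 - (m.1 : ℝ) * n.2

/-- The Euclidean inner product on `ℤ²`. -/
def dot (m n : ℤ × ℤ) : ℝ := (m.1 : ℝ) * n.1 + (m.2 : ℝ) * n.2

lemma abs_cross_le (m n : ℤ × ℤ) : |cross m n| ≤ √(normSqZ m) * √(normSqZ n) := by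
  rw [← Real.sqrt_mul (normSqZ_nonneg m)]
  refine Real.abs_le_sqrt ?_
  unfold cross normSqZ
  nlinarith [sq_nonneg ((m.1 : ℝ) * n.1 + (m.2 : ℝ) * n.2)]

lemma abs_dot_le (m n : ℤ × ℤ) : |dot m n| ≤ √(normSqZ m) * √(normSqZ n) := by
  rw [← Real.sqrt_mul (normSqZ_nonneg m)]
  refine Real.abs_le_sqrt ?_
  unfold dot normSqZ
  nlinarith [sq_nonneg ((m.2 : ℝ) * n.1 - (m.1 : ℝ) * n.2)]

lemma cross_add_right (m n : ℤ × ℤ) : cross m (m + n) = cross m n := by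
  simp only [cross, Prod.fst_add, Prod.snd_add, Int.cast_add]
  ring

/-- The kernel `(e_m · n)(e_n · e_{m+n})` by which the frequencies `m` and `n` interact in `Bc`. -/
def kernel (m n : ℤ × ℤ) : ℝ :=
  cross m n / √(normSqZ m) * (dot n (m + n) / (√(normSqZ n) * √(normSqZ (m + n))))

/- Incompressibility: since `e_m · m = 0`, the derivative falls on the product `m + n`. -/
lemma abs_kernel_le (m n : ℤ × ℤ) : |kernel m n| ≤ √(normSqZ (m + n)) := by
  have hcross : |cross m n / √(normSqZ m)| ≤ √(normSqZ (m + n)) := by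
    rw [abs_div, abs_of_nonneg (Real.sqrt_nonneg _), ← cross_add_right]
    refine div_le_of_le_mul₀ (Real.sqrt_nonneg _) (Real.sqrt_nonneg _) ?_
    rw [mul_comm]
    exact abs_cross_le _ _
  have hdot : |dot n (m + n) / (√(normSqZ n) * √(normSqZ (m + n)))| ≤ 1 := by
    rw [abs_div, abs_of_nonneg (by positivity : 0 ≤ √(normSqZ n) * √(normSqZ (m + n)))]
    exact div_le_one_of_le₀ (abs_dot_le _ _) (by positivity)
  rw [kernel, abs_mul]
  exact (mul_le_mul hcross hdot (abs_nonneg _) (Real.sqrt_nonneg _)).trans_eq (mul_one _)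

lemma kernel_neg_neg (m n : ℤ × ℤ) : kernel (-m) (-n) = kernel m n := by
  have hcross : cross (-m) (-n) = cross m n := by simp [cross]
  have hdot : dot (-n) (-(m + n)) = dot n (m + n) := by simp [dot]; ring
  rw [kernel, ← neg_add, hcross, hdot, normSqZ_neg, normSqZ_neg, normSqZ_neg, kernel]

/-- The contribution of the frequency pair `(m, k - m)` to `Bc c d k`, without the factor `2πi`. -/
def interaction (c d : Coef) (k m : ℤ × ℤ) : ℂ :=
  zeroExt c m * zeroExt d (k - m) * (kernel m (k - m) : ℂ)

lemma Bc_eq_tsum_interaction (c d : Coef) (k : Freq) :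
    Bc c d k = ((2 * Real.pi : ℝ) : ℂ) * Complex.I * ∑' m, interaction c d k.1 m := by
  rw [Bc, ← tsum_freq (by simp [interaction, zeroExt_zero])]
  congr 1
  refine tsum_congr fun m => ?_
  by_cases h : k.1 - m.1 ≠ 0
  · have hd : zeroExt d (k.1 - m.1) = d ⟨k.1 - m.1, h⟩ := zeroExt_val d ⟨k.1 - m.1, h⟩
    rw [dif_pos h, interaction, zeroExt_val, hd]
    congr 2
    unfold kernel dotR evec fvec cross dot normSqZ knormSq
    rw [add_sub_cancel]
    congr 1 <;> ring
  · rw [dif_neg h, interaction, not_not.1 h, zeroExt_zero]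
    simp

lemma enorm_interaction_le (c d : Coef) (k m : ℤ × ℤ) :
    ‖interaction c d k m‖ₑ ≤
      ENNReal.ofReal √(normSqZ k) * (absExt c m * absExt d (k - m)) := by
  rw [interaction, enorm_mul, enorm_mul, mul_comm]
  refine mul_le_mul' ?_ le_rfl
  rw [← ofReal_norm, Complex.norm_real, Real.norm_eq_abs]
  exact ENNReal.ofReal_le_ofReal (by simpa only [add_sub_cancel] using abs_kernel_le m (k - m))

lemma tsum_enorm_interaction_le (c d : Coef) (k : ℤ × ℤ) :
    ∑' m, ‖interaction c d k m‖ₑ ≤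
      ENNReal.ofReal √(normSqZ k) * convolve (absExt c) (absExt d) k := by
  rw [convolve, ← ENNReal.tsum_mul_left]
  exact ENNReal.tsum_le_tsum fun m => enorm_interaction_le c d k m

lemma summable_interaction {k : ℤ × ℤ} (h : convolve (absExt c) (absExt d) k ≠ ⊤) :
    Summable (interaction c d k) :=
  .of_enorm <| ne_top_of_le_ne_top (ENNReal.mul_ne_top ENNReal.ofReal_ne_top h)
    (tsum_enorm_interaction_le c d k)

lemma weight_half_val (k : Freq) :
    weight (1 / 2) k.1 = ENNReal.ofReal (2 * Real.pi) * ENNReal.ofReal √(normSqZ k.1) := by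
  have hlam : lam k = (2 * Real.pi) ^ 2 * normSqZ k.1 := by unfold lam knormSq normSqZ; ring
  rw [weight_val, ← Real.sqrt_eq_rpow, ← ENNReal.ofReal_mul (by positivity), hlam,
    Real.sqrt_mul (by positivity), Real.sqrt_sq (by positivity)]

lemma enorm_Bc_le (c d : Coef) (k : Freq) :
    ‖Bc c d k‖ₑ ≤ weight (1 / 2) k.1 * convolve (absExt c) (absExt d) k.1 := by
  have hconst : ‖((2 * Real.pi : ℝ) : ℂ) * Complex.I‖ₑ = ENNReal.ofReal (2 * Real.pi) := by
    rw [← ofReal_norm, norm_mul, Complex.norm_I, mul_one, Complex.norm_of_nonneg (by positivity)]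
  rw [Bc_eq_tsum_interaction, enorm_mul, weight_half_val, hconst, mul_assoc]
  gcongr
  exact enorm_tsum_le_tsum_enorm.trans (tsum_enorm_interaction_le c d k.1)

lemma eHSq_Bc_le (α : ℝ) (c d : Coef) :
    eHSq (α - 1) (Bc c d) ≤ wNormSq α (convolve (absExt c) (absExt d)) := by
  rw [eHSq_eq_tsum]
  refine le_trans (ENNReal.tsum_le_tsum fun k => ?_) (tsum_freq_le _)
  calc weight (α - 1) k.1 * ‖Bc c d k‖ₑ ^ 2
      ≤ weight (α - 1) k.1 * (weight (1 / 2) k.1 * convolve (absExt c) (absExt d) k.1) ^ 2 := by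
        gcongr
        exact enorm_Bc_le c d k
    _ = weight α k.1 * convolve (absExt c) (absExt d) k.1 ^ 2 := by
        rw [mul_pow, weight_half_sq, ← mul_assoc, ← weight_add, sub_add_cancel]

lemma ProductBound.convolve_ne_top (h : ProductBound γ σ τ) (hc : eHSq σ c ≠ ⊤)
    (hd : eHSq τ d ≠ ⊤) (k : ℤ × ℤ) : convolve (absExt c) (absExt d) k ≠ ⊤ := by
  obtain ⟨C, hC⟩ := h
  exact ne_top_of_wNormSq_ne_top (ne_top_of_le_ne_top
    (ENNReal.mul_ne_top ENNReal.coe_ne_top (ENNReal.mul_ne_top hc hd)) (hC _ _)) k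

lemma Bc_add_left (c c' d : Coef) (k : Freq)
    (h : convolve (absExt c) (absExt d) k.1 ≠ ⊤) (h' : convolve (absExt c') (absExt d) k.1 ≠ ⊤) :
    Bc (c + c') d k = Bc c d k + Bc c' d k := by
  rw [Bc_eq_tsum_interaction, Bc_eq_tsum_interaction, Bc_eq_tsum_interaction, ← mul_add,
    ← (summable_interaction h).tsum_add (summable_interaction h')]
  congr 1
  exact tsum_congr fun m => by simp only [interaction, zeroExt_add]; ring

lemma Bc_add_right (c d d' : Coef) (k : Freq)
    (h : convolve (absExt c) (absExt d) k.1 ≠ ⊤) (h' : convolve (absExt c) (absExt d') k.1 ≠ ⊤) :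
    Bc c (d + d') k = Bc c d k + Bc c d' k := by
  rw [Bc_eq_tsum_interaction, Bc_eq_tsum_interaction, Bc_eq_tsum_interaction, ← mul_add,
    ← (summable_interaction h).tsum_add (summable_interaction h')]
  congr 1
  exact tsum_congr fun m => by simp only [interaction, zeroExt_add]; ring

lemma isReal_Bc (hc : IsReal c) (hd : IsReal d) : IsReal (Bc c d) := by
  intro k
  have hterm (m : ℤ × ℤ) : interaction c d (fneg k).1 (-m) =
      (starRingEnd ℂ) (interaction c d k.1 m) := by
    have hsub : (fneg k).1 - -m = -(k.1 - m) := by simp [fneg]; abel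
    rw [interaction, hsub, kernel_neg_neg, zeroExt_neg hc, zeroExt_neg hd, interaction, map_mul,
      map_mul, Complex.conj_ofReal]
    ring
  rw [Bc_eq_tsum_interaction, Bc_eq_tsum_interaction, map_mul, map_mul, Complex.conj_I,
    Complex.conj_ofReal, Complex.conj_tsum, ← (Equiv.neg (ℤ × ℤ)).tsum_eq]
  simp only [Equiv.neg_apply, hterm]
  ring

end Fourier

/-! ### The enstrophy cancellation -/

section Enstrophy

variable {c : Coef}

/-- The Fourier coefficients of the stream function of `c`, up to a constant factor. -/
def stream (c : Coef) (n : ℤ × ℤ) : ℂ := zeroExt c n * (((√(normSqZ n))⁻¹ : ℝ) : ℂ)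

/-- The contribution of the triad `m + (k - m) = k` to the trilinear forms below: three stream
coefficients and the cross product. -/
def triad (c : Coef) (k m : ℤ × ℤ) : ℂ :=
  stream c m * stream c (k - m) * (starRingEnd ℂ) (stream c k) * (cross m (k - m) : ℂ)

/-- The summand of `∑ₖ |k|² Bc(c, c)ₖ c̄ₖ`. -/
def velocityTriad (c : Coef) (k m : ℤ × ℤ) : ℂ :=
  triad c k m * ((dot (k - m) k * normSqZ k : ℝ) : ℂ)

/-- The summand of the transport form of the vorticity, `∫ ((u · ∇) ω) ω` up to a constant factor,
in Fourier variables. -/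
def vorticityTriad (c : Coef) (k m : ℤ × ℤ) : ℂ :=
  triad c k m * ((normSqZ (k - m) * normSqZ k : ℝ) : ℂ)

lemma stream_neg (hc : IsReal c) (n : ℤ × ℤ) :
    stream c (-n) = -(starRingEnd ℂ) (stream c n) := by
  rw [stream, zeroExt_neg hc, normSqZ_neg, stream, map_mul, Complex.conj_ofReal, neg_mul]

lemma triad_sub (c : Coef) (k m : ℤ × ℤ) : triad c k (k - m) = -triad c k m := by
  have hcross : cross (k - m) m = -cross m (k - m) := by unfold cross; ring
  rw [triad, sub_sub_cancel, hcross, triad, Complex.ofReal_neg]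
  ring

lemma velocityTriad_add_velocityTriad_sub (c : Coef) (k m : ℤ × ℤ) :
    velocityTriad c k m + velocityTriad c k (k - m) =
      vorticityTriad c k m + vorticityTriad c k (k - m) := by
  have hdot : dot (k - m) k * normSqZ k - dot m k * normSqZ k =
      normSqZ (k - m) * normSqZ k - normSqZ m * normSqZ k := by
    simp only [dot, normSqZ, Prod.fst_sub, Prod.snd_sub, Int.cast_sub]
    ring
  have hdotC := congrArg (fun x : ℝ => (x : ℂ)) hdot
  simp only [Complex.ofReal_sub] at hdotC
  simp only [velocityTriad, vorticityTriad, triad_sub, sub_sub_cancel]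
  linear_combination triad c k m * hdotC

/- The substitution `(k, m) ↦ (k - m, -m)` exchanges the two vorticities. -/
lemma vorticityTriad_sub_neg (hc : IsReal c) (k m : ℤ × ℤ) :
    vorticityTriad c (k - m) (-m) = (starRingEnd ℂ) (vorticityTriad c k m) := by
  have hcross : cross (-m) k = -cross m (k - m) := by
    simp only [cross, Prod.fst_sub, Prod.snd_sub, Prod.fst_neg, Prod.snd_neg, Int.cast_sub,
      Int.cast_neg]
    ring
  rw [vorticityTriad, triad, stream_neg hc, sub_neg_eq_add, sub_add_cancel, hcross,
    vorticityTriad, triad]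
  simp only [map_mul, Complex.conj_ofReal, Complex.conj_conj, Complex.ofReal_mul,
    Complex.ofReal_neg]
  ring

lemma velocityTriad_eq_interaction (c : Coef) (k : Freq) (m : ℤ × ℤ) :
    velocityTriad c k.1 m =
      interaction c c k.1 m * ((normSqZ k.1 : ℂ) * (starRingEnd ℂ) (c k)) := by
  rw [velocityTriad, triad, stream, stream, stream, interaction, kernel, add_sub_cancel,
    zeroExt_val]
  simp only [map_mul, Complex.conj_ofReal]
  push_cast
  simp only [div_eq_mul_inv, mul_inv]
  ring

lemma ofReal_normSqZ_le (n : ℤ × ℤ) : ENNReal.ofReal (normSqZ n) ≤ weight 1 n := by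
  rw [weight, Real.rpow_one]
  exact ENNReal.ofReal_le_ofReal (normSqZ_le_lamZ n)

lemma ofReal_sqrt_normSqZ_le (n : ℤ × ℤ) : ENNReal.ofReal √(normSqZ n) ≤ weight (1 / 2) n := by
  rw [weight, ← Real.sqrt_eq_rpow]
  exact ENNReal.ofReal_le_ofReal (Real.sqrt_le_sqrt (normSqZ_le_lamZ n))

lemma norm_vorticityTriad_le (c : Coef) (k m : ℤ × ℤ) :
    ‖vorticityTriad c k m‖ ≤
      normSqZ k * ‖zeroExt c k‖ * (‖zeroExt c m‖ * (√(normSqZ (k - m)) * ‖zeroExt c (k - m)‖)) := by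
  have hcross : |cross m (k - m)| ≤ √(normSqZ m) * √(normSqZ k) := by
    rw [← cross_add_right, add_sub_cancel]
    exact abs_cross_le m k
  simp only [vorticityTriad, triad, stream, norm_mul, RCLike.norm_conj, Complex.norm_real,
    Real.norm_eq_abs, abs_inv, abs_of_nonneg (normSqZ_nonneg _), abs_of_nonneg (Real.sqrt_nonneg _)]
  set A := √(normSqZ m)
  set K := √(normSqZ k)
  set D := √(normSqZ (k - m))
  have hD : normSqZ (k - m) = D * D := (Real.mul_self_sqrt (normSqZ_nonneg _)).symm
  rw [hD]
  have hk := normSqZ_nonneg k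
  set P := ‖zeroExt c m‖ * ‖zeroExt c (k - m)‖ * ‖zeroExt c k‖ * normSqZ k * D
  calc _ = P * A⁻¹ * K⁻¹ * (D⁻¹ * D) * |cross m (k - m)| := by ring
    _ ≤ P * A⁻¹ * K⁻¹ * 1 * (A * K) := by gcongr; exact inv_mul_le_one
    _ = P * (A⁻¹ * A) * (K⁻¹ * K) := by ring
    _ ≤ P * 1 * 1 := by gcongr <;> exact inv_mul_le_one
    _ = _ := by ring

lemma enorm_vorticityTriad_le (c : Coef) (k m : ℤ × ℤ) :
    ‖vorticityTriad c k m‖ₑ ≤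
      weighted 2 (absExt c) k * (absExt c m * weighted 1 (absExt c) (k - m)) := by
  rw [← ofReal_norm]
  refine (ENNReal.ofReal_le_ofReal (norm_vorticityTriad_le c k m)).trans ?_
  have hk := normSqZ_nonneg k
  rw [ENNReal.ofReal_mul (by positivity), ENNReal.ofReal_mul hk, ENNReal.ofReal_mul (by positivity),
    ENNReal.ofReal_mul (by positivity), ofReal_norm, ofReal_norm, ofReal_norm, weighted, weighted,
    div_self two_ne_zero]
  gcongr
  exacts [ofReal_normSqZ_le k, le_rfl, le_rfl, ofReal_sqrt_normSqZ_le _, le_rfl]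

lemma mul_le_sq_add_sq (x y : ℝ≥0∞) : x * y ≤ x ^ 2 + y ^ 2 := by
  rcases le_total x y with h | h
  · exact le_add_left ((mul_le_mul' h le_rfl).trans_eq (sq y).symm)
  · exact le_add_right ((mul_le_mul' le_rfl h).trans_eq (sq x).symm)

lemma tsum_enorm_vorticityTriad_ne_top (hc : eHSq 2 c ≠ ⊤) :
    ∑' k, ∑' m, ‖vorticityTriad c k m‖ₑ ≠ ⊤ := by
  obtain ⟨C, hC⟩ := productBound_zero (σ := 3 / 2) (τ := 0) (by norm_num) le_rfl (by norm_num)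
  have hfin {α : ℝ} (hα : α ≤ 2) : eHSq α c ≠ ⊤ := ne_top_of_le_ne_top hc (eHSq_mono hα c)
  refine ne_top_of_le_ne_top (b := eHSq 2 c + C * (eHSq (3 / 2) c * eHSq 1 c))
    (by finiteness [hfin (by norm_num : (3 / 2 : ℝ) ≤ 2), hfin one_le_two]) ?_
  calc ∑' k, ∑' m, ‖vorticityTriad c k m‖ₑ
      ≤ ∑' k, weighted 2 (absExt c) k * convolve (absExt c) (weighted 1 (absExt c)) k := by
        refine ENNReal.tsum_le_tsum fun k => ?_
        rw [convolve, ← ENNReal.tsum_mul_left]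
        exact ENNReal.tsum_le_tsum fun m => enorm_vorticityTriad_le c k m
    _ ≤ ∑' k, (weighted 2 (absExt c) k ^ 2 +
          convolve (absExt c) (weighted 1 (absExt c)) k ^ 2) :=
        ENNReal.tsum_le_tsum fun k => mul_le_sq_add_sq _ _
    _ ≤ eHSq 2 c + C * (eHSq (3 / 2) c * eHSq 1 c) := by
        rw [ENNReal.tsum_add, ← wNormSq_zero, ← wNormSq_zero]
        have h := hC (absExt c) (weighted 1 (absExt c))
        rw [wNormSq_weighted, zero_add] at h ⊢
        exact add_le_add_right h _

lemma tsum_velocityTriad (hc : eHSq 2 c ≠ ⊤) (k : Freq) :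
    ∑' m, velocityTriad c k.1 m = ∑' m, vorticityTriad c k.1 m := by
  have hconv := (productBound_of_nonneg (α := 1) (s := 2) zero_le_one one_le_two
    one_le_two).convolve_ne_top hc (ne_top_of_le_ne_top hc (eHSq_mono (by norm_num) c)) k.1
  have hω : Summable (vorticityTriad c k.1) :=
    .of_enorm (ENNReal.ne_top_of_tsum_ne_top (tsum_enorm_vorticityTriad_ne_top hc) k.1)
  have hu : Summable (velocityTriad c k.1) :=
    ((summable_interaction hconv).mul_right _).congr fun m =>
      (velocityTriad_eq_interaction c k m).symm
  have hdouble {g : ℤ × ℤ → ℂ} (hg : Summable g) :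
      ∑' m, (g m + g (k.1 - m)) = 2 * ∑' m, g m := by
    refine (hg.tsum_add ((Equiv.subLeft k.1).summable_iff.2 hg)).trans ?_
    rw [two_mul]
    exact congrArg _ ((Equiv.subLeft k.1).tsum_eq g)
  refine mul_left_cancel₀ (two_ne_zero (α := ℂ)) ?_
  rw [← hdouble hu, ← hdouble hω]
  simp only [velocityTriad_add_velocityTriad_sub]

lemma lam_mul_Bc_mul_conj (hc : eHSq 2 c ≠ ⊤) (k : Freq) :
    (lam k : ℂ) * (Bc c c k * (starRingEnd ℂ) (c k)) =
      ((8 * Real.pi ^ 3 : ℝ) : ℂ) * (Complex.I * ∑' m, vorticityTriad c k.1 m) := by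
  have hlam : lam k = 4 * Real.pi ^ 2 * normSqZ k.1 := rfl
  rw [← tsum_velocityTriad hc, Bc_eq_tsum_interaction, hlam]
  simp only [velocityTriad_eq_interaction]
  rw [tsum_mul_right]
  push_cast
  ring

lemma im_tsum_vorticityTriad (hc : IsReal c) (h2 : eHSq 2 c ≠ ⊤) :
    (∑' k, ∑' m, vorticityTriad c k m).im = 0 := by
  have hsum : Summable fun p : (ℤ × ℤ) × (ℤ × ℤ) => vorticityTriad c p.1 p.2 :=
    .of_enorm ((ENNReal.tsum_prod (f := fun k m => ‖vorticityTriad c k m‖ₑ)).trans_ne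
      (tsum_enorm_vorticityTriad_ne_top h2))
  let swap : (ℤ × ℤ) × (ℤ × ℤ) ≃ (ℤ × ℤ) × (ℤ × ℤ) :=
    { toFun := fun p => (p.1 - p.2, -p.2)
      invFun := fun p => (p.1 - p.2, -p.2)
      left_inv := fun p => by simp
      right_inv := fun p => by simp }
  rw [← hsum.tsum_prod, ← Complex.conj_eq_iff_im, Complex.conj_tsum,
    ← swap.tsum_eq fun p => vorticityTriad c p.1 p.2]
  exact tsum_congr fun p => (vorticityTriad_sub_neg hc p.1 p.2).symm

/-- The rate at which the nonlinearity removes enstrophy from the `k`-th mode. -/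
def enstrophyTransfer (c : Coef) (k : Freq) : ℝ :=
  lam k * (Bc c c k * (starRingEnd ℂ) (c k)).re

lemma enorm_enstrophyTransfer_le (c : Coef) (k : Freq) :
    ‖enstrophyTransfer c k‖ₑ ≤ ‖Bc c c k‖ₑ * (weight 1 k.1 * ‖c k‖ₑ) := by
  have hlam : ‖lam k‖ₑ = weight 1 k.1 := by
    rw [weight_val, Real.rpow_one, Real.enorm_of_nonneg (lam_pos k).le]
  have hre : ‖(Bc c c k * (starRingEnd ℂ) (c k)).re‖ₑ ≤ ‖Bc c c k‖ₑ * ‖c k‖ₑ := by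
    rw [← enorm_mul, ← ofReal_norm, ← ofReal_norm, norm_mul, ← RCLike.norm_conj (c k), ← norm_mul]
    exact ENNReal.ofReal_le_ofReal (Complex.abs_re_le_norm _)
  rw [enstrophyTransfer, enorm_mul, hlam, mul_left_comm]
  gcongr

lemma exists_tsum_enorm_enstrophyTransfer_le : ∃ C : ℝ≥0, ∀ c : Coef,
    ∑' k, ‖enstrophyTransfer c k‖ₑ ≤ (C * eHSq 1 c + 1) * eHSq 2 c := by
  obtain ⟨C, hC⟩ := productBound_of_nonneg (α := 1) (s := 1) zero_le_one le_rfl le_rfl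
  refine ⟨C, fun c => ?_⟩
  have hB : ∑' k, ‖Bc c c k‖ₑ ^ 2 ≤ C * (eHSq 1 c * eHSq 2 c) := by
    calc ∑' k, ‖Bc c c k‖ₑ ^ 2 = eHSq (1 - 1) (Bc c c) := by
          simp only [sub_self, eHSq_eq_tsum, weight_zero, one_mul]
      _ ≤ C * (eHSq 1 c * eHSq (1 + 1 / 2) c) := (eHSq_Bc_le 1 c c).trans (hC _ _)
      _ ≤ C * (eHSq 1 c * eHSq 2 c) := by
          gcongr
          exact eHSq_mono (by norm_num) c
  have hc : ∑' k : Freq, (weight 1 k.1 * ‖c k‖ₑ) ^ 2 = eHSq 2 c := by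
    rw [eHSq_eq_tsum]
    refine tsum_congr fun k => ?_
    rw [mul_pow, ← weight_half_sq 2, div_self two_ne_zero]
  calc ∑' k, ‖enstrophyTransfer c k‖ₑ
      ≤ ∑' k : Freq, (‖Bc c c k‖ₑ ^ 2 + (weight 1 k.1 * ‖c k‖ₑ) ^ 2) :=
        ENNReal.tsum_le_tsum fun k =>
          (enorm_enstrophyTransfer_le c k).trans (mul_le_sq_add_sq _ _)
    _ ≤ C * (eHSq 1 c * eHSq 2 c) + eHSq 2 c := by
        rw [ENNReal.tsum_add, hc]
        gcongr
    _ = (C * eHSq 1 c + 1) * eHSq 2 c := by ring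

theorem tsum_enstrophyTransfer_eq_zero (hc : IsReal c) (h2 : eHSq 2 c ≠ ⊤) :
    ∑' k, enstrophyTransfer c k = 0 := by
  have hsum : Summable fun k : Freq => ∑' m, vorticityTriad c k.1 m := by
    refine (Summable.of_enorm (ne_top_of_le_ne_top (tsum_enorm_vorticityTriad_ne_top h2)
      (ENNReal.tsum_le_tsum fun k => enorm_tsum_le_tsum_enorm))).comp_injective
        Subtype.val_injective
  have hzero : ∑' m, vorticityTriad c 0 m = 0 := by simp [vorticityTriad, normSqZ]
  simp only [enstrophyTransfer, ← Complex.re_ofReal_mul, lam_mul_Bc_mul_conj h2]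
  rw [← Complex.re_tsum ((hsum.mul_left _).mul_left _), tsum_mul_left, tsum_mul_left,
    tsum_freq (g := fun k => ∑' m, vorticityTriad c k m) hzero, Complex.re_ofReal_mul,
    Complex.I_mul_re, im_tsum_vorticityTriad hc h2, neg_zero, mul_zero]

end Enstrophy

/-! ### Energy estimates for damped equations -/

section ScalarEnergy

variable {E : Type*} [NormedAddCommGroup E] {μ a b : ℝ} {y g h : ℝ → E}

lemma ofReal_norm_sq (z : E) : ENNReal.ofReal (‖z‖ ^ 2) = ‖z‖ₑ ^ 2 := by
  rw [ENNReal.ofReal_pow (norm_nonneg z), ofReal_norm]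

lemma ofReal_integral_norm_sq {α : Type*} [MeasurableSpace α] {m : Measure α} {g : α → E}
    (hg : Integrable (fun t => ‖g t‖ ^ 2) m) :
    ENNReal.ofReal (∫ t, ‖g t‖ ^ 2 ∂m) = ∫⁻ t, ‖g t‖ₑ ^ 2 ∂m := by
  rw [ofReal_integral_eq_lintegral_ofReal hg (.of_forall fun t => sq_nonneg _)]
  simp only [ofReal_norm_sq]

lemma integrable_norm_sq_of_lintegral_ne_top {α : Type*} [MeasurableSpace α] {m : Measure α}
    {g : α → E} (hg : AEStronglyMeasurable g m) (hfin : ∫⁻ t, ‖g t‖ₑ ^ 2 ∂m ≠ ⊤) :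
    Integrable (fun t => ‖g t‖ ^ 2) m := by
  refine ⟨hg.norm.pow 2, ?_⟩
  rw [hasFiniteIntegral_iff_ofReal (.of_forall fun t => sq_nonneg _)]
  simpa only [ofReal_norm_sq] using hfin.lt_top

lemma integrableOn_Ioc_norm_sq (hy : ContinuousOn y (Icc a b)) :
    IntegrableOn (fun t => ‖y t‖ ^ 2) (Ioc a b) :=
  (hy.norm.pow 2).integrableOn_Icc.mono_set Ioc_subset_Icc_self

lemma aestronglyMeasurable_of_hasDerivAt_sub_smul [NormedSpace ℝ E] [CompleteSpace E]
    (hy : ContinuousOn y (Icc a b)) (hd : ∀ t ∈ Ioo a b, HasDerivAt y (h t - μ • y t) t) :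
    AEStronglyMeasurable h (volume.restrict (Ioc a b)) := by
  have hym := (hy.mono Ioc_subset_Icc_self).aestronglyMeasurable (μ := volume) measurableSet_Ioc
  refine ((stronglyMeasurable_deriv y).aestronglyMeasurable.add (hym.const_smul μ)).congr ?_
  rw [← restrict_Ioo_eq_restrict_Ioc]
  filter_upwards [ae_restrict_mem measurableSet_Ioo] with t ht
  rw [Pi.add_apply, (hd t ht).deriv, Pi.smul_apply, sub_add_cancel]

variable [InnerProductSpace ℝ E]

lemma two_mul_inner_sub_smul_le (hμ : 0 < μ) (v w : E) :
    2 * inner ℝ v (w - μ • v) ≤ μ⁻¹ * ‖w‖ ^ 2 - μ * ‖v‖ ^ 2 := by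
  have hinner : inner ℝ v w ≤ ‖v‖ * ‖w‖ := real_inner_le_norm v w
  have hsq : μ⁻¹ * (μ * ‖v‖ - ‖w‖) ^ 2 = μ * ‖v‖ ^ 2 + μ⁻¹ * ‖w‖ ^ 2 - 2 * (‖v‖ * ‖w‖) := by
    field_simp
    ring
  have : 0 ≤ μ⁻¹ * (μ * ‖v‖ - ‖w‖) ^ 2 := by positivity
  rw [inner_sub_right, inner_smul_right, real_inner_self_eq_norm_sq]
  linarith

lemma norm_sq_add_integral_add_integral_inner_le (hab : a ≤ b) (hμ : 0 < μ)
    (hy : ContinuousOn y (Icc a b)) (hh : IntegrableOn (fun t => ‖h t‖ ^ 2) (Ioc a b))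
    (hg : IntegrableOn (fun t => inner ℝ (y t) (g t)) (Ioc a b))
    (hd : ∀ t ∈ Ioo a b, HasDerivAt y (h t - μ • y t - g t) t) :
    ‖y b‖ ^ 2 + μ * (∫ t in Ioc a b, ‖y t‖ ^ 2) + 2 * (∫ t in Ioc a b, inner ℝ (y t) (g t)) ≤
      ‖y a‖ ^ 2 + μ⁻¹ * ∫ t in Ioc a b, ‖h t‖ ^ 2 := by
  have hyint := integrableOn_Ioc_norm_sq hy
  have hdiff : IntegrableOn (fun t => μ⁻¹ * ‖h t‖ ^ 2 - μ * ‖y t‖ ^ 2) (Ioc a b) :=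
    (hh.const_mul _).sub (hyint.const_mul _)
  have henergy : ‖y b‖ ^ 2 - ‖y a‖ ^ 2 ≤
      ∫ t in a..b, (μ⁻¹ * ‖h t‖ ^ 2 - μ * ‖y t‖ ^ 2 - 2 * inner ℝ (y t) (g t)) := by
    refine intervalIntegral.sub_le_integral_of_hasDeriv_right_of_le hab (hy.norm.pow 2)
      (fun t ht => (hd t ht).norm_sq.hasDerivWithinAt)
      ((integrableOn_Icc_iff_integrableOn_Ioc).2 (hdiff.sub (hg.const_mul _)))
      fun t _ => ?_
    rw [inner_sub_right, mul_sub]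
    exact sub_le_sub_right (two_mul_inner_sub_smul_le hμ (y t) (h t)) _
  rw [intervalIntegral.integral_of_le hab,
    integral_sub hdiff (hg.const_mul _), integral_sub (hh.const_mul _) (hyint.const_mul _),
    integral_const_mul, integral_const_mul, integral_const_mul] at henergy
  linarith

lemma enorm_sq_add_lintegral_le [CompleteSpace E] (hab : a ≤ b) (hμ : 0 < μ)
    (hy : ContinuousOn y (Icc a b)) (hd : ∀ t ∈ Ioo a b, HasDerivAt y (h t - μ • y t) t) :
    ‖y b‖ₑ ^ 2 + ENNReal.ofReal μ * ∫⁻ t in Ioc a b, ‖y t‖ₑ ^ 2 ≤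
      ‖y a‖ₑ ^ 2 + ENNReal.ofReal μ⁻¹ * ∫⁻ t in Ioc a b, ‖h t‖ₑ ^ 2 := by
  by_cases htop : ∫⁻ t in Ioc a b, ‖h t‖ₑ ^ 2 = ⊤
  · rw [htop, ENNReal.mul_top (ENNReal.ofReal_pos.2 (inv_pos.2 hμ)).ne', add_top]
    exact le_top
  have hhint : IntegrableOn (fun t => ‖h t‖ ^ 2) (Ioc a b) :=
    integrable_norm_sq_of_lintegral_ne_top (aestronglyMeasurable_of_hasDerivAt_sub_smul hy hd) htop
  have henergy := norm_sq_add_integral_add_integral_inner_le (g := 0) hab hμ hy hhint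
    (by simp) (by simpa using hd)
  simp only [Pi.zero_apply, inner_zero_right, integral_zero, mul_zero, add_zero] at henergy
  have hy0 : 0 ≤ ∫ t in Ioc a b, ‖y t‖ ^ 2 := integral_nonneg fun t => sq_nonneg _
  have hh0 : 0 ≤ ∫ t in Ioc a b, ‖h t‖ ^ 2 := integral_nonneg fun t => sq_nonneg _
  rw [← ofReal_integral_norm_sq (integrableOn_Ioc_norm_sq hy), ← ofReal_integral_norm_sq hhint,
    ← ofReal_norm_sq, ← ofReal_norm_sq, ← ENNReal.ofReal_mul hμ.le,
    ← ENNReal.ofReal_mul (inv_pos.2 hμ).le,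
    ← ENNReal.ofReal_add (sq_nonneg _) (mul_nonneg hμ.le hy0),
    ← ENNReal.ofReal_add (sq_nonneg _) (mul_nonneg (inv_pos.2 hμ).le hh0)]
  exact ENNReal.ofReal_le_ofReal henergy

end ScalarEnergy

section Energy

variable {α ν s a b t : ℝ} {μ : Freq → ℝ} {y h : ℝ → Coef} {k : Freq}

/-- The supremum of the `k`-th coefficient of a trajectory over the time interval `[a, b]`. -/
def supEnorm (a b : ℝ) (y : ℝ → Coef) (k : Freq) : ℝ≥0∞ := ⨆ t ∈ Icc a b, ‖y t k‖ₑ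

lemma enorm_le_supEnorm (y : ℝ → Coef) (k : Freq) (ht : t ∈ Icc a b) :
    ‖y t k‖ₑ ≤ supEnorm a b y k :=
  le_iSup₂ (f := fun t (_ : t ∈ Icc a b) => ‖y t k‖ₑ) t ht

lemma supEnorm_sq (a b : ℝ) (y : ℝ → Coef) (k : Freq) :
    supEnorm a b y k ^ 2 = ⨆ t ∈ Icc a b, ‖y t k‖ₑ ^ 2 := by
  simp only [supEnorm, ← ENNReal.rpow_two]
  exact ((ENNReal.orderIsoRpow 2 two_pos).map_iSup₂ _)

/-- The energy norm of a trajectory on `[a, b]` with damping rates `μ`: the suprema in time are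
taken inside the sum over frequencies, which makes it slightly stronger than the norm of
`L^∞ Ḣ^α ∩ L² Ḣ^{α+1}`. -/
def energy (α : ℝ) (μ : Freq → ℝ) (a b : ℝ) (y : ℝ → Coef) : ℝ≥0∞ :=
  ∑' k : Freq, weight α k.1 *
    (supEnorm a b y k ^ 2 + ENNReal.ofReal (μ k) * ∫⁻ t in Ioc a b, ‖y t k‖ₑ ^ 2)

lemma supEnorm_sq_add_lintegral_le {μ : ℝ} {h : ℝ → ℂ} (hab : a ≤ b) (hμ : 0 < μ)
    (hy : ContinuousOn (fun t => y t k) (Icc a b))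
    (hd : ∀ t ∈ Ioo a b, HasDerivAt (fun t => y t k) (h t - (μ : ℂ) * y t k) t) :
    supEnorm a b y k ^ 2 + ENNReal.ofReal μ * ∫⁻ t in Ioc a b, ‖y t k‖ₑ ^ 2 ≤
      2 * (‖y a k‖ₑ ^ 2 + ENNReal.ofReal μ⁻¹ * ∫⁻ t in Ioc a b, ‖h t‖ₑ ^ 2) := by
  simp only [← Complex.real_smul] at hd
  rw [two_mul, supEnorm_sq]
  refine add_le_add (iSup₂_le fun t ht => ?_)
    (le_add_self.trans (enorm_sq_add_lintegral_le hab hμ hy hd))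
  calc ‖y t k‖ₑ ^ 2 ≤ ‖y a k‖ₑ ^ 2 + ENNReal.ofReal μ⁻¹ * ∫⁻ t in Ioc a t, ‖h t‖ₑ ^ 2 :=
        le_self_add.trans (enorm_sq_add_lintegral_le ht.1 hμ
          (hy.mono (Icc_subset_Icc_right ht.2)) fun s hs => hd s ⟨hs.1, hs.2.trans_le ht.2⟩)
    _ ≤ _ := by gcongr; exact ht.2

lemma ofReal_inv_mul_weight_le (hν : 0 < ν) {μ : ℝ} (hμ : ν * lam k ^ s ≤ μ) (α : ℝ) :
    ENNReal.ofReal μ⁻¹ * weight α k.1 ≤ ENNReal.ofReal ν⁻¹ * weight (α - s) k.1 := by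
  have hlam := Real.rpow_pos_of_pos (lam_pos k) s
  have hμ0 : 0 < μ := (mul_pos hν hlam).trans_le hμ
  have hinv : ENNReal.ofReal μ⁻¹ * weight s k.1 ≤ ENNReal.ofReal ν⁻¹ := by
    rw [weight_val, ← ENNReal.ofReal_mul (inv_pos.2 hμ0).le]
    refine ENNReal.ofReal_le_ofReal ?_
    rwa [inv_mul_eq_div, div_le_iff₀ hμ0, inv_mul_eq_div, le_div_iff₀ hν, mul_comm]
  rw [← sub_add_cancel α s, weight_add, mul_left_comm, add_sub_cancel_right, mul_comm]
  gcongr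

lemma weight_add_le_mul_ofReal (hν : 0 < ν) {μ : ℝ} (hμ : ν * lam k ^ s ≤ μ) (α : ℝ) :
    weight (α + s) k.1 ≤ ENNReal.ofReal ν⁻¹ * (weight α k.1 * ENNReal.ofReal μ) := by
  rw [weight_add, mul_left_comm, weight_val s, ← ENNReal.ofReal_mul (inv_pos.2 hν).le]
  gcongr
  rwa [inv_mul_eq_div, le_div_iff₀ hν, mul_comm]

lemma lintegral_eHSq (α : ℝ)
    (hy : ∀ k, AEStronglyMeasurable (fun t => y t k) (volume.restrict (Ioc a b))) :
    ∫⁻ t in Ioc a b, eHSq α (y t) = ∑' k : Freq, weight α k.1 * ∫⁻ t in Ioc a b, ‖y t k‖ₑ ^ 2 := by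
  simp only [eHSq_eq_tsum]
  rw [lintegral_tsum fun k => ((hy k).enorm.pow_const 2).const_mul _]
  exact tsum_congr fun k => lintegral_const_mul' _ _ (weight_ne_top _ _)

theorem energy_le (hab : a ≤ b) (hν : 0 < ν) (hμ : ∀ k, ν * lam k ≤ μ k)
    (hy : ∀ k, ContinuousOn (fun t => y t k) (Icc a b))
    (hd : ∀ k, ∀ t ∈ Ioo a b, HasDerivAt (fun t => y t k) (h t k - (μ k : ℂ) * y t k) t) :
    energy α μ a b y ≤
      2 * (eHSq α (y a) + ENNReal.ofReal ν⁻¹ * ∫⁻ t in Ioc a b, eHSq (α - 1) (h t)) := by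
  have hμ0 k : 0 < μ k := (mul_pos hν (lam_pos k)).trans_le (hμ k)
  have hh k : AEStronglyMeasurable (fun t => h t k) (volume.restrict (Ioc a b)) :=
    aestronglyMeasurable_of_hasDerivAt_sub_smul (hy k)
      (by simpa only [Complex.real_smul] using hd k)
  rw [lintegral_eHSq _ hh, eHSq_eq_tsum, ← ENNReal.tsum_mul_left, ← ENNReal.tsum_add,
    ← ENNReal.tsum_mul_left]
  refine ENNReal.tsum_le_tsum fun k => ?_
  set J := ∫⁻ t in Ioc a b, ‖h t k‖ₑ ^ 2
  calc weight α k.1 * (supEnorm a b y k ^ 2 +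
          ENNReal.ofReal (μ k) * ∫⁻ t in Ioc a b, ‖y t k‖ₑ ^ 2)
      ≤ weight α k.1 * (2 * (‖y a k‖ₑ ^ 2 + ENNReal.ofReal (μ k)⁻¹ * J)) := by
        gcongr
        exact supEnorm_sq_add_lintegral_le hab (hμ0 k) (hy k) (hd k)
    _ = 2 * (weight α k.1 * ‖y a k‖ₑ ^ 2 + ENNReal.ofReal (μ k)⁻¹ * weight α k.1 * J) := by ring
    _ ≤ 2 * (weight α k.1 * ‖y a k‖ₑ ^ 2 + ENNReal.ofReal ν⁻¹ * weight (α - 1) k.1 * J) := by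
        gcongr 2 * (_ + ?_ * J)
        exact ofReal_inv_mul_weight_le hν (by rw [Real.rpow_one]; exact hμ k) α
    _ = _ := by rw [mul_assoc (ENNReal.ofReal ν⁻¹)]

lemma eHSq_le_energy (α : ℝ) (μ : Freq → ℝ) (y : ℝ → Coef) (ht : t ∈ Icc a b) :
    eHSq α (y t) ≤ energy α μ a b y := by
  rw [eHSq_eq_tsum]
  refine ENNReal.tsum_le_tsum fun k => ?_
  gcongr
  exact (pow_le_pow_left' (enorm_le_supEnorm y k ht) 2).trans le_self_add

lemma lintegral_eHSq_add_le (hν : 0 < ν) (hμ : ∀ k, ν * lam k ^ s ≤ μ k) (α : ℝ)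
    (hy : ∀ k, ContinuousOn (fun t => y t k) (Icc a b)) :
    ∫⁻ t in Ioc a b, eHSq (α + s) (y t) ≤ ENNReal.ofReal ν⁻¹ * energy α μ a b y := by
  rw [lintegral_eHSq _ fun k =>
    ((hy k).mono Ioc_subset_Icc_self).aestronglyMeasurable measurableSet_Ioc,
    energy, ← ENNReal.tsum_mul_left]
  refine ENNReal.tsum_le_tsum fun k => ?_
  set J := ∫⁻ t in Ioc a b, ‖y t k‖ₑ ^ 2
  calc weight (α + s) k.1 * J
      ≤ ENNReal.ofReal ν⁻¹ * (weight α k.1 * ENNReal.ofReal (μ k)) * J := by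
        gcongr
        exact weight_add_le_mul_ofReal hν (hμ k) α
    _ = ENNReal.ofReal ν⁻¹ * (weight α k.1 * (ENNReal.ofReal (μ k) * J)) := by ring
    _ ≤ _ := by gcongr; exact le_add_self

end Energy

/-! ### Sobolev norms along trajectories -/

section Trajectories

variable {α T ε : ℝ} {c d : Coef} {u : ℝ → Coef}

lemma enorm_add_sq_le (z w : ℂ) : ‖z + w‖ₑ ^ 2 ≤ 2 * (‖z‖ₑ ^ 2 + ‖w‖ₑ ^ 2) :=
  (pow_le_pow_left' (enorm_add_le z w) 2).trans (add_sq_le_two_mul _ _)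

lemma eHSq_neg (α : ℝ) (c : Coef) : eHSq α (-c) = eHSq α c := by
  simp only [eHSq_eq_tsum, Pi.neg_apply, enorm_neg]

lemma eHSq_add_le (α : ℝ) (c d : Coef) : eHSq α (c + d) ≤ 2 * (eHSq α c + eHSq α d) := by
  simp only [eHSq_eq_tsum]
  rw [← ENNReal.tsum_add, ← ENNReal.tsum_mul_left]
  refine ENNReal.tsum_le_tsum fun k => ?_
  rw [← mul_add, mul_left_comm]
  gcongr
  exact enorm_add_sq_le (c k) (d k)

lemma eHSq_sub_le (α : ℝ) (c d : Coef) : eHSq α (c - d) ≤ 2 * (eHSq α c + eHSq α d) := by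
  rw [sub_eq_add_neg, ← eHSq_neg α d]
  exact eHSq_add_le α c (-d)

lemma eHSq_sub_ne_top (hc : eHSq α c ≠ ⊤) (hd : eHSq α d ≠ ⊤) : eHSq α (c - d) ≠ ⊤ :=
  ne_top_of_le_ne_top (by finiteness) (eHSq_sub_le α c d)

lemma eHSq_le_of_hN_le (hc : eHSq α c ≠ ⊤) (h : hN α c ≤ ε) :
    eHSq α c ≤ ENNReal.ofReal (ε ^ 2) := by
  rw [← ofReal_hSq (finH_iff.2 hc), ← Real.sq_sqrt (hSq_nonneg α c)]
  exact ENNReal.ofReal_le_ofReal (pow_le_pow_left₀ (Real.sqrt_nonneg _) h 2)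

lemma sqrt_lam_rpow_mul_norm_le_hN (hc : eHSq α c ≠ ⊤) (k : Freq) :
    √(lam k ^ α) * ‖c k‖ ≤ hN α c := by
  refine Real.le_sqrt_of_sq_le ?_
  rw [mul_pow, Real.sq_sqrt (Real.rpow_nonneg (lam_pos k).le α)]
  exact (finH_iff.2 hc).le_tsum k fun j _ => lam_rpow_mul_norm_sq_nonneg α c j

lemma ContH.continuousOn_apply (hu : ContH α T u) (hfin : ∀ t ∈ Icc 0 T, eHSq α (u t) ≠ ⊤)
    (k : Freq) : ContinuousOn (fun t => u t k) (Icc 0 T) := by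
  rw [Metric.continuousOn_iff]
  intro t ht ε hε
  have hpos : 0 < √(lam k ^ α) := Real.sqrt_pos.2 (Real.rpow_pos_of_pos (lam_pos k) α)
  obtain ⟨δ, hδ, hu⟩ := hu t ht (√(lam k ^ α) * ε) (by positivity)
  refine ⟨δ, hδ, fun s hs hst => ?_⟩
  rw [dist_eq_norm]
  refine lt_of_mul_lt_mul_left ?_ hpos.le
  exact (sqrt_lam_rpow_mul_norm_le_hN (eHSq_sub_ne_top (hfin s hs) (hfin t ht)) k).trans_lt
    (hu s hs hst)

lemma ContH.exists_eHSq_le (hu : ContH α T u) (hfin : ∀ t ∈ Icc 0 T, eHSq α (u t) ≠ ⊤) :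
    ∃ M : ℝ≥0, ∀ t ∈ Icc 0 T, eHSq α (u t) ≤ M := by
  refine isCompact_Icc.induction_on (p := fun S => ∃ M : ℝ≥0, ∀ t ∈ S, eHSq α (u t) ≤ M)
    ⟨0, by simp⟩ (fun s t hst ⟨M, hM⟩ => ⟨M, fun x hx => hM x (hst hx)⟩) ?_ fun t ht => ?_
  · rintro s t ⟨M, hM⟩ ⟨M', hM'⟩
    refine ⟨max M M', ?_⟩
    rintro x (hx | hx)
    · exact (hM x hx).trans (ENNReal.coe_le_coe.2 (le_max_left M M'))
    · exact (hM' x hx).trans (ENNReal.coe_le_coe.2 (le_max_right M M'))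
  · obtain ⟨δ, hδ, hu⟩ := hu t ht 1 one_pos
    have hbound : 2 * (ENNReal.ofReal (1 ^ 2) + eHSq α (u t)) ≠ ⊤ := by finiteness [hfin t ht]
    lift 2 * (ENNReal.ofReal (1 ^ 2) + eHSq α (u t)) to ℝ≥0 using hbound with M hM
    refine ⟨Icc 0 T ∩ Metric.ball t δ,
      inter_mem_nhdsWithin _ (Metric.ball_mem_nhds t hδ), M, fun s ⟨hs, hst⟩ => ?_⟩
    rw [hM, ← sub_add_cancel (u s) (u t)]
    refine (eHSq_add_le α _ _).trans ?_
    gcongr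
    exact eHSq_le_of_hN_le (eHSq_sub_ne_top (hfin s hs) (hfin t ht)) (hu s hs hst).le

lemma MemL2H.lintegral_eHSq_ne_top (hu : MemL2H α T u) : ∫⁻ t in Ioc 0 T, eHSq α (u t) ≠ ⊤ := by
  have hfin := hu.2.2
  rw [hasFiniteIntegral_iff_ofReal (.of_forall fun t => hSq_nonneg _ _)] at hfin
  rw [setLIntegral_congr_fun measurableSet_Ioc fun t ht => (ofReal_hSq (hu.1 t ht).2).symm]
  exact hfin.ne

end Trajectories

/-! ### The enstrophy inequality and higher regularity for Navier–Stokes -/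

section NavierStokes

variable {ν T t : ℝ} {f θ : Coef} {u : ℝ → Coef} {k : Freq}

lemma tsum_ofReal_le_of_hasSum_zero {ι : Type*} {p q r : ι → ℝ} (hp : ∀ i, 0 ≤ p i)
    (hq : ∀ i, 0 ≤ q i) (h : ∀ i, p i + r i ≤ q i) (hr : HasSum r 0) :
    ∑' i, ENNReal.ofReal (p i) ≤ ∑' i, ENNReal.ofReal (q i) := by
  by_cases htop : ∑' i, ENNReal.ofReal (q i) = ⊤
  · exact htop ▸ le_top
  have hqs : Summable q :=
    (ENNReal.summable_toReal htop).congr fun i => ENNReal.toReal_ofReal (hq i)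
  have hle i : p i ≤ q i - r i := le_sub_right_of_add_le (h i)
  have hps : Summable p := .of_nonneg_of_le hp hle (hqs.sub hr.summable)
  rw [← ENNReal.ofReal_tsum_of_nonneg hp hps, ← ENNReal.ofReal_tsum_of_nonneg hq hqs]
  refine ENNReal.ofReal_le_ofReal ((hps.tsum_le_tsum hle (hqs.sub hr.summable)).trans_eq ?_)
  rw [hqs.tsum_sub hr.summable, hr.tsum_eq, sub_zero]

namespace IsNSSol

lemma eHSq_one_ne_top (hu : IsNSSol ν f T θ u) (hθ : eHSq 1 θ ≠ ⊤) :
    ∀ t ∈ Icc 0 T, eHSq 1 (u t) ≠ ⊤ := by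
  intro t ht
  rcases ht.1.eq_or_lt with rfl | hpos
  · rwa [hu.init]
  · exact ne_top_of_le_ne_top (finH_iff.1 (hu.memL2H2.1 t ⟨hpos, ht.2⟩).2)
      (eHSq_mono one_le_two _)

lemma continuousOn_apply (hu : IsNSSol ν f T θ u) (hθ : eHSq 1 θ ≠ ⊤) (k : Freq) :
    ContinuousOn (fun t => u t k) (Icc 0 T) :=
  hu.contH1.continuousOn_apply (hu.eHSq_one_ne_top hθ) k

lemma tsum_lintegral_enorm_enstrophyTransfer_ne_top (hu : IsNSSol ν f T θ u)
    (hθ : eHSq 1 θ ≠ ⊤) (hmeas : ∀ k, AEStronglyMeasurable (fun t => enstrophyTransfer (u t) k)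
      (volume.restrict (Ioc 0 T))) :
    ∑' k, ∫⁻ t in Ioc 0 T, ‖enstrophyTransfer (u t) k‖ₑ ≠ ⊤ := by
  obtain ⟨C, hC⟩ := exists_tsum_enorm_enstrophyTransfer_le
  obtain ⟨M, hM⟩ := hu.contH1.exists_eHSq_le (hu.eHSq_one_ne_top hθ)
  rw [← lintegral_tsum fun k => (hmeas k).enorm]
  refine ne_top_of_le_ne_top (b := ∫⁻ t in Ioc 0 T, (C * M + 1) * eHSq 2 (u t)) ?_ ?_
  · rw [lintegral_const_mul' _ _ (by finiteness)]
    exact ENNReal.mul_ne_top (by finiteness) hu.memL2H2.lintegral_eHSq_ne_top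
  · refine setLIntegral_mono' measurableSet_Ioc fun t ht => (hC (u t)).trans ?_
    gcongr
    exact hM t (Ioc_subset_Icc_self ht)

lemma aestronglyMeasurable_enstrophyTransfer (hu : IsNSSol ν f T θ u) (hθ : eHSq 1 θ ≠ ⊤)
    (k : Freq) :
    AEStronglyMeasurable (fun t => enstrophyTransfer (u t) k) (volume.restrict (Ioc 0 T)) := by
  have hy : AEStronglyMeasurable (fun t => u t k) (volume.restrict (Ioc 0 T)) :=
    ((hu.continuousOn_apply hθ k).mono Ioc_subset_Icc_self).aestronglyMeasurable measurableSet_Ioc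
  have hB : AEStronglyMeasurable (fun t => Bc (u t) (u t) k) (volume.restrict (Ioc 0 T)) := by
    refine ((aestronglyMeasurable_const (b := f k)).sub (hy.const_mul ((ν * lam k : ℝ) : ℂ)) |>.sub
      (stronglyMeasurable_deriv fun t => u t k).aestronglyMeasurable).congr ?_
    filter_upwards [ae_restrict_mem measurableSet_Ioc] with t ht
    simp only [Pi.sub_apply, (hu.deriv k t ht).deriv, sub_sub_cancel]
  exact (Complex.continuous_re.comp_aestronglyMeasurable
    (hB.mul (Complex.continuous_conj.comp_aestronglyMeasurable hy))).const_mul _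

lemma hasSum_integral_enstrophyTransfer (hu : IsNSSol ν f T θ u) (hθ : eHSq 1 θ ≠ ⊤)
    (ht : t ∈ Icc 0 T) :
    (∀ k, IntegrableOn (fun s => enstrophyTransfer (u s) k) (Ioc 0 t)) ∧
      HasSum (fun k => ∫ s in Ioc 0 t, enstrophyTransfer (u s) k) 0 := by
  have hsub : Ioc 0 t ⊆ Ioc 0 T := Ioc_subset_Ioc_right ht.2
  have hmeas k := hu.aestronglyMeasurable_enstrophyTransfer hθ k
  have hsum : ∑' k, ∫⁻ s in Ioc 0 t, ‖enstrophyTransfer (u s) k‖ₑ ≠ ⊤ :=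
    ne_top_of_le_ne_top (hu.tsum_lintegral_enorm_enstrophyTransfer_ne_top hθ hmeas)
      (ENNReal.tsum_le_tsum fun k => lintegral_mono_set hsub)
  have hint k : IntegrableOn (fun s => enstrophyTransfer (u s) k) (Ioc 0 t) :=
    ⟨(hmeas k).mono_set hsub, (ENNReal.ne_top_of_tsum_ne_top hsum k).lt_top⟩
  have hzero : ∫ s in Ioc 0 t, ∑' k, enstrophyTransfer (u s) k = 0 :=
    setIntegral_eq_zero_of_forall_eq_zero fun s hs =>
      tsum_enstrophyTransfer_eq_zero (hu.real s (Ioc_subset_Icc_self (hsub hs)))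
        (finH_iff.1 (hu.memL2H2.1 s (hsub hs)).2)
  have hnorm : Summable fun k => ∫ s in Ioc 0 t, ‖enstrophyTransfer (u s) k‖ := by
    refine (ENNReal.summable_toReal hsum).congr fun k => ?_
    rw [integral_norm_eq_lintegral_enorm (hint k).1]
  exact ⟨hint, by simpa only [hzero] using hasSum_integral_of_summable_integral_norm hint hnorm⟩

lemma lam_mul_norm_sq_add_integral_le (hν : 0 < ν) (hu : IsNSSol ν f T θ u)
    (hθ : eHSq 1 θ ≠ ⊤) (ht : t ∈ Icc 0 T)
    (hint : IntegrableOn (fun s => enstrophyTransfer (u s) k) (Ioc 0 t)) :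
    lam k * ‖u t k‖ ^ 2 + ν * lam k ^ 2 * (∫ s in Ioc 0 t, ‖u s k‖ ^ 2) +
        2 * (∫ s in Ioc 0 t, enstrophyTransfer (u s) k) ≤
      lam k * ‖θ k‖ ^ 2 + t * ν⁻¹ * ‖f k‖ ^ 2 := by
  have hlam := lam_pos k
  have hinner s : inner ℝ (u s k) (Bc (u s) (u s) k) =
      (lam k)⁻¹ * enstrophyTransfer (u s) k := by
    rw [enstrophyTransfer, inv_mul_cancel_left₀ hlam.ne', Complex.inner]
  have hmode := norm_sq_add_integral_add_integral_inner_le (μ := ν * lam k)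
    (y := fun s => u s k) (h := fun _ => f k) (g := fun s => Bc (u s) (u s) k) ht.1
    (by positivity) ((hu.continuousOn_apply hθ k).mono (Icc_subset_Icc_right ht.2))
    continuous_const.integrableOn_Ioc (by simp only [hinner]; exact hint.const_mul _)
    fun s hs => by
      simpa only [Complex.real_smul] using hu.deriv k s ⟨hs.1, hs.2.le.trans ht.2⟩
  simp only [hinner, integral_const_mul, setIntegral_const, Real.volume_real_Ioc_of_le ht.1,
    sub_zero, smul_eq_mul, hu.init] at hmode
  have hscaled := mul_le_mul_of_nonneg_left hmode hlam.le
  field_simp at hscaled ⊢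
  linarith

theorem eHSq_one_add_lintegral_le (hν : 0 < ν) (hu : IsNSSol ν f T θ u) (hθ : eHSq 1 θ ≠ ⊤)
    (ht : t ∈ Icc 0 T) :
    eHSq 1 (u t) + ENNReal.ofReal ν * ∫⁻ s in Ioc 0 t, eHSq 2 (u s) ≤
      eHSq 1 θ + ENNReal.ofReal (t * ν⁻¹) * eHSq 0 f := by
  obtain ⟨hint, hzero⟩ := hu.hasSum_integral_enstrophyTransfer hθ ht
  have hcont k : ContinuousOn (fun s => u s k) (Icc 0 t) :=
    (hu.continuousOn_apply hθ k).mono (Icc_subset_Icc_right ht.2)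
  have ht0 := ht.1
  have hlam k := lam_pos k
  have hI k : 0 ≤ ∫ s in Ioc 0 t, ‖u s k‖ ^ 2 := integral_nonneg fun s => sq_nonneg _
  have hsum := tsum_ofReal_le_of_hasSum_zero (fun k => by have := hlam k; have := hI k; positivity)
    (fun k => by have := hlam k; positivity)
    (fun k => hu.lam_mul_norm_sq_add_integral_le hν hθ ht (hint k))
    (by simpa only [mul_zero] using hzero.mul_left 2)
  rw [lintegral_eHSq _ fun k =>
    ((hcont k).mono Ioc_subset_Icc_self).aestronglyMeasurable measurableSet_Ioc]
  simp only [eHSq_eq_tsum, ← ENNReal.tsum_mul_left, ← ENNReal.tsum_add]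
  convert hsum using 3 with k k
  · have := hlam k
    have := hI k
    rw [weight_val, weight_val, Real.rpow_one, Real.rpow_two,
      ← ofReal_integral_norm_sq (integrableOn_Ioc_norm_sq (hcont k)), ← ofReal_norm_sq,
      ← ENNReal.ofReal_mul (by positivity), ← ENNReal.ofReal_mul (by positivity),
      ← ENNReal.ofReal_mul hν.le, ← ENNReal.ofReal_add (by positivity) (by positivity), mul_assoc]
  · have := hlam k
    rw [weight_val, weight_zero, Real.rpow_one, one_mul, ← ofReal_norm_sq, ← ofReal_norm_sq,
      ← ENNReal.ofReal_mul (by positivity), ← ENNReal.ofReal_mul (by positivity),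
      ← ENNReal.ofReal_add (by positivity) (by positivity)]

end IsNSSol

end NavierStokes

section Regularity

variable {ν T r : ℝ} {f : Coef}

lemma eHSq_three_half_sq_le (c : Coef) :
    eHSq (3 / 2) c * eHSq (3 / 2) c ≤ eHSq 1 c * eHSq 2 c := by
  have hthree : eHSq (3 / 2) c =
      ∑' k : Freq, weight (1 / 2) k.1 * ‖c k‖ₑ * (weight (2 / 2) k.1 * ‖c k‖ₑ) := by
    rw [eHSq_eq_tsum]
    refine tsum_congr fun k => ?_
    rw [show (3 / 2 : ℝ) = 1 / 2 + 2 / 2 by norm_num, weight_add]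
    ring
  rw [← sq, hthree, eHSq_eq_tsum 1, eHSq_eq_tsum 2]
  simpa only [mul_pow, weight_half_sq] using
    tsum_mul_sq_le (fun k : Freq => weight (1 / 2) k.1 * ‖c k‖ₑ)
      fun k => weight (2 / 2) k.1 * ‖c k‖ₑ

lemma le_ofReal_inv_mul (hν : 0 < ν) {x y : ℝ≥0∞} (h : ENNReal.ofReal ν * x ≤ y) :
    x ≤ ENNReal.ofReal ν⁻¹ * y := by
  rw [ENNReal.ofReal_inv_of_pos hν, mul_comm, ← div_eq_mul_inv]
  refine (ENNReal.le_div_iff_mul_le ?_ ?_).2 (by rwa [mul_comm])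
  · exact .inl (ENNReal.ofReal_pos.2 hν).ne'
  · exact .inl ENNReal.ofReal_ne_top

lemma exists_eHSq_Bc_self_le (hr : 0 ≤ r) :
    ∃ C : ℝ≥0, ∀ c, eHSq (r - 1) (Bc c c) ≤ C * (eHSq r c * eHSq (3 / 2) c) := by
  obtain ⟨C, hC⟩ := wNormSq_convolve_tame hr
  refine ⟨C * 2, fun c => (eHSq_Bc_le r c c).trans ((hC _ _).trans_eq ?_)⟩
  simp only [eHSq]
  push_cast
  ring

namespace IsNSSol

theorem exists_energy_le (hν : 0 < ν) (hT : 0 ≤ T) (hr : 0 ≤ r) :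
    ∃ C : ℝ≥0, ∀ (f θ : Coef) (u : ℝ → Coef), eHSq 1 θ ≠ ⊤ → IsNSSol ν f T θ u →
      energy r (fun k => ν * lam k) 0 T u ≤ 2 * (eHSq r θ + ENNReal.ofReal ν⁻¹ *
        (2 * (ENNReal.ofReal T * eHSq (r - 1) f +
          C * ∫⁻ t in Ioc 0 T, eHSq r (u t) * eHSq (3 / 2) (u t)))) := by
  obtain ⟨C, hC⟩ := exists_eHSq_Bc_self_le hr
  refine ⟨C, fun f θ u hθ hu => ?_⟩
  have henergy := energy_le (α := r) (h := fun t => f - Bc (u t) (u t)) hT hν (fun _ => le_rfl)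
    (hu.continuousOn_apply hθ) fun k t ht => by
      simpa only [Pi.sub_apply, sub_right_comm] using hu.deriv k t (Ioo_subset_Ioc_self ht)
  rw [hu.init] at henergy
  refine henergy.trans ?_
  gcongr 2 * (_ + _ * ?_)
  calc ∫⁻ t in Ioc 0 T, eHSq (r - 1) (f - Bc (u t) (u t))
      ≤ ∫⁻ t in Ioc 0 T, 2 * (eHSq (r - 1) f + C * (eHSq r (u t) * eHSq (3 / 2) (u t))) :=
        lintegral_mono fun t => (eHSq_sub_le _ _ _).trans (by gcongr; exact hC (u t))
    _ = _ := by
        rw [lintegral_const_mul' _ _ (by finiteness), lintegral_add_left measurable_const,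
          lintegral_const_mul' _ _ (by finiteness), setLIntegral_const, Real.volume_Ioc,
          sub_zero, mul_comm (eHSq _ f)]

lemma exists_energy_le_of_lintegral_le (hν : 0 < ν) (hT : 0 ≤ T) (hr : 1 ≤ r)
    (hf : eHSq (r - 1) f ≠ ⊤) (B N : ℝ≥0) :
    ∃ M : ℝ≥0, ∀ (θ : Coef) (u : ℝ → Coef), eHSq r θ ≤ B → IsNSSol ν f T θ u →
      ∫⁻ t in Ioc 0 T, eHSq r (u t) * eHSq (3 / 2) (u t) ≤ N →
        energy r (fun k => ν * lam k) 0 T u ≤ M := by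
  obtain ⟨C, hC⟩ := exists_energy_le hν hT (zero_le_one.trans hr)
  refine ⟨(2 * (B + ENNReal.ofReal ν⁻¹ *
    (2 * (ENNReal.ofReal T * eHSq (r - 1) f + C * N)))).toNNReal, fun θ u hθ hu hN => ?_⟩
  rw [ENNReal.coe_toNNReal (by finiteness)]
  refine (hC f θ u (ne_top_of_le_ne_top (by finiteness) ((eHSq_mono hr θ).trans hθ)) hu).trans ?_
  gcongr

lemma exists_eHSq_one_le (hν : 0 < ν) (hT : 0 ≤ T) (hf : eHSq 0 f ≠ ⊤) (B : ℝ≥0) :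
    ∃ M : ℝ≥0, ∀ (θ : Coef) (u : ℝ → Coef), eHSq 1 θ ≤ B → IsNSSol ν f T θ u →
      (∀ t ∈ Icc 0 T, eHSq 1 (u t) ≤ M) ∧ ∫⁻ t in Ioc 0 T, eHSq 2 (u t) ≤ M := by
  lift eHSq 0 f to ℝ≥0 using hf with F hF
  let N : ℝ≥0 := B + (T * ν⁻¹).toNNReal * F
  refine ⟨max N (ν⁻¹.toNNReal * N), fun θ u hθ hu => ?_⟩
  have hbound : ∀ t ∈ Icc 0 T, eHSq 1 (u t) +
      ENNReal.ofReal ν * ∫⁻ s in Ioc 0 t, eHSq 2 (u s) ≤ N := fun t ht => by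
    refine (hu.eHSq_one_add_lintegral_le hν (ne_top_of_le_ne_top (by finiteness) hθ) ht).trans ?_
    rw [← hF]
    simp only [N, ENNReal.coe_add, ENNReal.coe_mul]
    gcongr
    exact ENNReal.ofReal_le_ofReal (by gcongr; exact ht.2)
  refine ⟨fun t ht => (le_self_add.trans (hbound t ht)).trans ?_,
    (le_ofReal_inv_mul hν (le_add_self.trans (hbound T ⟨hT, le_rfl⟩))).trans ?_⟩
  · exact ENNReal.coe_le_coe.2 (le_max_left _ _)
  · rw [ENNReal.ofReal, ← ENNReal.coe_mul]
    exact ENNReal.coe_le_coe.2 (le_max_right _ _)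

lemma exists_lintegral_eHSq_mul_le (hν : 0 < ν) (hT : 0 ≤ T) (hf : eHSq 0 f ≠ ⊤) (B : ℝ≥0) :
    ∃ M : ℝ≥0, ∀ (θ : Coef) (u : ℝ → Coef), eHSq 1 θ ≤ B → IsNSSol ν f T θ u →
      ∫⁻ t in Ioc 0 T, eHSq 1 (u t) * eHSq 2 (u t) ≤ M := by
  obtain ⟨M, hM⟩ := exists_eHSq_one_le hν hT hf B
  refine ⟨M * M, fun θ u hθ hu => ?_⟩
  obtain ⟨hsup, hint⟩ := hM θ u hθ hu
  calc ∫⁻ t in Ioc 0 T, eHSq 1 (u t) * eHSq 2 (u t) ≤ ∫⁻ t in Ioc 0 T, M * eHSq 2 (u t) :=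
        setLIntegral_mono' measurableSet_Ioc fun t ht => by
          gcongr
          exact hsup t (Ioc_subset_Icc_self ht)
    _ ≤ _ := by
        rw [lintegral_const_mul' _ _ (by finiteness), ENNReal.coe_mul]
        gcongr

lemma exists_eHSq_three_half_le (hν : 0 < ν) (hT : 0 ≤ T) (hf : eHSq 1 f ≠ ⊤) (B : ℝ≥0) :
    ∃ M : ℝ≥0, ∀ (θ : Coef) (u : ℝ → Coef), eHSq 2 θ ≤ B → IsNSSol ν f T θ u →
      ∀ t ∈ Icc 0 T, eHSq (3 / 2) (u t) ≤ M := by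
  obtain ⟨N, hN⟩ := exists_lintegral_eHSq_mul_le hν hT
    (ne_top_of_le_ne_top hf (eHSq_mono zero_le_one f)) B
  obtain ⟨M, hM⟩ := exists_energy_le_of_lintegral_le (r := 3 / 2) hν hT (by norm_num)
    (ne_top_of_le_ne_top hf (eHSq_mono (by norm_num) f)) B N
  refine ⟨M, fun θ u hθ hu t ht => (eHSq_le_energy _ _ u ht).trans (hM θ u ?_ hu ?_)⟩
  · exact (eHSq_mono (by norm_num) θ).trans hθ
  · exact (lintegral_mono fun t => eHSq_three_half_sq_le (u t)).trans
      (hN θ u ((eHSq_mono one_le_two θ).trans hθ) hu)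

theorem exists_energy_natCast_le (hν : 0 < ν) (hT : 0 ≤ T) {n : ℕ} (hn : 1 ≤ n)
    (hf : eHSq (n - 1) f ≠ ⊤) (B : ℝ≥0) :
    ∃ M : ℝ≥0, ∀ (θ : Coef) (u : ℝ → Coef), eHSq n θ ≤ B → IsNSSol ν f T θ u →
      energy n (fun k => ν * lam k) 0 T u ≤ M := by
  induction n, hn using Nat.le_induction with
  | base =>
    simp only [Nat.cast_one] at hf ⊢
    obtain ⟨N, hN⟩ := exists_lintegral_eHSq_mul_le hν hT (by rwa [sub_self] at hf) B
    obtain ⟨M, hM⟩ := exists_energy_le_of_lintegral_le hν hT le_rfl hf B N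
    refine ⟨M, fun θ u hθ hu => hM θ u hθ hu (le_trans (lintegral_mono fun t => ?_) (hN θ u hθ hu))⟩
    gcongr
    exact eHSq_mono (by norm_num) (u t)
  | succ n hn ih =>
    push_cast at hf ⊢
    have hn' : (1 : ℝ) ≤ n := Nat.one_le_cast.2 hn
    obtain ⟨K, hK⟩ := ih (ne_top_of_le_ne_top hf (eHSq_mono (by linarith) f))
    obtain ⟨L, hL⟩ := exists_eHSq_three_half_le hν hT
      (ne_top_of_le_ne_top hf (eHSq_mono (by linarith) f)) B
    obtain ⟨M, hM⟩ := exists_energy_le_of_lintegral_le hν hT (by linarith) hf B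
      (L * (ν⁻¹.toNNReal * K))
    refine ⟨M, fun θ u hθ hu => hM θ u hθ hu ?_⟩
    have hle {s : ℝ} (hs : s ≤ n + 1) : eHSq s θ ≤ B := (eHSq_mono hs θ).trans hθ
    have hcont := hu.continuousOn_apply (ne_top_of_le_ne_top (by finiteness) (hle (by linarith)))
    calc ∫⁻ t in Ioc 0 T, eHSq (n + 1) (u t) * eHSq (3 / 2) (u t)
        ≤ ∫⁻ t in Ioc 0 T, L * eHSq (n + 1) (u t) :=
          setLIntegral_mono' measurableSet_Ioc fun t ht => by
            rw [mul_comm]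
            gcongr
            exact hL θ u (hle (by linarith)) hu t (Ioc_subset_Icc_self ht)
      _ = L * ∫⁻ t in Ioc 0 T, eHSq (n + 1) (u t) := lintegral_const_mul' _ _ (by finiteness)
      _ ≤ L * (ENNReal.ofReal ν⁻¹ * K) := by
          gcongr
          exact (lintegral_eHSq_add_le hν (fun _ => by rw [Real.rpow_one]) _ hcont).trans
            (by gcongr; exact hK θ u (hle (by linarith)) hu)
      _ = _ := by rw [ENNReal.coe_mul, ENNReal.coe_mul, ENNReal.ofReal]

end IsNSSol

end Regularity

/-! ### A priori bounds for the linearised equation -/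

section LinTerm

variable {α s τ : ℝ} {c d : Coef} {x y : ℤ × ℤ → ℝ≥0∞}

/-- The terms `-B[u, U] - B[U, u]` of the Navier–Stokes equation linearised along `u`. -/
def linTerm (c d : Coef) : Coef := fun k => -Bc c d k - Bc d c k

lemma enorm_linTerm_le (hc : ∀ n, absExt c n ≤ x n) (hd : ∀ n, absExt d n ≤ y n) (k : Freq) :
    ‖linTerm c d k‖ₑ ≤ 2 * weight (1 / 2) k.1 * convolve x y k.1 := by
  have hconv : convolve (absExt c) (absExt d) k.1 ≤ convolve x y k.1 :=
    ENNReal.tsum_le_tsum fun m => mul_le_mul' (hc m) (hd _)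
  calc ‖linTerm c d k‖ₑ ≤ ‖-Bc c d k‖ₑ + ‖Bc d c k‖ₑ := enorm_sub_le
    _ ≤ weight (1 / 2) k.1 * convolve (absExt c) (absExt d) k.1 +
          weight (1 / 2) k.1 * convolve (absExt c) (absExt d) k.1 := by
        rw [enorm_neg]
        refine add_le_add (enorm_Bc_le c d k) ?_
        rw [convolve_comm]
        exact enorm_Bc_le d c k
    _ = 2 * weight (1 / 2) k.1 * convolve (absExt c) (absExt d) k.1 := by ring
    _ ≤ _ := by gcongr

lemma ProductBound.tsum_weight_mul_sq_le (h : ProductBound α s τ) :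
    ∃ C : ℝ≥0, ∀ (x y : ℤ × ℤ → ℝ≥0∞) (z : Freq → ℝ≥0∞),
      (∀ k, z k ≤ 2 * weight (1 / 2) k.1 * convolve x y k.1) →
        ∑' k, weight (α - 1) k.1 * z k ^ 2 ≤ C * (wNormSq s x * wNormSq τ y) := by
  obtain ⟨C, hC⟩ := h
  refine ⟨4 * C, fun x y z hz => ?_⟩
  have hterm (k : Freq) :
      weight (α - 1) k.1 * z k ^ 2 ≤ 4 * (weight α k.1 * convolve x y k.1 ^ 2) := by
    calc weight (α - 1) k.1 * z k ^ 2
        ≤ weight (α - 1) k.1 * (2 * weight (1 / 2) k.1 * convolve x y k.1) ^ 2 := by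
          gcongr
          exact hz k
      _ = 4 * (weight (α - 1 + 1) k.1 * convolve x y k.1 ^ 2) := by
          rw [mul_pow, mul_pow, weight_half_sq, weight_add]
          ring
      _ = _ := by rw [sub_add_cancel]
  calc ∑' k, weight (α - 1) k.1 * z k ^ 2
      ≤ 4 * ∑' k : Freq, weight α k.1 * convolve x y k.1 ^ 2 := by
        rw [← ENNReal.tsum_mul_left]
        exact ENNReal.tsum_le_tsum hterm
    _ ≤ 4 * wNormSq α (convolve x y) := by gcongr; exact tsum_freq_le _
    _ ≤ 4 * (C * (wNormSq s x * wNormSq τ y)) := by gcongr; exact hC x y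
    _ = _ := by rw [ENNReal.coe_mul, mul_assoc]; rfl

lemma ProductBound.exists_eHSq_linTerm_le (h : ProductBound α s τ) :
    ∃ C : ℝ≥0, ∀ c d, eHSq (α - 1) (linTerm c d) ≤ C * (eHSq s c * eHSq τ d) := by
  obtain ⟨C, hC⟩ := h.tsum_weight_mul_sq_le
  refine ⟨C, fun c d => ?_⟩
  rw [eHSq_eq_tsum]
  exact hC _ _ _ (enorm_linTerm_le (fun _ => le_rfl) fun _ => le_rfl)

lemma zeroExt_smul (r : ℝ) (c : Coef) (n : ℤ × ℤ) : zeroExt (r • c) n = r * zeroExt c n := by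
  unfold zeroExt
  split_ifs
  · exact Complex.real_smul
  · exact (mul_zero _).symm

lemma linTerm_smul (r : ℝ) (c d : Coef) : linTerm c (r • d) = r • linTerm c d := by
  funext k
  have hleft (m : ℤ × ℤ) : interaction c (r • d) k.1 m = r * interaction c d k.1 m := by
    rw [interaction, interaction, zeroExt_smul]
    ring
  have hright (m : ℤ × ℤ) : interaction (r • d) c k.1 m = r * interaction d c k.1 m := by
    rw [interaction, interaction, zeroExt_smul]
    ring
  simp only [linTerm, Bc_eq_tsum_interaction, Pi.smul_apply, Complex.real_smul, hleft, hright,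
    tsum_mul_left]
  ring

end LinTerm

section Linearized

variable {α s ν Λ a b T : ℝ} {μ : Freq → ℝ} {ξ : Coef} {u U : ℝ → Coef}

/-- On the time set `S`, `U` solves the linearised equation along `u` with the damping rates `μ`
in place of the eigenvalues of `-νΔ`. -/
def SolvesDamped (u : ℝ → Coef) (μ : Freq → ℝ) (S : Set ℝ) (U : ℝ → Coef) : Prop :=
  ∀ k, ∀ t ∈ S, HasDerivAt (fun t => U t k) (linTerm (u t) (U t) k - (μ k : ℂ) * U t k) t

lemma IsLinSol.solvesDamped (hU : IsLinSol ν u T ξ U) :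
    SolvesDamped u (fun k => ν * lam k) (Ioc 0 T) U := fun k t ht => by
  refine (hU.deriv k t ht).congr_deriv ?_
  change 0 - _ - _ - _ = -_ - _ - _
  ring

/-- The trajectory `e^{-Λt} U(t)`. -/
def expScale (Λ : ℝ) (U : ℝ → Coef) : ℝ → Coef := fun t => Real.exp (-(Λ * t)) • U t

lemma SolvesDamped.solvesDamped_expScale {S : Set ℝ} (hU : SolvesDamped u μ S U) (Λ : ℝ) :
    SolvesDamped u (fun k => μ k + Λ) S (expScale Λ U) := fun k t ht => by
  have hexp : HasDerivAt (fun t => Real.exp (-(Λ * t))) (Real.exp (-(Λ * t)) * -(Λ * 1)) t :=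
    ((hasDerivAt_id t).const_mul Λ).neg.exp
  refine (hexp.smul (hU k t ht)).congr_deriv ?_
  simp only [expScale, linTerm_smul, Pi.smul_apply, Complex.real_smul]
  push_cast
  ring

lemma eHSq_smul (r : ℝ) (c : Coef) : eHSq α (r • c) = ENNReal.ofReal (r ^ 2) * eHSq α c := by
  rw [eHSq_eq_tsum, eHSq_eq_tsum, ← ENNReal.tsum_mul_left]
  refine tsum_congr fun k => ?_
  rw [Pi.smul_apply, ← ofReal_norm_sq, ← ofReal_norm_sq, norm_smul, mul_pow, Real.norm_eq_abs,
    sq_abs, ENNReal.ofReal_mul (sq_nonneg r)]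
  ring

lemma sqrt_mul_lam_rpow_half_le (hν : 0 < ν) (hΛ : 0 < Λ) (k : Freq) :
    √(ν * Λ) * lam k ^ (1 / 2 : ℝ) ≤ ν * lam k + Λ := by
  have hlam := lam_pos k
  rw [← Real.sqrt_eq_rpow, ← Real.sqrt_mul (by positivity)]
  refine Real.sqrt_le_iff.2 ⟨by positivity, ?_⟩
  linarith [two_mul_le_add_sq (ν * lam k) Λ, (by positivity : 0 ≤ ν * Λ * lam k),
    sq_nonneg (ν * lam k), sq_nonneg Λ, add_sq (ν * lam k) Λ]

lemma exists_mul_inv_sqrt_le (hν : 0 < ν) (K : ℝ≥0) :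
    ∃ Λ : ℝ, 0 < Λ ∧ K * ENNReal.ofReal (√(ν * Λ))⁻¹ ≤ 4⁻¹ := by
  refine ⟨(4 * K + 1) ^ 2 / ν, by positivity, ?_⟩
  rw [mul_div_cancel₀ _ hν.ne', Real.sqrt_sq (by positivity), ← ENNReal.ofReal_coe_nnreal,
    ← ENNReal.ofReal_mul K.coe_nonneg, ← ENNReal.ofReal_ofNat 4,
    ← ENNReal.ofReal_inv_of_pos four_pos]
  refine ENNReal.ofReal_le_ofReal ?_
  rw [mul_inv_le_iff₀ (by positivity)]
  linarith

lemma le_two_mul_of_le_add_half {x y : ℝ≥0∞} (hx : x ≠ ⊤) (h : x ≤ y + x / 2) : x ≤ 2 * y := by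
  have hhalf : x / 2 + x / 2 ≤ y + x / 2 := by rwa [ENNReal.add_halves]
  have hle : x / 2 ≤ y := ENNReal.le_of_add_le_add_right (by finiteness) hhalf
  rw [mul_comm]
  exact ENNReal.div_le_iff_le_mul (.inl two_ne_zero) (.inl ENNReal.ofNat_ne_top) |>.1 hle

theorem SolvesDamped.exists_energy_le (hν : 0 < ν) (h : ProductBound α s (α + 1 / 2)) (M : ℝ≥0) :
    ∃ Λ : ℝ, 0 < Λ ∧ ∀ {T : ℝ} {u V : ℝ → Coef}, 0 ≤ T → (∀ t ∈ Ioc 0 T, eHSq s (u t) ≤ M) →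
      (∀ k, ContinuousOn (fun t => V t k) (Icc 0 T)) →
      SolvesDamped u (fun k => ν * lam k + Λ) (Ioo 0 T) V →
      ∫⁻ t in Ioc 0 T, eHSq (α + 1 / 2) (V t) ≠ ⊤ →
      energy α (fun k => ν * lam k + Λ) 0 T V ≤ 4 * eHSq α (V 0) := by
  obtain ⟨C, hC⟩ := h.exists_eHSq_linTerm_le
  obtain ⟨Λ, hΛ, hsmall⟩ := exists_mul_inv_sqrt_le hν (ν⁻¹.toNNReal * (C * M))
  refine ⟨Λ, hΛ, fun {T u V} hT hu hcont hV hint => ?_⟩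
  rcases eq_or_ne (eHSq α (V 0)) ⊤ with hV0 | hV0
  · simp [hV0]
  set J := ∫⁻ t in Ioc 0 T, eHSq (α + 1 / 2) (V t)
  set E := energy α (fun k => ν * lam k + Λ) 0 T V
  have hforce : ∫⁻ t in Ioc 0 T, eHSq (α - 1) (linTerm (u t) (V t)) ≤ C * M * J := by
    rw [← lintegral_const_mul' _ _ (by finiteness)]
    refine setLIntegral_mono' measurableSet_Ioc fun t ht => (hC _ _).trans ?_
    rw [mul_assoc]
    gcongr
    exact hu t ht
  have hE : E ≤ 2 * (eHSq α (V 0) + ENNReal.ofReal ν⁻¹ * (C * M * J)) :=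
    (energy_le (h := fun t => linTerm (u t) (V t)) hT hν (fun k => le_add_of_nonneg_right hΛ.le)
      hcont hV).trans (by gcongr)
  have hJ : J ≤ ENNReal.ofReal (√(ν * Λ))⁻¹ * E := lintegral_eHSq_add_le (by positivity)
    (sqrt_mul_lam_rpow_half_le hν hΛ) α hcont
  have habsorb : E ≤ 2 * eHSq α (V 0) + E / 2 := by
    calc E ≤ 2 * (eHSq α (V 0) + ENNReal.ofReal ν⁻¹ *
          (C * M * (ENNReal.ofReal (√(ν * Λ))⁻¹ * E))) := hE.trans (by gcongr)
      _ = 2 * eHSq α (V 0) + 2 * (((ν⁻¹.toNNReal * (C * M) : ℝ≥0) : ℝ≥0∞) *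
          ENNReal.ofReal (√(ν * Λ))⁻¹) * E := by
        push_cast
        rw [ENNReal.ofReal]
        ring
      _ ≤ 2 * eHSq α (V 0) + 2 * 4⁻¹ * E := by gcongr
      _ = _ := by
        have hhalf : (2 : ℝ≥0∞) * 4⁻¹ = 2⁻¹ := by
          refine ENNReal.eq_inv_of_mul_eq_one_left ?_
          rw [mul_right_comm, show (2 : ℝ≥0∞) * 2 = 4 by norm_num]
          exact ENNReal.mul_inv_cancel four_ne_zero ENNReal.ofNat_ne_top
        rw [hhalf, ENNReal.div_eq_inv_mul]
  refine (le_two_mul_of_le_add_half (ne_top_of_le_ne_top (by finiteness) hE) habsorb).trans_eq ?_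
  rw [← mul_assoc]
  norm_num

lemma expScale_neg_expScale (Λ : ℝ) (U : ℝ → Coef) : expScale (-Λ) (expScale Λ U) = U := by
  funext t
  simp only [expScale, smul_smul, ← Real.exp_add]
  simp

lemma eHSq_expScale_le (hΛ : 0 ≤ Λ) (U : ℝ → Coef) {t : ℝ} (ht : 0 ≤ t) :
    eHSq α (expScale Λ U t) ≤ eHSq α (U t) := by
  rw [expScale, eHSq_smul]
  refine mul_le_of_le_one_left' (ENNReal.ofReal_le_one.2 (pow_le_one₀ (by positivity) ?_))
  exact Real.exp_le_one_iff.2 (neg_nonpos.2 (by positivity))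

lemma eHSq_le_eHSq_expScale (hΛ : 0 ≤ Λ) (U : ℝ → Coef) {t : ℝ} (ht : t ≤ T) :
    eHSq α (U t) ≤ ENNReal.ofReal (Real.exp (Λ * T) ^ 2) * eHSq α (expScale Λ U t) := by
  conv_lhs => rw [← expScale_neg_expScale Λ U]
  rw [expScale, eHSq_smul]
  gcongr
  rw [neg_mul, neg_neg]
  gcongr

theorem IsLinSol.exists_eHSq_add_lintegral_le (hν : 0 < ν) (h : ProductBound α s (α + 1 / 2))
    (M : ℝ≥0) (hT : 0 ≤ T) :
    ∃ K : ℝ≥0, ∀ {u U : ℝ → Coef} {ξ : Coef}, (∀ t ∈ Ioc 0 T, eHSq s (u t) ≤ M) →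
      IsLinSol ν u T ξ U → (∀ k, ContinuousOn (fun t => U t k) (Icc 0 T)) →
      ∫⁻ t in Ioc 0 T, eHSq (α + 1) (U t) ≠ ⊤ → ∀ t ∈ Icc 0 T,
        eHSq α (U t) + ∫⁻ t in Ioc 0 T, eHSq (α + 1) (U t) ≤ K * eHSq α ξ := by
  obtain ⟨Λ, hΛ, henergy⟩ := SolvesDamped.exists_energy_le hν h M
  refine ⟨(Real.exp (Λ * T) ^ 2).toNNReal * ((1 + ν⁻¹.toNNReal) * 4),
    fun {u U ξ} hu hU hcont hint t ht => ?_⟩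
  have hcontV k : ContinuousOn (fun t => expScale Λ U t k) (Icc 0 T) :=
    ContinuousOn.smul (by fun_prop) (hcont k)
  have hintV : ∫⁻ t in Ioc 0 T, eHSq (α + 1 / 2) (expScale Λ U t) ≠ ⊤ :=
    ne_top_of_le_ne_top hint <| setLIntegral_mono' measurableSet_Ioc fun t ht =>
      (eHSq_expScale_le hΛ.le U ht.1.le).trans (eHSq_mono (by linarith) _)
  have hV0 : expScale Λ U 0 = ξ := by simp [expScale, hU.init]
  have hV := henergy hT hu hcontV (fun k t ht =>
    hU.solvesDamped.solvesDamped_expScale Λ k t (Ioo_subset_Ioc_self ht)) hintV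
  rw [hV0] at hV
  have hsup := (eHSq_le_energy α _ (expScale Λ U) ht).trans hV
  have hlint := (lintegral_eHSq_add_le (s := 1) hν (fun k => by
    rw [Real.rpow_one]
    exact le_add_of_nonneg_right hΛ.le) α hcontV).trans (mul_le_mul_right hV _)
  set c := ENNReal.ofReal (Real.exp (Λ * T) ^ 2) with hc
  calc eHSq α (U t) + ∫⁻ t in Ioc 0 T, eHSq (α + 1) (U t)
      ≤ c * eHSq α (expScale Λ U t) + ∫⁻ t in Ioc 0 T, c * eHSq (α + 1) (expScale Λ U t) :=
        add_le_add (eHSq_le_eHSq_expScale hΛ.le U ht.2)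
          (setLIntegral_mono' measurableSet_Ioc fun t ht => eHSq_le_eHSq_expScale hΛ.le U ht.2)
    _ ≤ c * (4 * eHSq α ξ) + c * (ENNReal.ofReal ν⁻¹ * (4 * eHSq α ξ)) := by
        rw [lintegral_const_mul' _ _ (by finiteness)]
        gcongr
    _ = _ := by
        push_cast
        rw [hc, ENNReal.ofReal, ENNReal.ofReal]
        ring

end Linearized

/-! ### Chemin–Lerner spaces and smoothing -/

section CheminLerner

variable {α β γ s τ ν a b t t₀ T : ℝ} {μ : Freq → ℝ} {y h u U : ℝ → Coef}

/-- The coefficients of a trajectory, extended by zero to `ℤ²` and maximised over `[a, b]`. -/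
def supExt (a b : ℝ) (y : ℝ → Coef) (n : ℤ × ℤ) : ℝ≥0∞ := ⨆ t ∈ Icc a b, absExt (y t) n

/-- The squared norm `∑ λ_k^α sup_{t ∈ [a,b]} |y_k(t)|²` of the Chemin–Lerner space
`L̃^∞([a, b], Ḣ^α)`. -/
def cheminLernerSq (α a b : ℝ) (y : ℝ → Coef) : ℝ≥0∞ := wNormSq α (supExt a b y)

/-- Membership in the continuous part of the Chemin–Lerner space `L̃^∞([a, b], Ḣ^α)`; it implies
`y ∈ C([a, b], Ḣ^α)`. -/
structure MemCheminLerner (α a b : ℝ) (y : ℝ → Coef) : Prop where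
  continuousOn : ∀ k, ContinuousOn (fun t => y t k) (Icc a b)
  ne_top : cheminLernerSq α a b y ≠ ⊤

lemma absExt_le_supExt (y : ℝ → Coef) (ht : t ∈ Icc a b) (n : ℤ × ℤ) :
    absExt (y t) n ≤ supExt a b y n :=
  le_iSup₂ (f := fun t (_ : t ∈ Icc a b) => absExt (y t) n) t ht

lemma supExt_val (a b : ℝ) (y : ℝ → Coef) (k : Freq) : supExt a b y k.1 = supEnorm a b y k := by
  simp only [supExt, absExt, zeroExt_val, supEnorm]

lemma cheminLernerSq_eq_tsum (α a b : ℝ) (y : ℝ → Coef) :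
    cheminLernerSq α a b y = ∑' k : Freq, weight α k.1 * supEnorm a b y k ^ 2 := by
  rw [cheminLernerSq, wNormSq, ← tsum_freq (by simp [supExt, absExt, zeroExt_zero])]
  simp only [supExt_val]

lemma cheminLernerSq_le_energy (α : ℝ) (μ : Freq → ℝ) (a b : ℝ) (y : ℝ → Coef) :
    cheminLernerSq α a b y ≤ energy α μ a b y := by
  rw [cheminLernerSq_eq_tsum]
  exact ENNReal.tsum_le_tsum fun k => mul_le_mul_right le_self_add _

lemma eHSq_le_cheminLernerSq (α : ℝ) (y : ℝ → Coef) (ht : t ∈ Icc a b) :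
    eHSq α (y t) ≤ cheminLernerSq α a b y :=
  ENNReal.tsum_le_tsum fun n => by gcongr; exact absExt_le_supExt y ht n

lemma MemCheminLerner.eHSq_ne_top (hy : MemCheminLerner α a b y) (ht : t ∈ Icc a b) :
    eHSq α (y t) ≠ ⊤ :=
  ne_top_of_le_ne_top hy.ne_top (eHSq_le_cheminLernerSq α y ht)

lemma MemCheminLerner.supExt_ne_top (hy : MemCheminLerner α a b y) (n : ℤ × ℤ) :
    supExt a b y n ≠ ⊤ :=
  ne_top_of_wNormSq_ne_top hy.ne_top n

lemma MemCheminLerner.norm_le (hy : MemCheminLerner α a b y) (ht : t ∈ Icc a b) (k : Freq) :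
    ‖y t k‖ ≤ (supEnorm a b y k).toReal := by
  rw [← toReal_enorm, ← supExt_val]
  exact ENNReal.toReal_mono (hy.supExt_ne_top k.1)
    ((enorm_le_supEnorm y k ht).trans_eq (supExt_val a b y k).symm)

lemma MemCheminLerner.contH (hy : MemCheminLerner α 0 T y) : ContH α T y := by
  intro t ht ε hε
  have hsum : Summable fun k => lam k ^ α * (2 * (supEnorm 0 T y k).toReal) ^ 2 := by
    have hfin := hy.ne_top
    rw [cheminLernerSq_eq_tsum] at hfin
    refine ((ENNReal.summable_toReal hfin).mul_left 4).congr fun k => ?_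
    rw [ENNReal.toReal_mul, ENNReal.toReal_pow, weight_val,
      ENNReal.toReal_ofReal (Real.rpow_nonneg (lam_pos k).le _)]
    ring
  have hcont : ContinuousOn (fun x => hN α (y x - y t)) (Icc 0 T) := by
    have hterm k : ContinuousOn (fun x => lam k ^ α * ‖(y x - y t) k‖ ^ 2) (Icc 0 T) :=
      (((hy.continuousOn k).sub continuousOn_const).norm.pow 2).const_mul _
    refine (continuousOn_tsum hterm hsum fun k x hx => ?_).sqrt
    rw [Real.norm_of_nonneg (lam_rpow_mul_norm_sq_nonneg α (y x - y t) k), two_mul]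
    gcongr
    · exact Real.rpow_nonneg (lam_pos k).le _
    · exact (norm_sub_le _ _).trans (add_le_add (hy.norm_le hx k) (hy.norm_le ht k))
  obtain ⟨δ, hδ, hclose⟩ := Metric.continuousOn_iff.1 hcont t ht ε hε
  refine ⟨δ, hδ, fun x hx hxt => (le_abs_self _).trans_lt ?_⟩
  have hzero : hN α (y t - y t) = 0 := by simp [hN, hSq]
  simpa only [hzero, dist_zero_right, Real.norm_eq_abs] using hclose x hx hxt

lemma supEnorm_linTerm_le (u U : ℝ → Coef) (k : Freq) :
    supEnorm a b (fun t => linTerm (u t) (U t)) k ≤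
      2 * weight (1 / 2) k.1 * convolve (supExt a b u) (supExt a b U) k.1 :=
  iSup₂_le fun _ ht => enorm_linTerm_le (absExt_le_supExt u ht) (absExt_le_supExt U ht) k

lemma ProductBound.exists_cheminLernerSq_linTerm_le (h : ProductBound β s τ) :
    ∃ C : ℝ≥0, ∀ a b u U, cheminLernerSq (β - 1) a b (fun t => linTerm (u t) (U t)) ≤
      C * (cheminLernerSq s a b u * cheminLernerSq τ a b U) := by
  obtain ⟨C, hC⟩ := h.tsum_weight_mul_sq_le
  refine ⟨C, fun a b u U => ?_⟩
  rw [cheminLernerSq_eq_tsum]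
  exact hC _ _ _ (supEnorm_linTerm_le u U)

lemma enorm_le_exp_mul_add {E : Type*} [NormedAddCommGroup E] [NormedSpace ℝ E] {μ : ℝ}
    {y h : ℝ → E} {H : ℝ≥0∞} (hμ : 0 < μ) (hd : ∀ t ∈ Icc a b, HasDerivAt y (h t - μ • y t) t)
    (hH : ∀ t ∈ Icc a b, ‖h t‖ₑ ≤ H) (ht : t ∈ Icc a b) :
    ‖y t‖ₑ ≤ ENNReal.ofReal (Real.exp (-(μ * (t - a)))) * ‖y a‖ₑ + ENNReal.ofReal μ⁻¹ * H := by
  rcases eq_or_ne H ⊤ with rfl | hHtop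
  · rw [ENNReal.mul_top (ENNReal.ofReal_pos.2 (inv_pos.2 hμ)).ne', add_top]
    exact le_top
  lift H to ℝ≥0 using hHtop
  have hexp (x : ℝ) : HasDerivAt (fun x => Real.exp (μ * (x - a)))
      (Real.exp (μ * (x - a)) * (μ * 1)) x := (((hasDerivAt_id x).sub_const a).const_mul μ).exp
  have hz (x : ℝ) (hx : x ∈ Icc a b) : HasDerivAt (fun x => Real.exp (μ * (x - a)) • y x)
      (Real.exp (μ * (x - a)) • h x) x := by
    refine ((hexp x).smul (hd x hx)).congr_deriv ?_
    module
  have hbound := image_norm_le_of_norm_deriv_right_le_deriv_boundary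
    (B := fun x => ‖y a‖ + H * μ⁻¹ * (Real.exp (μ * (x - a)) - 1))
    (B' := fun x => H * Real.exp (μ * (x - a)))
    (fun x hx => (hz x hx).continuousAt.continuousWithinAt)
    (fun x hx => (hz x (Ico_subset_Icc_self hx)).hasDerivWithinAt) (by simp)
    (fun x => ((((hexp x).sub_const 1).const_mul _).const_add _).congr_deriv (by field_simp))
    (fun x hx => by
      rw [norm_smul, Real.norm_of_nonneg (Real.exp_nonneg _), mul_comm]
      gcongr
      exact enorm_le_coe.1 (hH x (Ico_subset_Icc_self hx))) ht
  have hreal : ‖y t‖ ≤ Real.exp (-(μ * (t - a))) * ‖y a‖ + μ⁻¹ * H := by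
    rw [norm_smul, Real.norm_of_nonneg (Real.exp_nonneg _)] at hbound
    have hexp0 := Real.exp_pos (μ * (t - a))
    rw [Real.exp_neg, ← mul_le_mul_iff_right₀ hexp0, mul_add, mul_inv_cancel_left₀ hexp0.ne']
    have : 0 ≤ H * μ⁻¹ := by positivity
    linarith
  rw [← ofReal_norm, ← ofReal_norm, ← ENNReal.ofReal_coe_nnreal,
    ← ENNReal.ofReal_mul (Real.exp_nonneg _), ← ENNReal.ofReal_mul (by positivity),
    ← ENNReal.ofReal_add (by positivity) (by positivity)]
  exact ENNReal.ofReal_le_ofReal hreal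

theorem cheminLernerSq_le {K K' : ℝ≥0∞} (ht₀ : a ≤ t₀) (hμ : ∀ k, 0 < μ k)
    (hexp : ∀ k, weight α k.1 * ENNReal.ofReal (Real.exp (-(μ k * (t₀ - a)))) ^ 2 ≤
      K' * weight γ k.1)
    (hK : ∀ k, weight α k.1 * ENNReal.ofReal (μ k)⁻¹ ^ 2 ≤ K * weight β k.1)
    (hd : ∀ k, ∀ t ∈ Icc a b, HasDerivAt (fun t => y t k) (h t k - (μ k : ℂ) * y t k) t) :
    cheminLernerSq α t₀ b y ≤ 2 * (K' * eHSq γ (y a) + K * cheminLernerSq β a b h) := by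
  have hsup k : supEnorm t₀ b y k ≤ ENNReal.ofReal (Real.exp (-(μ k * (t₀ - a)))) * ‖y a k‖ₑ +
      ENNReal.ofReal (μ k)⁻¹ * supEnorm a b h k := by
    refine iSup₂_le fun t ht => (enorm_le_exp_mul_add (h := fun t => h t k) (hμ k)
      (by simpa only [Complex.real_smul] using hd k) (fun x hx => enorm_le_supEnorm h k hx)
      ⟨ht₀.trans ht.1, ht.2⟩).trans ?_
    gcongr
    exacts [(hμ k).le, ht.1]
  rw [cheminLernerSq_eq_tsum, cheminLernerSq_eq_tsum, eHSq_eq_tsum, ← ENNReal.tsum_mul_left,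
    ← ENNReal.tsum_mul_left, ← ENNReal.tsum_add, ← ENNReal.tsum_mul_left]
  refine ENNReal.tsum_le_tsum fun k => ?_
  set e := ENNReal.ofReal (Real.exp (-(μ k * (t₀ - a))))
  set m := ENNReal.ofReal (μ k)⁻¹
  calc weight α k.1 * supEnorm t₀ b y k ^ 2
      ≤ weight α k.1 * (2 * ((e * ‖y a k‖ₑ) ^ 2 + (m * supEnorm a b h k) ^ 2)) := by
        gcongr
        exact (pow_le_pow_left' (hsup k) 2).trans (add_sq_le_two_mul _ _)
    _ = 2 * (weight α k.1 * e ^ 2 * ‖y a k‖ₑ ^ 2 +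
          weight α k.1 * m ^ 2 * supEnorm a b h k ^ 2) := by ring
    _ ≤ 2 * (K' * weight γ k.1 * ‖y a k‖ₑ ^ 2 + K * weight β k.1 * supEnorm a b h k ^ 2) := by
        gcongr 2 * (?_ * _ + ?_ * _)
        exacts [hexp k, hK k]
    _ = _ := by ring

lemma exists_weight_mul_exp_sq_le {δ : ℝ} (hν : 0 < ν) (hδ : 0 < δ)
    (hμ : ∀ k, ν * lam k ≤ μ k) (α γ : ℝ) :
    ∃ K : ℝ≥0, ∀ k : Freq,
      weight α k.1 * ENNReal.ofReal (Real.exp (-(μ k * δ))) ^ 2 ≤ K * weight γ k.1 := by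
  obtain ⟨n, hn⟩ := exists_nat_ge (α - γ)
  refine ⟨(n.factorial / (2 * ν * δ) ^ n).toNNReal, fun k => ?_⟩
  have hlam := lam_pos k
  have hfac : (2 * ν * δ * lam k) ^ n / n.factorial ≤ Real.exp (2 * ν * δ * lam k) :=
    Real.pow_div_factorial_le_exp _ (by positivity) n
  have hexp : Real.exp (-(μ k * δ)) ^ 2 ≤ (Real.exp (2 * ν * δ * lam k))⁻¹ := by
    rw [← Real.exp_nat_mul, ← Real.exp_neg, Real.exp_le_exp]
    push_cast
    linarith [mul_le_mul_of_nonneg_right (hμ k) hδ.le]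
  have hpow : lam k ^ (α - γ) ≤ lam k ^ n := by
    rw [← Real.rpow_natCast]
    exact Real.rpow_le_rpow_of_exponent_le (one_le_lam k) hn
  have hreal : lam k ^ (α - γ) * Real.exp (-(μ k * δ)) ^ 2 ≤ n.factorial / (2 * ν * δ) ^ n := by
    calc lam k ^ (α - γ) * Real.exp (-(μ k * δ)) ^ 2
        ≤ lam k ^ n * (Real.exp (2 * ν * δ * lam k))⁻¹ := by gcongr
      _ ≤ lam k ^ n * ((2 * ν * δ * lam k) ^ n / n.factorial)⁻¹ := by gcongr
      _ = _ := by
        rw [mul_pow _ (lam k)]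
        field_simp
  rw [← sub_add_cancel α γ, weight_add, mul_right_comm, weight_val,
    ← ENNReal.ofReal_pow (Real.exp_nonneg _), ← ENNReal.ofReal_mul (Real.rpow_nonneg hlam.le _)]
  gcongr
  exact ENNReal.ofReal_le_ofReal hreal

lemma weight_mul_ofReal_inv_sq_le {ν₁ ν₂ s₁ s₂ μ : ℝ} {k : Freq} (hν₁ : 0 < ν₁)
    (hμ₁ : ν₁ * lam k ^ s₁ ≤ μ) (hν₂ : 0 < ν₂) (hμ₂ : ν₂ * lam k ^ s₂ ≤ μ) (α : ℝ) :
    weight α k.1 * ENNReal.ofReal μ⁻¹ ^ 2 ≤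
      ENNReal.ofReal ν₁⁻¹ * ENNReal.ofReal ν₂⁻¹ * weight (α - s₁ - s₂) k.1 := by
  calc weight α k.1 * ENNReal.ofReal μ⁻¹ ^ 2
      = ENNReal.ofReal μ⁻¹ * (ENNReal.ofReal μ⁻¹ * weight α k.1) := by ring
    _ ≤ ENNReal.ofReal μ⁻¹ * (ENNReal.ofReal ν₁⁻¹ * weight (α - s₁) k.1) :=
        mul_le_mul_right (ofReal_inv_mul_weight_le hν₁ hμ₁ α) _
    _ = ENNReal.ofReal ν₁⁻¹ * (ENNReal.ofReal μ⁻¹ * weight (α - s₁) k.1) := by ring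
    _ ≤ ENNReal.ofReal ν₁⁻¹ * (ENNReal.ofReal ν₂⁻¹ * weight (α - s₁ - s₂) k.1) :=
        mul_le_mul_right (ofReal_inv_mul_weight_le hν₂ hμ₂ (α - s₁)) _
    _ = _ := by ring

theorem SolvesDamped.memCheminLerner_add_one (hν : 0 < ν) (hμ : ∀ k, ν * lam k ≤ μ k)
    (h : ProductBound β s τ) (hu : cheminLernerSq s a b u ≠ ⊤) (hU : MemCheminLerner τ a b U)
    (hd : SolvesDamped u μ (Icc a b) U) (ht₀ : t₀ ∈ Ioc a b) :
    MemCheminLerner (β + 1) t₀ b U := by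
  obtain ⟨C, hC⟩ := h.exists_cheminLernerSq_linTerm_le
  obtain ⟨K', hK'⟩ := exists_weight_mul_exp_sq_le hν (sub_pos.2 ht₀.1) hμ (β + 1) τ
  have hμ' k : ν * lam k ^ (1 : ℝ) ≤ μ k := by simpa only [Real.rpow_one] using hμ k
  have hK k := weight_mul_ofReal_inv_sq_le hν (hμ' k) hν (hμ' k) (β + 1)
  simp only [add_sub_cancel_right] at hK
  refine ⟨fun k => (hU.continuousOn k).mono (Icc_subset_Icc_left ht₀.1.le), ?_⟩
  have hfin := hU.eHSq_ne_top (left_mem_Icc.2 (ht₀.1.le.trans ht₀.2))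
  have hlin := ne_top_of_le_ne_top (by finiteness [hU.ne_top]) (hC a b u U)
  exact ne_top_of_le_ne_top (by finiteness) (cheminLernerSq_le
    (h := fun t => linTerm (u t) (U t)) ht₀.1.le
    (fun k => (mul_pos hν (lam_pos k)).trans_le (hμ k)) hK' hK hd)

end CheminLerner

/-! ### A fixed point theorem in Chemin–Lerner spaces -/

section FixedPoint

variable {α T : ℝ} {y z : ℝ → Coef}

/-- Sequences of continuous functions on `[0, T]` with square-summable sup norms: the model of the
Chemin–Lerner space `L̃^∞([0, T], L²)` on which Banach's fixed point theorem is applied. -/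
abbrev PathSpace (T : ℝ) : Type := lp (fun _ : Freq => C(Icc (0 : ℝ) T, ℂ)) 2

/-- The trajectory with weighted coefficients `λ_k^{α/2} y_k = x_k`, constant in time outside
`[0, T]`. -/
def toPath (hT : 0 ≤ T) (α : ℝ) (x : PathSpace T) : ℝ → Coef := fun t k =>
  lam k ^ (-α / 2) • x k (projIcc 0 T hT t)

lemma enorm_eq_iSup_enorm {X E : Type*} [TopologicalSpace X] [CompactSpace X]
    [SeminormedAddCommGroup E] (f : C(X, E)) : ‖f‖ₑ = ⨆ x, ‖f x‖ₑ := by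
  refine le_antisymm ?_ (iSup_le fun x => enorm_le_iff_norm_le.2 (f.norm_coe_le_norm x))
  rcases eq_or_ne (⨆ x, ‖f x‖ₑ) ⊤ with htop | hfin
  · exact htop ▸ le_top
  lift ⨆ x, ‖f x‖ₑ to ℝ≥0 using hfin with M hM
  refine enorm_le_coe.2 ((f.norm_le M.coe_nonneg).2 fun x => ?_)
  exact enorm_le_coe.1 (hM ▸ le_iSup (fun x => ‖f x‖ₑ) x)

lemma enorm_sq_eq_tsum {ι : Type*} {E : ι → Type*} [∀ i, NormedAddCommGroup (E i)]
    (x : lp E 2) : ‖x‖ₑ ^ 2 = ∑' i, ‖x i‖ₑ ^ 2 := by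
  have hnorm := lp.norm_rpow_eq_tsum (by norm_num) x
  have hsum := (lp.memℓp x).summable (by norm_num)
  simp only [ENNReal.toReal_ofNat, Real.rpow_ofNat] at hnorm hsum
  rw [← ofReal_norm_sq, hnorm, ENNReal.ofReal_tsum_of_nonneg (fun i => sq_nonneg _) hsum]
  exact tsum_congr fun i => ofReal_norm_sq _

lemma supEnorm_toPath (hT : 0 ≤ T) (α : ℝ) (x : PathSpace T) (k : Freq) :
    supEnorm 0 T (toPath hT α x) k = weight (-α / 2) k.1 * ‖x k‖ₑ := by
  have henorm (t : Icc 0 T) :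
      ‖toPath hT α x t k‖ₑ = weight (-α / 2) k.1 * ‖x k t‖ₑ := by
    rw [toPath, projIcc_val, enorm_smul, weight_val, Real.enorm_of_nonneg
      (Real.rpow_nonneg (lam_pos k).le _)]
  rw [supEnorm, iSup_subtype', enorm_eq_iSup_enorm, ENNReal.mul_iSup]
  exact iSup_congr henorm

lemma cheminLernerSq_toPath (hT : 0 ≤ T) (α : ℝ) (x : PathSpace T) :
    cheminLernerSq α 0 T (toPath hT α x) = ‖x‖ₑ ^ 2 := by
  rw [cheminLernerSq_eq_tsum, enorm_sq_eq_tsum]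
  refine tsum_congr fun k => ?_
  rw [supEnorm_toPath, mul_pow, weight_half_sq, ← mul_assoc, weight_mul_weight_neg, one_mul]

lemma memCheminLerner_toPath (hT : 0 ≤ T) (α : ℝ) (x : PathSpace T) :
    MemCheminLerner α 0 T (toPath hT α x) where
  continuousOn k := by
    have hcont : Continuous fun t => x k (projIcc 0 T hT t) :=
      (x k).continuous.comp continuous_projIcc
    exact (hcont.const_smul (lam k ^ (-α / 2))).continuousOn
  ne_top := by
    rw [cheminLernerSq_toPath]
    finiteness

lemma toPath_sub (hT : 0 ≤ T) (α : ℝ) (x x' : PathSpace T) :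
    toPath hT α (x - x') = toPath hT α x - toPath hT α x' :=
  funext fun _ => funext fun _ => smul_sub _ _ _

lemma MemCheminLerner.exists_toPath_eq (hT : 0 ≤ T) (hy : MemCheminLerner α 0 T y) :
    ∃ x : PathSpace T, ∀ t ∈ Icc 0 T, toPath hT α x t = y t := by
  have hcont (k : Freq) : Continuous fun t : Icc 0 T => y t k :=
    continuousOn_iff_continuous_domRestrict.1 (hy.continuousOn k)
  let g (k : Freq) : C(Icc (0 : ℝ) T, ℂ) :=
    ⟨fun t => lam k ^ (α / 2) • y t k, (hcont k).const_smul (lam k ^ (α / 2))⟩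
  have hg (k : Freq) : ‖g k‖ₑ ^ 2 = weight α k.1 * supEnorm 0 T y k ^ 2 := by
    rw [enorm_eq_iSup_enorm, ← weight_half_sq, ← mul_pow, supEnorm, iSup_subtype',
      ENNReal.mul_iSup]
    congr 1
    refine iSup_congr fun t => ?_
    change ‖lam k ^ (α / 2) • y t k‖ₑ = _
    rw [enorm_smul, weight_val, Real.enorm_of_nonneg (Real.rpow_nonneg (lam_pos k).le _)]
  have hmem : Memℓp g 2 := by
    refine memℓp_gen ?_
    have hfin := hy.ne_top
    rw [cheminLernerSq_eq_tsum, ← tsum_congr hg] at hfin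
    simpa using ENNReal.summable_toReal hfin
  refine ⟨⟨g, hmem⟩, fun t ht => funext fun k => ?_⟩
  change lam k ^ (-α / 2) • lam k ^ (α / 2) • y (projIcc 0 T hT t) k = y t k
  rw [smul_smul, ← Real.rpow_add (lam_pos k), projIcc_of_mem hT ht, neg_div, neg_add_cancel,
    Real.rpow_zero, one_smul]

lemma cheminLernerSq_congr {a b : ℝ} (h : ∀ t ∈ Icc a b, y t = z t) :
    cheminLernerSq α a b y = cheminLernerSq α a b z := by
  have hsup (k : Freq) : supEnorm a b y k = supEnorm a b z k :=
    iSup_congr fun t => iSup_congr fun ht => by rw [h t ht]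
  simp only [cheminLernerSq_eq_tsum, hsup]

lemma isClosed_setOf_isReal_toPath (hT : 0 ≤ T) (α : ℝ) :
    IsClosed {x : PathSpace T | ∀ t ∈ Icc 0 T, IsReal (toPath hT α x t)} := by
  have hcont (t : ℝ) (k : Freq) : Continuous fun x : PathSpace T => toPath hT α x t k := by
    have heval : Continuous fun x : PathSpace T => x k (projIcc 0 T hT t) :=
      (continuous_eval_const (F := C(Icc (0 : ℝ) T, ℂ)) _).comp
        (lp.lipschitzWith_one_eval 2 k).continuous
    exact heval.const_smul (lam k ^ (-α / 2))
  simp only [IsReal, ofPred_forall]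
  exact isClosed_iInter fun t => isClosed_iInter fun _ => isClosed_iInter fun k =>
    isClosed_eq (hcont t (fneg k)) (Complex.continuous_conj.comp (hcont t k)).neg

theorem exists_fixedPoint_memCheminLerner (hT : 0 ≤ T) {F : (ℝ → Coef) → ℝ → Coef}
    (hmem : ∀ y, MemCheminLerner α 0 T y → MemCheminLerner α 0 T (F y))
    (hcontr : ∀ y z, MemCheminLerner α 0 T y → MemCheminLerner α 0 T z →
      cheminLernerSq α 0 T (F y - F z) ≤ 4⁻¹ * cheminLernerSq α 0 T (y - z))
    (hreal : ∀ y, (∀ t ∈ Icc 0 T, IsReal (y t)) → ∀ t ∈ Icc 0 T, IsReal (F y t)) :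
    ∃ y, MemCheminLerner α 0 T y ∧ (∀ t ∈ Icc 0 T, IsReal (y t)) ∧ ∀ t ∈ Icc 0 T, y t = F y t := by
  have hpath x := memCheminLerner_toPath hT α x
  choose G hG using fun x : PathSpace T => (hmem _ (hpath x)).exists_toPath_eq hT
  have hlip : ContractingWith 2⁻¹ G := by
    refine ⟨by norm_num, fun x x' => ?_⟩
    rw [edist_eq_enorm_sub, edist_eq_enorm_sub, ← ENNReal.pow_le_pow_left_iff two_ne_zero, mul_pow,
      ← cheminLernerSq_toPath hT α, ← cheminLernerSq_toPath hT α, toPath_sub, toPath_sub,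
      cheminLernerSq_congr (y := toPath hT α (G x) - toPath hT α (G x')) fun t ht =>
        congr_arg₂ (· - ·) (hG x t ht) (hG x' t ht)]
    refine (hcontr _ _ (hpath x) (hpath x')).trans_eq ?_
    congr 1
    rw [ENNReal.coe_inv two_ne_zero, ← ENNReal.inv_pow]
    norm_num
  set x := hlip.fixedPoint G
  have hx : G x = x := hlip.fixedPoint_isFixedPt
  refine ⟨toPath hT α x, hpath x, ?_, fun t ht => ?_⟩
  · refine (isClosed_setOf_isReal_toPath hT α).mem_of_tendsto (hlip.tendsto_iterate_fixedPoint 0)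
      (.of_forall fun n => ?_)
    have hmaps : MapsTo G {x | ∀ t ∈ Icc 0 T, IsReal (toPath hT α x t)}
        {x | ∀ t ∈ Icc 0 T, IsReal (toPath hT α x t)} := fun x hx t ht => by
      rw [hG x t ht]
      exact hreal _ hx t ht
    exact hmaps.iterate n fun t _ k => by simp [toPath]
  · rw [← hG x t ht, hx]

end FixedPoint

/-! ### Existence for the linearised equation -/

section Duhamel

variable {α β ν Λ a b s τ t T : ℝ} {μ : Freq → ℝ} {c d e ξ : Coef} {g u y z : ℝ → Coef} {k : Freq}

lemma isReal_linTerm (hc : IsReal c) (hd : IsReal d) : IsReal (linTerm c d) := fun k => by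
  simp only [linTerm, isReal_Bc hc hd k, isReal_Bc hd hc k, map_sub, map_neg]
  ring

lemma ProductBound.linTerm_sub (h : ProductBound β s τ) (hc : eHSq s c ≠ ⊤) (hd : eHSq τ d ≠ ⊤)
    (he : eHSq τ e ≠ ⊤) : linTerm c (d - e) = linTerm c d - linTerm c e := by
  funext k
  have hsub := h.convolve_ne_top hc (eHSq_sub_ne_top hd he) k.1
  have he := h.convolve_ne_top hc he k.1
  have hright := Bc_add_right c (d - e) e k hsub he
  have hleft := Bc_add_left (d - e) e c k (by rwa [convolve_comm]) (by rwa [convolve_comm])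
  rw [sub_add_cancel] at hright hleft
  simp only [linTerm, Pi.sub_apply, hright, hleft]
  ring

lemma continuousOn_zeroExt (hy : ∀ k, ContinuousOn (fun t => y t k) (Icc a b)) (n : ℤ × ℤ) :
    ContinuousOn (fun t => zeroExt (y t) n) (Icc a b) := by
  unfold zeroExt
  split_ifs
  · exact hy _
  · exact continuousOn_const

lemma continuousOn_Bc (hu : ∀ k, ContinuousOn (fun t => u t k) (Icc a b))
    (hy : ∀ k, ContinuousOn (fun t => y t k) (Icc a b))
    (h : convolve (supExt a b u) (supExt a b y) k.1 ≠ ⊤) :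
    ContinuousOn (fun t => Bc (u t) (y t) k) (Icc a b) := by
  simp only [Bc_eq_tsum_interaction]
  have hterm m : ContinuousOn (fun t => interaction (u t) (y t) k.1 m) (Icc a b) :=
    ((continuousOn_zeroExt hu m).mul (continuousOn_zeroExt hy _)).mul continuousOn_const
  have hfin : ∑' m, ENNReal.ofReal √(normSqZ k.1) *
      (supExt a b u m * supExt a b y (k.1 - m)) ≠ ⊤ := by
    rw [ENNReal.tsum_mul_left]
    exact ENNReal.mul_ne_top ENNReal.ofReal_ne_top h
  refine continuousOn_const.mul
    (continuousOn_tsum hterm (ENNReal.summable_toReal hfin) fun m t ht => ?_)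
  rw [← toReal_enorm]
  refine ENNReal.toReal_mono (ENNReal.ne_top_of_tsum_ne_top hfin m)
    ((enorm_interaction_le _ _ _ _).trans ?_)
  gcongr <;> exact absExt_le_supExt _ ht _

lemma continuousOn_linTerm (hu : ∀ k, ContinuousOn (fun t => u t k) (Icc a b))
    (hy : ∀ k, ContinuousOn (fun t => y t k) (Icc a b))
    (h : convolve (supExt a b u) (supExt a b y) k.1 ≠ ⊤) :
    ContinuousOn (fun t => linTerm (u t) (y t) k) (Icc a b) :=
  (continuousOn_Bc hu hy h).neg.sub (continuousOn_Bc hy hu (by rwa [convolve_comm]))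

lemma ProductBound.convolve_supExt_ne_top (h : ProductBound β s τ)
    (hu : cheminLernerSq s a b u ≠ ⊤) (hy : cheminLernerSq τ a b y ≠ ⊤) (n : ℤ × ℤ) :
    convolve (supExt a b u) (supExt a b y) n ≠ ⊤ := by
  obtain ⟨C, hC⟩ := h
  exact ne_top_of_wNormSq_ne_top (ne_top_of_le_ne_top
    (ENNReal.mul_ne_top ENNReal.coe_ne_top (ENNReal.mul_ne_top hu hy)) (hC _ _)) n

/-- Duhamel's formula for the solution of the uncoupled equations `y_k' = g_k - μ_k y_k`,
`y(0) = ξ`. -/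
def duhamel (μ : Freq → ℝ) (ξ : Coef) (g : ℝ → Coef) : ℝ → Coef := fun t k =>
  Real.exp (-(μ k * t)) • (ξ k + ∫ r in (0 : ℝ)..t, Real.exp (μ k * r) • g r k)

lemma duhamel_zero (μ : Freq → ℝ) (ξ : Coef) (g : ℝ → Coef) : duhamel μ ξ g 0 = ξ := by
  funext k
  simp [duhamel]

lemma hasDerivAt_duhamel (hg : Continuous fun t => g t k) (t : ℝ) :
    HasDerivAt (fun t => duhamel μ ξ g t k) (g t k - (μ k : ℂ) * duhamel μ ξ g t k) t := by
  have hexp : HasDerivAt (fun t => Real.exp (-(μ k * t))) (Real.exp (-(μ k * t)) * -(μ k * 1)) t :=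
    ((hasDerivAt_id t).const_mul (μ k)).neg.exp
  have hint : HasDerivAt (fun t => ∫ r in (0 : ℝ)..t, Real.exp (μ k * r) • g r k)
      (Real.exp (μ k * t) • g t k) t :=
    (by fun_prop : Continuous fun r => Real.exp (μ k * r) • g r k).integral_hasStrictDerivAt 0 t
      |>.hasDerivAt
  refine (hexp.smul (hint.const_add (ξ k))).congr_deriv ?_
  rw [smul_smul, ← Real.exp_add, neg_add_cancel, Real.exp_zero, one_smul, mul_one, mul_neg,
    neg_smul, ← sub_eq_add_neg, mul_comm, mul_smul, Complex.real_smul (x := μ k)]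
  rfl

lemma isReal_duhamel (hμ : ∀ k, μ (fneg k) = μ k) (hξ : IsReal ξ) (hg : ∀ t, IsReal (g t))
    (t : ℝ) : IsReal (duhamel μ ξ g t) := fun k => by
  simp only [duhamel, hμ, hξ k, fun r => hg r k, smul_neg, intervalIntegral.integral_neg,
    Complex.real_smul, map_mul, map_add, Complex.conj_ofReal,
    ← intervalIntegral.intervalIntegral_conj]
  ring

/-- The map whose fixed points are the solutions of `SolvesDamped u μ [0, T]` starting at `ξ`. The
forcing is frozen outside `[0, T]`, so that two-sided derivatives exist at the endpoints. -/
def dampedMap (hT : 0 ≤ T) (μ : Freq → ℝ) (u : ℝ → Coef) (ξ : Coef) (y : ℝ → Coef) : ℝ → Coef :=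
  duhamel μ ξ fun t => linTerm (u (projIcc 0 T hT t)) (y (projIcc 0 T hT t))

lemma dampedMap_zero (hT : 0 ≤ T) (μ : Freq → ℝ) (u : ℝ → Coef) (ξ : Coef) (y : ℝ → Coef) :
    dampedMap hT μ u ξ y 0 = ξ :=
  duhamel_zero _ _ _

lemma isReal_dampedMap (hT : 0 ≤ T) (hμ : ∀ k, μ (fneg k) = μ k)
    (hu : ∀ t ∈ Icc 0 T, IsReal (u t)) (hξ : IsReal ξ) (hy : ∀ t ∈ Icc 0 T, IsReal (y t)) (t : ℝ) :
    IsReal (dampedMap hT μ u ξ y t) :=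
  isReal_duhamel hμ hξ
    (fun _ => isReal_linTerm (hu _ (Subtype.coe_prop _)) (hy _ (Subtype.coe_prop _))) t

lemma ProductBound.hasDerivAt_dampedMap (h : ProductBound β s τ) (hT : 0 ≤ T)
    (hu : MemCheminLerner s 0 T u) (hy : MemCheminLerner τ 0 T y) (k : Freq) (ht : t ∈ Icc 0 T) :
    HasDerivAt (fun t => dampedMap hT μ u ξ y t k)
      (linTerm (u t) (y t) k - (μ k : ℂ) * dampedMap hT μ u ξ y t k) t := by
  have hlin : ContinuousOn (fun t => linTerm (u t) (y t) k) (Icc 0 T) :=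
    continuousOn_linTerm hu.continuousOn hy.continuousOn
      (h.convolve_supExt_ne_top hu.ne_top hy.ne_top k.1)
  have hcont : Continuous fun t => linTerm (u (projIcc 0 T hT t)) (y (projIcc 0 T hT t)) k :=
    hlin.comp_continuous (continuous_subtype_val.comp continuous_projIcc) fun t =>
      Subtype.coe_prop _
  refine (hasDerivAt_duhamel hcont t).congr_deriv ?_
  rw [projIcc_of_mem hT ht]
  rfl

lemma cheminLernerSq_le_of_damped (hν : 0 < ν) (hΛ : 0 < Λ)
    (hd : ∀ k, ∀ t ∈ Icc 0 T,
      HasDerivAt (fun t => y t k) (g t k - ((ν * lam k + Λ : ℝ) : ℂ) * y t k) t) :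
    cheminLernerSq α 0 T y ≤ 2 * (eHSq α (y 0) +
      ENNReal.ofReal ν⁻¹ * ENNReal.ofReal (√(ν * Λ))⁻¹ *
        cheminLernerSq (α - 1 / 2 - 1) 0 T g) := by
  have hrate k : ν * lam k ^ (1 : ℝ) ≤ ν * lam k + Λ := by
    rw [Real.rpow_one]
    exact le_add_of_nonneg_right hΛ.le
  have hK k := weight_mul_ofReal_inv_sq_le hν (hrate k) (by positivity)
    (sqrt_mul_lam_rpow_half_le hν hΛ k) α
  simp only [sub_right_comm α 1] at hK
  refine (cheminLernerSq_le (K' := 1) (γ := α) le_rfl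
    (fun k => add_pos (mul_pos hν (lam_pos k)) hΛ) (fun k => by simp) hK hd).trans_eq ?_
  rw [one_mul]

lemma ProductBound.memCheminLerner_dampedMap (h : ProductBound (α - 1 / 2) s α) (hν : 0 < ν)
    (hΛ : 0 < Λ) (hT : 0 ≤ T) (hu : MemCheminLerner s 0 T u) (hξ : eHSq α ξ ≠ ⊤)
    (hy : MemCheminLerner α 0 T y) :
    MemCheminLerner α 0 T (dampedMap hT (fun k => ν * lam k + Λ) u ξ y) where
  continuousOn k t ht :=
    (h.hasDerivAt_dampedMap hT hu hy k ht).continuousAt.continuousWithinAt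
  ne_top := by
    obtain ⟨C, hC⟩ := h.exists_cheminLernerSq_linTerm_le
    have hlin := ne_top_of_le_ne_top (by finiteness [hu.ne_top, hy.ne_top]) (hC 0 T u y)
    refine ne_top_of_le_ne_top ?_ (cheminLernerSq_le_of_damped hν hΛ
      (g := fun t => linTerm (u t) (y t)) fun k t ht => h.hasDerivAt_dampedMap hT hu hy k ht)
    rw [dampedMap_zero]
    finiteness

lemma ProductBound.exists_cheminLernerSq_dampedMap_sub_le (h : ProductBound (α - 1 / 2) s α)
    (hν : 0 < ν) (hT : 0 ≤ T) (hu : MemCheminLerner s 0 T u) :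
    ∃ Λ : ℝ, 0 < Λ ∧ ∀ ξ y z, MemCheminLerner α 0 T y → MemCheminLerner α 0 T z →
      cheminLernerSq α 0 T (dampedMap hT (fun k => ν * lam k + Λ) u ξ y -
        dampedMap hT (fun k => ν * lam k + Λ) u ξ z) ≤ 4⁻¹ * cheminLernerSq α 0 T (y - z) := by
  obtain ⟨C, hC⟩ := h.exists_cheminLernerSq_linTerm_le
  obtain ⟨M, hM⟩ : ∃ M : ℝ≥0, (M : ℝ≥0∞) = cheminLernerSq s 0 T u :=
    ⟨_, ENNReal.coe_toNNReal hu.ne_top⟩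
  obtain ⟨Λ, hΛ, hsmall⟩ := exists_mul_inv_sqrt_le hν (2 * ν⁻¹.toNNReal * (C * M))
  refine ⟨Λ, hΛ, fun ξ y z hy hz => ?_⟩
  set μ : Freq → ℝ := fun k => ν * lam k + Λ
  have hderiv k t (ht : t ∈ Icc 0 T) :
      HasDerivAt (fun t => (dampedMap hT μ u ξ y - dampedMap hT μ u ξ z) t k)
        (linTerm (u t) ((y - z) t) k -
          (μ k : ℂ) * (dampedMap hT μ u ξ y - dampedMap hT μ u ξ z) t k) t := by
    refine ((h.hasDerivAt_dampedMap hT hu hy k ht).sub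
      (h.hasDerivAt_dampedMap hT hu hz k ht)).congr_deriv ?_
    simp only [Pi.sub_apply, h.linTerm_sub (hu.eHSq_ne_top ht) (hy.eHSq_ne_top ht)
      (hz.eHSq_ne_top ht)]
    ring
  refine (cheminLernerSq_le_of_damped hν hΛ
    (g := fun t => linTerm (u t) ((y - z) t)) hderiv).trans ?_
  rw [Pi.sub_apply, dampedMap_zero, dampedMap_zero, sub_self]
  calc 2 * (eHSq α 0 + ENNReal.ofReal ν⁻¹ * ENNReal.ofReal (√(ν * Λ))⁻¹ *
        cheminLernerSq (α - 1 / 2 - 1) 0 T fun t => linTerm (u t) ((y - z) t))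
      ≤ 2 * (0 + ENNReal.ofReal ν⁻¹ * ENNReal.ofReal (√(ν * Λ))⁻¹ *
          (C * (M * cheminLernerSq α 0 T (y - z)))) := by
        gcongr
        · simp [eHSq_eq_tsum]
        · rw [hM]
          exact hC 0 T u (y - z)
    _ = ((2 * ν⁻¹.toNNReal * (C * M) : ℝ≥0) : ℝ≥0∞) * ENNReal.ofReal (√(ν * Λ))⁻¹ *
          cheminLernerSq α 0 T (y - z) := by
        push_cast
        rw [ENNReal.ofReal]
        ring
    _ ≤ _ := by gcongr

theorem ProductBound.exists_solvesDamped (h : ProductBound (α - 1 / 2) s α) (hν : 0 < ν)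
    (hT : 0 ≤ T) (hu : MemCheminLerner s 0 T u) (hureal : ∀ t ∈ Icc 0 T, IsReal (u t))
    (hξ : MemH α ξ) :
    ∃ Λ V, V 0 = ξ ∧ (∀ t ∈ Icc 0 T, IsReal (V t)) ∧ MemCheminLerner α 0 T V ∧
      SolvesDamped u (fun k => ν * lam k + Λ) (Icc 0 T) V := by
  obtain ⟨Λ, hΛ, hcontr⟩ := h.exists_cheminLernerSq_dampedMap_sub_le hν hT hu
  set μ : Freq → ℝ := fun k => ν * lam k + Λ with hμ
  have hmem (y : ℝ → Coef) (hy : MemCheminLerner α 0 T y) :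
      MemCheminLerner α 0 T (dampedMap hT μ u ξ y) :=
    h.memCheminLerner_dampedMap hν hΛ hT hu (finH_iff.1 hξ.2) hy
  have hreal (y : ℝ → Coef) (hy : ∀ t ∈ Icc 0 T, IsReal (y t)) (t : ℝ) (_ : t ∈ Icc 0 T) :
      IsReal (dampedMap hT μ u ξ y t) :=
    isReal_dampedMap hT (fun k => by simp only [hμ, lam_fneg]) hureal hξ.1 hy t
  obtain ⟨y, hymem, hyreal, hfix⟩ :=
    exists_fixedPoint_memCheminLerner (F := dampedMap hT μ u ξ) hT hmem (hcontr ξ) hreal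
  refine ⟨Λ, dampedMap hT μ u ξ y, dampedMap_zero hT μ u ξ y, hreal y hyreal, hmem y hymem,
    fun k t ht => ?_⟩
  refine (h.hasDerivAt_dampedMap hT hu hymem k ht).congr_deriv ?_
  rw [← hfix t ht]

end Duhamel

section Existence

variable {α β ν s t t₀ τ a b T : ℝ} {μ : Freq → ℝ} {ξ : Coef} {u y U V : ℝ → Coef}

lemma supEnorm_anti_left (h : a ≤ t₀) (b : ℝ) (y : ℝ → Coef) (k : Freq) :
    supEnorm t₀ b y k ≤ supEnorm a b y k :=
  iSup₂_le fun _ ht => enorm_le_supEnorm y k ⟨h.trans ht.1, ht.2⟩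

lemma cheminLernerSq_anti_left (h : a ≤ t₀) (α b : ℝ) (y : ℝ → Coef) :
    cheminLernerSq α t₀ b y ≤ cheminLernerSq α a b y := by
  simp only [cheminLernerSq_eq_tsum]
  refine ENNReal.tsum_le_tsum fun k => ?_
  gcongr
  exact supEnorm_anti_left h b y k

lemma supEnorm_expScale_le (Λ T : ℝ) (V : ℝ → Coef) (k : Freq) :
    supEnorm 0 T (expScale Λ V) k ≤ ENNReal.ofReal (Real.exp (|Λ| * T)) * supEnorm 0 T V k := by
  refine iSup₂_le fun t ht => ?_
  rw [expScale, Pi.smul_apply, enorm_smul, Real.enorm_of_nonneg (Real.exp_pos _).le]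
  gcongr
  · calc -(Λ * t) ≤ |Λ| * t := by
          rw [← neg_mul]
          exact mul_le_mul_of_nonneg_right (neg_le_abs Λ) ht.1
      _ ≤ |Λ| * T := mul_le_mul_of_nonneg_left ht.2 (abs_nonneg Λ)
  · exact enorm_le_supEnorm V k ht

lemma MemCheminLerner.expScale (hV : MemCheminLerner α 0 T V) (Λ : ℝ) :
    MemCheminLerner α 0 T (expScale Λ V) where
  continuousOn k := ContinuousOn.smul (by fun_prop) (hV.continuousOn k)
  ne_top := by
    have hfin := hV.ne_top
    rw [cheminLernerSq_eq_tsum] at hfin ⊢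
    refine ne_top_of_le_ne_top (ENNReal.mul_ne_top (a := ENNReal.ofReal (Real.exp (|Λ| * T)) ^ 2)
      (by finiteness) hfin) ?_
    rw [← ENNReal.tsum_mul_left]
    refine ENNReal.tsum_le_tsum fun k => ?_
    rw [mul_left_comm, ← mul_pow]
    gcongr
    exact supEnorm_expScale_le Λ T V k

lemma IsReal.smul (hξ : IsReal ξ) (r : ℝ) : IsReal (r • ξ) := fun k => by
  simp only [Pi.smul_apply, hξ k, smul_neg, Complex.real_smul, map_mul, Complex.conj_ofReal]

lemma isLinSol_of_solvesDamped (hV : SolvesDamped u (fun k => ν * lam k) (Icc 0 T) V)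
    (hreal : ∀ t ∈ Icc 0 T, IsReal (V t)) : IsLinSol ν u T (V 0) V where
  init := rfl
  real := hreal
  deriv k t ht := by
    refine (hV k t (Ioc_subset_Icc_self ht)).congr_deriv ?_
    change -_ - _ - _ = 0 - _ - _ - _
    ring

theorem ProductBound.exists_isLinSol_memCheminLerner (h : ProductBound (α - 1 / 2) s α)
    (hν : 0 < ν) (hT : 0 ≤ T) (hu : MemCheminLerner s 0 T u)
    (hureal : ∀ t ∈ Icc 0 T, IsReal (u t)) (hξ : MemH α ξ) :
    ∃ U, IsLinSol ν u T ξ U ∧ MemCheminLerner α 0 T U ∧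
      SolvesDamped u (fun k => ν * lam k) (Icc 0 T) U := by
  obtain ⟨Λ, V, rfl, hreal, hV, hdamped⟩ := h.exists_solvesDamped hν hT hu hureal hξ
  have hU : SolvesDamped u (fun k => ν * lam k) (Icc 0 T) (expScale (-Λ) V) := by
    simpa only [add_neg_cancel_right] using hdamped.solvesDamped_expScale (-Λ)
  have hsol := isLinSol_of_solvesDamped hU fun t ht => (hreal t ht).smul _
  rw [show expScale (-Λ) V 0 = V 0 by simp [expScale]] at hsol
  exact ⟨_, hsol, hV.expScale (-Λ), hU⟩

lemma SolvesDamped.lintegral_eHSq_add_one_ne_top (h : ProductBound β s τ) (hT : 0 ≤ T) (hν : 0 < ν)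
    (hu : cheminLernerSq s 0 T u ≠ ⊤) (hU : SolvesDamped u (fun k => ν * lam k) (Ioo 0 T) U)
    (hcont : ∀ k, ContinuousOn (fun t => U t k) (Icc 0 T)) (hU0 : eHSq β (U 0) ≠ ⊤)
    (hint : ∫⁻ t in Ioc 0 T, eHSq τ (U t) ≠ ⊤) :
    ∫⁻ t in Ioc 0 T, eHSq (β + 1) (U t) ≠ ⊤ := by
  obtain ⟨C, hC⟩ := h.exists_eHSq_linTerm_le
  have hforce : ∫⁻ t in Ioc 0 T, eHSq (β - 1) (linTerm (u t) (U t)) ≤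
      C * cheminLernerSq s 0 T u * ∫⁻ t in Ioc 0 T, eHSq τ (U t) := by
    rw [← lintegral_const_mul' _ _ (ENNReal.mul_ne_top ENNReal.coe_ne_top hu)]
    refine setLIntegral_mono' measurableSet_Ioc fun t ht => (hC _ _).trans ?_
    rw [mul_assoc]
    gcongr
    exact eHSq_le_cheminLernerSq s u (Ioc_subset_Icc_self ht)
  have hforce_top := ne_top_of_le_ne_top
    (ENNReal.mul_ne_top (ENNReal.mul_ne_top ENNReal.coe_ne_top hu) hint) hforce
  have henergy := energy_le (α := β) (h := fun t => linTerm (u t) (U t)) hT hν (fun _ => le_rfl)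
    hcont hU
  refine ne_top_of_le_ne_top (ENNReal.mul_ne_top ENNReal.ofReal_ne_top
    (ne_top_of_le_ne_top ?_ henergy)) (lintegral_eHSq_add_le (μ := fun k => ν * lam k) hν
      (fun k => by rw [Real.rpow_one]) β hcont)
  exact ENNReal.mul_ne_top ENNReal.ofNat_ne_top
    (ENNReal.add_ne_top.2 ⟨hU0, ENNReal.mul_ne_top ENNReal.ofReal_ne_top hforce_top⟩)

lemma MemCheminLerner.lintegral_eHSq_ne_top (hU : MemCheminLerner α 0 T U) :
    ∫⁻ t in Ioc 0 T, eHSq α (U t) ≠ ⊤ := by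
  refine ne_top_of_le_ne_top (b := cheminLernerSq α 0 T U * volume (Ioc 0 T))
    (ENNReal.mul_ne_top hU.ne_top measure_Ioc_lt_top.ne) ?_
  rw [← setLIntegral_const]
  exact setLIntegral_mono' measurableSet_Ioc fun t ht =>
    eHSq_le_cheminLernerSq α U (Ioc_subset_Icc_self ht)

/- Each application of the energy estimate gains as much as the product bound allows: half a
derivative first, the full one afterwards. -/
lemma SolvesDamped.lintegral_eHSq_ne_top (h₀ : ProductBound α s (α + 1 / 2))
    (h₁ : ProductBound (α - 1 / 2) s α) (hT : 0 ≤ T) (hν : 0 < ν)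
    (hu : cheminLernerSq s 0 T u ≠ ⊤) (hU : SolvesDamped u (fun k => ν * lam k) (Icc 0 T) U)
    (hmem : MemCheminLerner α 0 T U) : ∫⁻ t in Ioc 0 T, eHSq (α + 1) (U t) ≠ ⊤ := by
  have hU0 : eHSq α (U 0) ≠ ⊤ := hmem.eHSq_ne_top (left_mem_Icc.2 hT)
  have hU' : SolvesDamped u (fun k => ν * lam k) (Ioo 0 T) U := fun k t ht =>
    hU k t (Ioo_subset_Icc_self ht)
  have hhalf := hU'.lintegral_eHSq_add_one_ne_top h₁ hT hν hu hmem.continuousOn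
    (ne_top_of_le_ne_top hU0 (eHSq_mono (by linarith) _)) hmem.lintegral_eHSq_ne_top
  rw [show α - 1 / 2 + 1 = α + 1 / 2 by ring] at hhalf
  exact hU'.lintegral_eHSq_add_one_ne_top h₀ hT hν hu hmem.continuousOn hU0 hhalf

lemma SolvesDamped.eHSq_add_one_ne_top (h₀ : ProductBound α s (α + 1 / 2))
    (h₁ : ProductBound (α - 1 / 2) s α) (hν : 0 < ν) (hu : cheminLernerSq s 0 T u ≠ ⊤)
    (hU : SolvesDamped u (fun k => ν * lam k) (Icc 0 T) U) (hmem : MemCheminLerner α 0 T U)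
    (ht : t ∈ Ioc 0 T) : eHSq (α + 1) (U t) ≠ ⊤ := by
  have ht2 : 0 < t / 2 := half_pos ht.1
  have hhalf := hU.memCheminLerner_add_one hν (fun _ => le_rfl) h₁ hu hmem
    (t₀ := t / 2) ⟨ht2, (half_le_self ht.1.le).trans ht.2⟩
  rw [show α - 1 / 2 + 1 = α + 1 / 2 by ring] at hhalf
  have hu' := ne_top_of_le_ne_top hu (cheminLernerSq_anti_left ht2.le s T u)
  have hU' : SolvesDamped u (fun k => ν * lam k) (Icc (t / 2) T) U := fun k r hr =>
    hU k r ⟨ht2.le.trans hr.1, hr.2⟩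
  exact (hU'.memCheminLerner_add_one hν (fun _ => le_rfl) h₀ hu' hhalf
    ⟨half_lt_self ht.1, ht.2⟩).eHSq_ne_top (left_mem_Icc.2 ht.2)

lemma memL2H_of_lintegral_ne_top (hcont : ∀ k, ContinuousOn (fun t => U t k) (Ioc 0 T))
    (hmem : ∀ t ∈ Ioc 0 T, MemH α (U t)) (hint : ∫⁻ t in Ioc 0 T, eHSq α (U t) ≠ ⊤) :
    MemL2H α T U := by
  refine ⟨hmem, ?_⟩
  simp only [hSq_eq_toReal]
  refine integrable_toReal_of_lintegral_ne_top ?_ hint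
  simp only [eHSq_eq_tsum]
  exact AEMeasurable.tsum fun k =>
    (((hcont k).aestronglyMeasurable measurableSet_Ioc).enorm.pow_const 2).const_mul _

theorem exists_isLinSol_contH_memL2H (h₀ : ProductBound α s (α + 1 / 2))
    (h₁ : ProductBound (α - 1 / 2) s α) (hν : 0 < ν) (hT : 0 ≤ T) (hu : MemCheminLerner s 0 T u)
    (hureal : ∀ t ∈ Icc 0 T, IsReal (u t)) (hξ : MemH α ξ) :
    ∃ U, IsLinSol ν u T ξ U ∧ ContH α T U ∧ MemL2H (α + 1) T U := by
  obtain ⟨U, hsol, hmem, hU⟩ := h₁.exists_isLinSol_memCheminLerner hν hT hu hureal hξ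
  refine ⟨U, hsol, hmem.contH, memL2H_of_lintegral_ne_top
    (fun k => (hmem.continuousOn k).mono Ioc_subset_Icc_self) (fun t ht => ⟨hsol.real t
      (Ioc_subset_Icc_self ht), finH_iff.2 (hU.eHSq_add_one_ne_top h₀ h₁ hν hu.ne_top hmem ht)⟩)
    (hU.lintegral_eHSq_ne_top h₀ h₁ hT hν hu.ne_top hmem)⟩

end Existence

section Conclusion

variable {α ν s T : ℝ} {f θ : Coef} {u : ℝ → Coef}

lemma one_le_astar (a : ℤ) : (1 : ℝ) ≤ astar a := by
  have h : 1 ≤ astar a := by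
    have := abs_nonneg a
    unfold astar
    split_ifs <;> omega
  exact_mod_cast h

lemma one_lt_astar {a : ℤ} (ha : a ≠ 0) : (1 : ℝ) < astar a := by
  have h : 1 < astar a := by
    have := abs_pos.2 ha
    unfold astar
    split_ifs <;> omega
  exact_mod_cast h

lemma abs_le_astar (a : ℤ) : |(a : ℝ)| ≤ astar a := by
  have h : |a| ≤ astar a := by
    unfold astar
    split_ifs <;> omega
  exact_mod_cast h

lemma productBound_astar (a : ℤ) : ProductBound (a : ℝ) (astar a) (a + 1 / 2) := by
  obtain ⟨hneg, hle⟩ := abs_le.1 (abs_le_astar a)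
  rcases le_or_gt 0 a with ha | ha
  · exact productBound_of_nonneg (by exact_mod_cast ha) hle (one_le_astar a)
  · have ha' : (a : ℝ) ≤ 0 := by exact_mod_cast ha.le
    exact (productBound_of_nonpos ha' (by linarith) (one_lt_astar ha.ne)).mono le_rfl le_rfl
      (by linarith)

lemma productBound_sub_half_astar (a : ℤ) : ProductBound ((a : ℝ) - 1 / 2) (astar a) a := by
  obtain ⟨hneg, hle⟩ := abs_le.1 (abs_le_astar a)
  have hone := one_le_astar a
  rcases lt_trichotomy a 0 with ha | rfl | ha
  · have ha' : (a : ℝ) ≤ 0 := by exact_mod_cast ha.le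
    exact (productBound_of_nonpos ha' (by linarith) (one_lt_astar ha.ne)).mono (by linarith) le_rfl
      le_rfl
  · rw [Int.cast_zero]
    exact productBound_zero_right (by norm_num) (by linarith) (by linarith)
  · have ha' : (1 : ℝ) ≤ a := by exact_mod_cast ha
    simpa only [sub_add_cancel] using
      productBound_of_nonneg (α := (a : ℝ) - 1 / 2) (by linarith) (by linarith) hone

theorem IsNSSol.exists_cheminLernerSq_astar_le {a : ℤ} (hν : 0 < ν) (hT : 0 ≤ T)
    (hf : FinH (astar a - 1) f) (B : ℝ≥0) :
    ∃ M : ℝ≥0, ∀ θ u, eHSq (astar a) θ ≤ B → IsNSSol ν f T θ u →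
      cheminLernerSq (astar a) 0 T u ≤ M := by
  obtain ⟨n, hn⟩ := Int.eq_ofNat_of_zero_le (a := astar a)
    (by exact_mod_cast zero_le_one.trans (one_le_astar a))
  have hcast : (astar a : ℝ) = n := by rw [hn, Int.cast_natCast]
  have hone : 1 ≤ n := by exact_mod_cast hcast ▸ one_le_astar a
  rw [hcast] at hf ⊢
  obtain ⟨M, hM⟩ := IsNSSol.exists_energy_natCast_le hν hT hone (finH_iff.1 hf) B
  exact ⟨M, fun θ u hθ hu => (cheminLernerSq_le_energy _ _ _ _ _).trans (hM θ u hθ hu)⟩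

lemma IsNSSol.memCheminLerner_astar {a : ℤ} (hν : 0 < ν) (hT : 0 ≤ T) (hu : IsNSSol ν f T θ u)
    (hf : FinH (astar a - 1) f) (hθ : FinH (astar a) θ) :
    MemCheminLerner (astar a) 0 T u := by
  have hθ' := finH_iff.1 hθ
  obtain ⟨M, hM⟩ := IsNSSol.exists_cheminLernerSq_astar_le hν hT hf (eHSq (astar a) θ).toNNReal
  exact ⟨hu.continuousOn_apply (ne_top_of_le_ne_top hθ' (eHSq_mono (one_le_astar a) θ)),
    ne_top_of_le_ne_top ENNReal.coe_ne_top (hM θ u (ENNReal.coe_toNNReal hθ').ge hu)⟩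

lemma IsLinSol.eHSq_ne_top {ξ : Coef} {U : ℝ → Coef} (hU : IsLinSol ν u T ξ U) (hξ : FinH α ξ)
    (hL2 : MemL2H (α + 1) T U) {t : ℝ} (ht : t ∈ Icc 0 T) : eHSq α (U t) ≠ ⊤ := by
  rcases ht.1.eq_or_lt with rfl | hpos
  · rw [hU.init]
    exact finH_iff.1 hξ
  · exact ne_top_of_le_ne_top (finH_iff.1 (hL2.1 t ⟨hpos, ht.2⟩).2) (eHSq_mono (by linarith) _)

lemma MemL2H.ofReal_integral_hSq (hT : 0 ≤ T) (hu : MemL2H α T u) :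
    ENNReal.ofReal (∫ t in (0 : ℝ)..T, hSq α (u t)) = ∫⁻ t in Ioc 0 T, eHSq α (u t) := by
  rw [intervalIntegral.integral_of_le hT,
    ofReal_integral_eq_lintegral_ofReal hu.2 (.of_forall fun _ => hSq_nonneg _ _)]
  exact setLIntegral_congr_fun measurableSet_Ioc fun t ht => ofReal_hSq (hu.1 t ht).2

theorem IsLinSol.exists_hSq_add_integral_le (hν : 0 < ν) (hT : 0 ≤ T)
    (h : ProductBound α s (α + 1 / 2)) (M : ℝ≥0) :
    ∃ C : ℝ, 0 < C ∧ ∀ {u U : ℝ → Coef} {ξ : Coef}, (∀ t ∈ Ioc 0 T, eHSq s (u t) ≤ M) →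
      FinH α ξ → IsLinSol ν u T ξ U → ContH α T U → MemL2H (α + 1) T U → ∀ t ∈ Icc 0 T,
        hSq α (U t) + ∫ r in (0 : ℝ)..T, hSq (α + 1) (U r) ≤ C * hSq α ξ := by
  obtain ⟨K, hK⟩ := IsLinSol.exists_eHSq_add_lintegral_le hν h M hT
  refine ⟨K + 1, by positivity, fun {u U ξ} hu hξ hU hcont hL2 t ht => ?_⟩
  have hfin t (ht : t ∈ Icc 0 T) := hU.eHSq_ne_top hξ hL2 ht
  have hle := hK hu hU (hcont.continuousOn_apply hfin) hL2.lintegral_eHSq_ne_top t ht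
  have hint : 0 ≤ ∫ r in (0 : ℝ)..T, hSq (α + 1) (U r) :=
    intervalIntegral.integral_nonneg hT fun _ _ => hSq_nonneg _ _
  rw [← hL2.ofReal_integral_hSq hT, ← ofReal_hSq (finH_iff.2 (hfin t ht)), ← ofReal_hSq hξ,
    ← ENNReal.ofReal_coe_nnreal, ← ENNReal.ofReal_mul K.coe_nonneg,
    ← ENNReal.ofReal_add (hSq_nonneg _ _) hint, ENNReal.ofReal_le_ofReal_iff
      (mul_nonneg K.coe_nonneg (hSq_nonneg _ _))] at hle
  linarith [hSq_nonneg α ξ]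

end Conclusion

end

/-- Proposition `PropLinSob`. Sobolev estimates for the
linearised flow `𝕀_θ`: for `a ∈ ℤ`, `a* = |a|+1` if `|a| ≤ 1` and `a* = |a|`
if `|a| ≥ 2`, `θ ∈ Ḣ^{a*}_⋄` and `f ∈ Ḣ^{a*−1}_⋄`, the operator `𝕀_θ`
extends to `Ḣ^a_⋄`: for every `ξ ∈ Ḣ^a_⋄` the linearised equation has a
solution `𝕀_θ[ξ] ∈ C([0,T], Ḣ^a_⋄) ∩ L²([0,T], Ḣ^{a+1}_⋄)`; moreover for
every `B > 0` there is `C = C(ν,T,‖f‖_{Ḣ^{a*−1}},a,B) > 0` such that for all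
`‖θ‖_{Ḣ^{a*}} ≤ B` and `ξ ∈ Ḣ^a_⋄`,
`sup_{0≤t≤T} ‖𝕀_θ[ξ](t)‖²_{Ḣ^a} + ∫₀ᵀ ‖𝕀_θ[ξ](t)‖²_{Ḣ^{a+1}} dt ≤ C ‖ξ‖²_{Ḣ^a}`. -/
theorem statement6 (a : ℤ) (T ν : ℝ) (hT : 0 < T) (hν : 0 < ν)
    (f : Coef) (hf : MemH ((astar a : ℝ) - 1) f) :
    (∀ (θ : Coef) (uθ : ℝ → Coef), MemH (astar a : ℝ) θ → IsNSSol ν f T θ uθ →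
      ∀ ξ, MemH (a : ℝ) ξ →
        ∃ U : ℝ → Coef, IsLinSol ν uθ T ξ U ∧ ContH (a : ℝ) T U ∧
          MemL2H ((a : ℝ) + 1) T U) ∧
    (∀ B : ℝ, 0 < B → ∃ C : ℝ, 0 < C ∧
      ∀ (θ : Coef) (uθ : ℝ → Coef), MemH (astar a : ℝ) θ →
        hN (astar a : ℝ) θ ≤ B → IsNSSol ν f T θ uθ →
        ∀ (ξ : Coef) (U : ℝ → Coef), MemH (a : ℝ) ξ → IsLinSol ν uθ T ξ U →
          ContH (a : ℝ) T U → MemL2H ((a : ℝ) + 1) T U →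
          IntervalIntegrable (fun t => hSq ((a : ℝ) + 1) (U t)) volume 0 T ∧
          ∀ t ∈ Icc (0:ℝ) T,
            hSq (a : ℝ) (U t) + (∫ s in (0:ℝ)..T, hSq ((a : ℝ) + 1) (U s)) ≤
              C * hSq (a : ℝ) ξ) := by
  refine ⟨fun θ uθ hθ hu ξ hξ => ?_, fun B _ => ?_⟩
  · exact exists_isLinSol_contH_memL2H (productBound_astar a) (productBound_sub_half_astar a) hν
      hT.le (hu.memCheminLerner_astar hν hT.le hf.2 hθ.2) hu.real hξ
  · obtain ⟨M, hM⟩ := IsNSSol.exists_cheminLernerSq_astar_le hν hT.le hf.2 (B ^ 2).toNNReal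
    obtain ⟨C, hC, hbound⟩ :=
      IsLinSol.exists_hSq_add_integral_le hν hT.le (productBound_astar a) M
    refine ⟨C, hC, fun θ uθ hθ hθB hu ξ U hξ hU hcont hL2 =>
      ⟨(intervalIntegrable_iff_integrableOn_Ioc_of_le hT.le).2 hL2.2,
        hbound (fun t ht => ?_) hξ.2 hU hcont hL2⟩⟩
    have hθ_le := eHSq_le_of_hN_le (finH_iff.1 hθ.2) hθB
    exact (eHSq_le_cheminLernerSq _ uθ (Ioc_subset_Icc_self ht)).trans (hM θ uθ hθ_le hu)

end NS2D
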